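/- For every positive integer n ≥ 3, the number of divisors d(n) satisfies log d(n) ≤ (log n / log log n)·(log 2 + (log 2)/(log log n) + 4.7626·(log 2)/(log log n)²). -/

import Mathlib

/-!
Write `T = log n` and `L = log T`. For every slope `λ > 0`, splitting over the primes dividing `n` gives
`log d(n) ≤ λ T + ∑_p max_a (log (a + 1) - λ a log p)`. So each slope yields a line in the variable `T`
that majorizes `log d(n)`, and the theorem asks that the lower envelope of these lines stay below the bound.
Two ranges are treated differently.

If `L ≥ 12`, take `λ = log 2 / L` (`bound_of_large`). The first exponent step `0 → 1` contributes
`log 2 · ∑_p (1 - log p / L)₊`, and the steps `k - 1 → k` with `k ≥ 2` involve only primes up to about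
`e^{0.585 L}` and are absorbed by `extras_le`. Partial summation (`prime_weight_le`) reduces the main sum to
`psiOne u = ∑ Λ(n) (u - log n)₊`, for which a bound with main term `e^u` and a secondary term of order `e^u / u`
is needed, with an explicit constant; the constant `4.7626` leaves room for it.

That bound comes from the explicit formula `explicit_formula`, with an absolutely convergent sum over the zeros.
It follows from the partial fractions of `ξ'/ξ` (`hasSum_zterm`), in which `ρ` is paired with `1 - ρ`, and the
uniqueness of Laplace transforms (`LT.eq_zero`). The partial fractions rest on `ξ` having order less than `2`
(`exists_xi_growth`) and on a truncated version of Hadamard's argument (`norm_logDeriv_sub_sum_le`).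
The zeros enter only through `∑ mult ρ / zmax ρ ^ 2 · e^{(1 - gap ρ) u}`. Since `ξ'/ξ` is about `0.0231` at `1`
(`F_one_re_le`), this sum is at most `0.0542 e^u`, enough for `12 ≤ L ≤ 40` (`psiOne_le`). For larger `L` the
classical zero-free region (`inv_gap_le`), averaged over the zeros (`sum_exp_gap_le`), replaces this by
`O(e^u / u)` (`psiOne_le'`). No numerical knowledge of zeros of `ζ` is used.

If `L ≤ 12`, then `T ≤ 163000`. For a rational slope `u / v` the sum over `p` is attained at an explicit integer `N`
that maximizes `d(n) / n ^ (u / v)`; it is computed by kernel reduction in `lineOK` and compared with powers of `2`,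
which gives a certified line (`line_of_lineOK`). Since the bound is concave in `T` for `T ≥ 36`
(`concaveOn_target`), a line lies below it on an interval as soon as it does so at both ends (`le_of_ends`).
About thirty lines cover the range. For `T ≤ 36` the cruder criterion `le_of_ratio` suffices.
-/

open Complex MeasureTheory Set Filter Topology

namespace DivBound

/-! ### Growth of `ξ` -/

/-- The Riemann `ξ` function, normalised so that `xi 0 = xi 1 = 1`. -/
noncomputable def xi (s : ℂ) : ℂ := 1 + s * (s - 1) * completedRiemannZeta₀ s

lemma differentiable_xi : Differentiable ℂ xi := by
  have := differentiable_completedZeta₀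
  unfold xi
  fun_prop

lemma xi_one_sub (s : ℂ) : xi (1 - s) = xi s := by
  unfold xi
  rw [completedRiemannZeta₀_one_sub]
  ring

lemma xi_zero : xi 0 = 1 := by simp [xi]
lemma xi_one : xi 1 = 1 := by simp [xi]

lemma xi_eq {s : ℂ} (h0 : s ≠ 0) (h1 : s ≠ 1) : xi s = s * (s - 1) * completedRiemannZeta s := by
  have h2 : (1 - s) ≠ 0 := sub_ne_zero.mpr (Ne.symm h1)
  rw [completedRiemannZeta_eq, xi]
  field_simp
  ring

lemma norm_Gamma_le {s : ℂ} (hs : 0 < s.re) : ‖Gamma s‖ ≤ Real.Gamma s.re := by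
  rw [Complex.Gamma_eq_integral hs, Real.Gamma_eq_integral hs, Complex.GammaIntegral]
  refine (norm_integral_le_integral_norm _).trans (le_of_eq ?_)
  refine setIntegral_congr_fun measurableSet_Ioi fun x hx => ?_
  have hx : (0:ℝ) < x := hx
  simp only [norm_mul, norm_cpow_eq_rpow_re_of_pos hx, sub_re, one_re, norm_real, Real.norm_eq_abs,
    Real.abs_exp]

lemma Gamma_le_exp {x : ℝ} (hx : 1 ≤ x) : Real.Gamma x ≤ Real.exp (2 * ((x + 2) * √(x + 2))) := by
  have h1 : Real.Gamma x ≤ Real.Gamma (x + 1) := by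
    rw [Real.Gamma_add_one (by positivity)]
    have := Real.Gamma_pos_of_pos (by linarith : 0 < x)
    nlinarith
  have h2 : Real.Gamma (x + 1) ≤ Real.Gamma ((⌈x⌉₊ : ℝ) + 1) := by
    have hc := Nat.le_ceil x
    exact Real.Gamma_strictMonoOn_Ici.monotoneOn (by simp; linarith) (by simp; linarith) (by linarith)
  rw [Real.Gamma_nat_eq_factorial] at h2
  have h3 : ((⌈x⌉₊).factorial : ℝ) ≤ (⌈x⌉₊ : ℝ) ^ ⌈x⌉₊ := by exact_mod_cast Nat.factorial_le_pow _
  have hc : (⌈x⌉₊ : ℝ) ≤ x + 2 := by linarith [Nat.ceil_lt_add_one (by linarith : 0 ≤ x)]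
  have h4 : (⌈x⌉₊ : ℝ) ^ ⌈x⌉₊ ≤ (x + 2) ^ ⌈x⌉₊ := by gcongr
  have h5 : (x + 2) ^ ⌈x⌉₊ = Real.exp (⌈x⌉₊ * Real.log (x + 2)) := by
    rw [mul_comm, Real.exp_mul, Real.exp_log (by linarith), Real.rpow_natCast]
  have h6 : Real.log (x + 2) ≤ 2 * √(x + 2) := by
    have : Real.log (x+2) = 2 * Real.log (√(x + 2)) := by
      rw [Real.log_sqrt (by linarith)]; ring
    rw [this]
    have := Real.log_le_self (Real.sqrt_nonneg (x+2))
    linarith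
  have h7 : (⌈x⌉₊ * Real.log (x + 2)) ≤ 2 * ((x + 2) * √(x + 2)) := by
    calc (⌈x⌉₊ * Real.log (x + 2)) ≤ (x + 2) * (2 * √(x + 2)) := by
          apply mul_le_mul hc h6 (Real.log_nonneg (by linarith)) (by linarith)
      _ = _ := by ring
  calc _ ≤ _ := h1
    _ ≤ _ := h2
    _ ≤ _ := h3
    _ ≤ _ := h4
    _ = _ := h5
    _ ≤ _ := Real.exp_le_exp.mpr h7

lemma exists_norm_zeta_le : ∃ C : ℝ, 0 ≤ C ∧ ∀ s : ℂ, 2 ≤ s.re → ‖riemannZeta s‖ ≤ C := by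
  have hsum : Summable fun n : ℕ => 1 / (n : ℝ) ^ (2:ℝ) :=
    Real.summable_one_div_nat_rpow.mpr (by norm_num)
  refine ⟨∑' n : ℕ, 1 / (n : ℝ) ^ (2:ℝ), tsum_nonneg fun n => by positivity, fun s hs => ?_⟩
  rw [zeta_eq_tsum_one_div_nat_cpow (by linarith)]
  refine tsum_of_norm_bounded hsum.hasSum fun n => ?_
  rcases Nat.eq_zero_or_pos n with rfl | hn
  · have : s ≠ 0 := by rintro rfl; simp at hs; linarith
    simp [zero_cpow this]
  · rw [norm_div, norm_one, norm_natCast_cpow_of_pos hn]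
    have : (1:ℝ) ≤ n := by exact_mod_cast hn
    gcongr

/-- In a vertical strip the completed zeta function is bounded: the Mellin integral at `s` is dominated by
the absolute integrals at the two edges. -/
lemma exists_norm_completedZeta₀_strip :
    ∃ C : ℝ, 0 ≤ C ∧ ∀ s : ℂ, -2 ≤ s.re → s.re ≤ 2 → ‖completedRiemannZeta₀ s‖ ≤ C := by
  set P := HurwitzZeta.hurwitzEvenFEPair 0
  have hconv : ∀ s : ℂ, MellinConvergent P.f_modif s :=
    fun s => (P.isStrongFEPair_toStrongFEPair.hasMellin s).1
  have hI : ∀ s : ℂ, IntegrableOn (fun t : ℝ => t ^ (s.re - 1) * ‖P.f_modif t‖) (Ioi 0) := by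
    intro s
    refine IntegrableOn.congr_fun (hconv s).norm (fun t ht => ?_) measurableSet_Ioi
    have ht : (0:ℝ) < t := ht
    simp only [norm_smul, norm_cpow_eq_rpow_re_of_pos ht, sub_re, one_re]
  refine ⟨(∫ t in Ioi (0:ℝ), (t ^ ((-1:ℂ).re - 1) * ‖P.f_modif t‖ + t ^ ((1:ℂ).re - 1) * ‖P.f_modif t‖)) / 2,
    ?_, fun s h1 h2 => ?_⟩
  · refine div_nonneg (setIntegral_nonneg measurableSet_Ioi fun t ht => ?_) (by norm_num)
    have ht : (0:ℝ) < t := ht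
    positivity
  · have : completedRiemannZeta₀ s = mellin P.f_modif (s / 2) / 2 := rfl
    rw [this, norm_div, Complex.norm_ofNat]
    gcongr
    refine (norm_integral_le_integral_norm _).trans ?_
    refine setIntegral_mono_on (hconv _).norm ((hI _).add (hI _)) measurableSet_Ioi fun t ht => ?_
    have ht : (0:ℝ) < t := ht
    simp only [norm_smul, norm_cpow_eq_rpow_re_of_pos ht, ← add_mul]
    refine mul_le_mul_of_nonneg_right ?_ (norm_nonneg _)
    have hre : (s / 2 - 1).re = s.re / 2 - 1 := by simp
    rw [hre]
    simp only [neg_re, one_re]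
    have p1 := Real.rpow_pos_of_pos ht (-1 - 1 : ℝ)
    have p2 := Real.rpow_pos_of_pos ht (1 - 1 : ℝ)
    rcases le_total t 1 with h | h
    · have := Real.rpow_le_rpow_of_exponent_ge ht h (by linarith : (-1 - 1 : ℝ) ≤ s.re / 2 - 1)
      exact this.trans (le_add_of_nonneg_right p2.le)
    · have := Real.rpow_le_rpow_of_exponent_le h (by linarith : s.re / 2 - 1 ≤ (1 - 1 : ℝ))
      exact this.trans (le_add_of_nonneg_left p1.le)

/-- In `Re s ≥ 1/2` either the strip bound applies, or `Re s ≥ 2` and `ξ` is bounded through `Γ` and `ζ`. -/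
lemma exists_xi_growth_right :
    ∃ C : ℝ, 0 ≤ C ∧ ∀ s : ℂ, 1/2 ≤ s.re →
      ‖xi s‖ ≤ Real.exp (C * ((3 + ‖s‖) * √(3 + ‖s‖))) := by
  obtain ⟨C1, h1, hC1⟩ := exists_norm_zeta_le
  obtain ⟨C2, h2, hC2⟩ := exists_norm_completedZeta₀_strip
  -- with `r = 3 + ‖s‖` the polynomial factors are at most `exp r`
  refine ⟨C1 + C2 + 6, by linarith, fun s hs => ?_⟩
  set r := 3 + ‖s‖ with hr
  have hr1 : 3 ≤ r := by linarith [norm_nonneg s]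
  have hsr : 1 ≤ √r := by rw [Real.one_le_sqrt]; linarith
  have hrr : r ≤ r * √r := le_mul_of_one_le_right (by linarith) hsr
  have hpoly : ‖s * (s - 1)‖ ≤ Real.exp (2 * r) - 1 := by
    have ha : ‖s * (s - 1)‖ ≤ r * r - 1 := by
      rw [norm_mul]
      have := norm_sub_le s 1
      rw [norm_one] at this
      have h0 := norm_nonneg s
      nlinarith
    have hb : r ≤ Real.exp r := by linarith [Real.add_one_le_exp r]
    have : r * r ≤ Real.exp (2 * r) := by
      rw [two_mul, Real.exp_add]; gcongr
    linarith
  rcases le_total 2 s.re with h | h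
  · have hne0 : s ≠ 0 := by rintro rfl; simp at h; linarith
    have hne1 : s ≠ 1 := by rintro rfl; simp at h
    rw [xi_eq hne0 hne1, norm_mul]
    have hz := riemannZeta_def_of_ne_zero hne0
    have hG : s.Gammaℝ ≠ 0 := Gammaℝ_ne_zero_of_re_pos (by linarith)
    have hL : completedRiemannZeta s = s.Gammaℝ * riemannZeta s := by
      rw [hz]; field_simp
    have hGb : ‖s.Gammaℝ‖ ≤ Real.exp (2 * (r * √r)) := by
      rw [Gammaℝ_def, norm_mul]
      have e1 : ‖(Real.pi : ℂ) ^ (-s / 2)‖ ≤ 1 := by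
        rw [norm_cpow_eq_rpow_re_of_pos Real.pi_pos]
        apply Real.rpow_le_one_of_one_le_of_nonpos
        · linarith [Real.pi_gt_three]
        · simp; linarith
      have e2 : ‖Gamma (s / 2)‖ ≤ Real.exp (2 * (r * √r)) := by
        have hre : (s / 2).re = s.re / 2 := by simp
        refine (norm_Gamma_le (by rw [hre]; linarith)).trans ?_
        rw [hre]
        refine (Gamma_le_exp (by linarith)).trans ?_
        have : s.re / 2 + 2 ≤ r := by
          have := Complex.re_le_norm s
          linarith
        gcongr
      calc _ ≤ 1 * Real.exp (2 * (r * √r)) := mul_le_mul e1 e2 (norm_nonneg _) zero_le_one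
        _ = _ := one_mul _
    have hC : C1 ≤ Real.exp C1 := by linarith [Real.add_one_le_exp C1]
    rw [hL, norm_mul s.Gammaℝ]
    calc _ ≤ Real.exp (2 * r) * (Real.exp (2 * (r * √r)) * Real.exp C1) :=
          mul_le_mul (by linarith) (mul_le_mul hGb ((hC1 s h).trans hC) (norm_nonneg _)
            (Real.exp_pos _).le) (by positivity) (Real.exp_pos _).le
      _ = Real.exp (2 * r + (2 * (r * √r) + C1)) := by rw [Real.exp_add, Real.exp_add]
      _ ≤ _ := by
        apply Real.exp_le_exp.mpr
        nlinarith
  · have hb := hC2 s (by linarith) h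
    unfold xi
    have hC : C2 + 1 ≤ Real.exp C2 := Real.add_one_le_exp C2
    calc _ ≤ 1 + (Real.exp (2 * r) - 1) * C2 := by
          refine (norm_add_le _ _).trans ?_
          rw [norm_one, norm_mul]
          gcongr
          linarith [Real.one_le_exp (by linarith : 0 ≤ 2 * r)]
      _ ≤ Real.exp (2 * r) * Real.exp C2 := by
          nlinarith [Real.one_le_exp (by linarith : 0 ≤ 2 * r)]
      _ = Real.exp (2 * r + C2) := by rw [Real.exp_add]
      _ ≤ _ := by
        apply Real.exp_le_exp.mpr
        nlinarith

/-- `ξ` has order at most `3/2`; any exponent below `2` is enough for the partial fraction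
expansion of its logarithmic derivative. -/
lemma exists_xi_growth :
    ∃ C : ℝ, 0 ≤ C ∧ ∀ s : ℂ, ‖xi s‖ ≤ Real.exp (C * ((4 + ‖s‖) * √(4 + ‖s‖))) := by
  obtain ⟨C, hC, h⟩ := exists_xi_growth_right
  refine ⟨C, hC, fun s => ?_⟩
  rcases le_total (1/2) s.re with hs | hs
  · refine (h s hs).trans (Real.exp_le_exp.mpr ?_)
    gcongr <;> linarith
  · rw [← xi_one_sub]
    refine (h (1 - s) (by simp; linarith)).trans (Real.exp_le_exp.mpr ?_)
    have : ‖1 - s‖ ≤ 1 + ‖s‖ := by simpa using norm_sub_le 1 s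
    have h3 : 3 + ‖1 - s‖ ≤ 4 + ‖s‖ := by linarith
    gcongr

/-! ### Dividing an entire function by its zeros -/

lemma analyticOrderAt_ne_top_of_entire {f : ℂ → ℂ} (hf : Differentiable ℂ f) (h0 : f 0 ≠ 0) (z : ℂ) :
    analyticOrderAt f z ≠ ⊤ := by
  have hA : AnalyticOnNhd ℂ f univ := fun z _ => hf.analyticAt z
  refine hA.analyticOrderAt_ne_top_of_isPreconnected isPreconnected_univ (mem_univ 0) (mem_univ z) ?_
  rw [(hf.analyticAt 0).analyticOrderAt_eq_zero.mpr h0]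
  simp

/-- An entire function can be divided by the full power of `z - a` vanishing at `a`. -/
lemma exists_div_single {f : ℂ → ℂ} (hf : Differentiable ℂ f) (a : ℂ)
    (ha : analyticOrderAt f a ≠ ⊤) :
    ∃ g : ℂ → ℂ, Differentiable ℂ g ∧ g a ≠ 0 ∧ ∀ z, f z = (z - a) ^ analyticOrderNatAt f a * g z := by
  obtain ⟨k, hk, hka, hev⟩ := ((hf.analyticAt a).analyticOrderAt_ne_top).mp ha
  set n := analyticOrderNatAt f a
  have hfa : f a = (a - a) ^ n * k a := by simpa using hev.self_of_nhds
  refine ⟨Function.update (fun z => f z / (z - a) ^ n) a (k a), fun z => ?_, by simpa using hka,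
    fun z => ?_⟩
  · rcases eq_or_ne z a with rfl | hz
    · refine hk.differentiableAt.congr_of_eventuallyEq ?_
      filter_upwards [hev] with w hw
      rcases eq_or_ne w z with rfl | hwz
      · simp
      · have : (w - z) ^ n ≠ 0 := pow_ne_zero _ (sub_ne_zero.mpr hwz)
        rw [Function.update_of_ne hwz, hw, smul_eq_mul]
        field_simp
    · have hd : DifferentiableAt ℂ (fun z => f z / (z - a) ^ n) z :=
        (hf z).div (by fun_prop) (pow_ne_zero _ (sub_ne_zero.mpr hz))
      refine hd.congr_of_eventuallyEq ?_
      filter_upwards [isOpen_ne.mem_nhds hz] with w hw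
      rw [Function.update_of_ne hw]
  · rcases eq_or_ne z a with rfl | hz
    · simpa using hfa
    · have : (z - a) ^ n ≠ 0 := pow_ne_zero _ (sub_ne_zero.mpr hz)
      rw [Function.update_of_ne hz]
      field_simp

/-- Division of an entire function by the zeros in a finite set, with multiplicity. -/
lemma exists_div_finset {f : ℂ → ℂ} (hf : Differentiable ℂ f) (h0 : f 0 ≠ 0) (S : Finset ℂ) :
    ∃ g : ℂ → ℂ, Differentiable ℂ g ∧ (∀ a ∈ S, g a ≠ 0) ∧
      ∀ z, f z = (∏ a ∈ S, (z - a) ^ analyticOrderNatAt f a) * g z := by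
  classical
  induction S using Finset.induction_on with
  | empty => exact ⟨f, hf, by simp, by simp⟩
  | insert a S haS ih =>
    obtain ⟨g, hg, hgS, hfg⟩ := ih
    set P : ℂ → ℂ := fun z => ∏ b ∈ S, (z - b) ^ analyticOrderNatAt f b with hP
    have hPd : Differentiable ℂ P := by
      intro z
      simp only [hP]
      fun_prop
    have hPa : P a ≠ 0 := by
      simp only [hP, Finset.prod_ne_zero_iff]
      intro b hb
      exact pow_ne_zero _ (sub_ne_zero.mpr fun h => haS (h ▸ hb))
    have hfP : f = P * g := funext hfg
    have ho : analyticOrderAt f a = analyticOrderAt g a := by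
      conv_lhs => rw [hfP]
      rw [analyticOrderAt_mul (hPd.analyticAt a) (hg.analyticAt a),
        (hPd.analyticAt a).analyticOrderAt_eq_zero.mpr hPa, zero_add]
    have hn : analyticOrderNatAt f a = analyticOrderNatAt g a := by
      simp only [analyticOrderNatAt, ho]
    obtain ⟨k, hk, hka, hgk⟩ := exists_div_single hg a
      (ho ▸ analyticOrderAt_ne_top_of_entire hf h0 a)
    refine ⟨k, hk, fun b hb => ?_, fun z => ?_⟩
    · rcases Finset.mem_insert.mp hb with rfl | hb
      · exact hka
      · intro h
        exact hgS b hb (by rw [hgk, h, mul_zero])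
    · rw [Finset.prod_insert haS, hfg z, hgk z, hn]
      ring

/-- A nonvanishing holomorphic function on a disc, equal to `1` at the centre and at most `exp M` in
absolute value, has a logarithmic derivative with derivative `O(M / R ^ 2)` near the centre. -/
lemma norm_logDeriv_sub_le {h : ℂ → ℂ} (hh : Differentiable ℂ h) {R M : ℝ} (hR : 0 < R) (hM : 0 < M)
    (h0 : h 0 = 1) (hne : ∀ z ∈ Metric.ball (0:ℂ) R, h z ≠ 0)
    (hb : ∀ z ∈ Metric.ball (0:ℂ) R, ‖h z‖ ≤ Real.exp M) {s t : ℂ}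
    (hs : s ∈ Metric.ball (0:ℂ) (R / 8)) (ht : t ∈ Metric.ball (0:ℂ) (R / 8)) :
    ‖logDeriv h s - logDeriv h t‖ ≤ 64 * M / R ^ 2 * ‖s - t‖ := by
  have hLd : DifferentiableOn ℂ (logDeriv h) (Metric.ball 0 R) := by
    intro z hz
    have : DifferentiableAt ℂ (logDeriv h) z := by
      unfold logDeriv
      exact ((hh.analyticAt z).deriv.differentiableAt).div (hh z) (hne z hz)
    exact this.differentiableWithinAt
  obtain ⟨G, hG⟩ := hLd.isExactOn_ball
  set H : ℂ → ℂ := fun z => G z - G 0 with hH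
  have hHd : ∀ z ∈ Metric.ball (0:ℂ) R, HasDerivAt H (logDeriv h z) z := fun z hz =>
    (hG z hz).sub_const _
  have hmem0 : (0:ℂ) ∈ Metric.ball (0:ℂ) R := by simpa using hR
  -- `H` is the branch of `log h` vanishing at the centre
  have hexp : ∀ z ∈ Metric.ball (0:ℂ) R, h z = exp (H z) := by
    intro z hz
    have hconst := (convex_ball (0:ℂ) R).is_const_of_fderivWithin_eq_zero (𝕜 := ℂ)
      (f := fun w => h w * exp (-H w)) ?_ ?_ hz hmem0
    · simp only [h0, hH, sub_self, neg_zero, Complex.exp_zero, mul_one] at hconst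
      have : exp (H z) ≠ 0 := exp_ne_zero _
      calc h z = (h z * exp (-(G z - G 0))) * exp (H z) := by
            rw [mul_assoc, ← Complex.exp_add]; simp [hH]
        _ = _ := by rw [hconst, one_mul]
    · intro w hw
      exact ((hh w).mul ((hHd w hw).differentiableAt.neg.cexp)).differentiableWithinAt
    · intro w hw
      have hd : HasDerivAt (fun w => h w * exp (-H w)) 0 w := by
        have h1 : HasDerivAt (fun w => h w * exp (-H w)) _ w :=
          (hh w).hasDerivAt.mul ((hHd w hw).neg.cexp)
        have h2 := hne w hw
        have h3 : deriv h w = logDeriv h w * h w := by rw [logDeriv_apply]; field_simp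
        have h4 : deriv h w * exp ((-H) w) + h w * (exp ((-H) w) * -logDeriv h w) = 0 := by
          rw [h3]; ring
        exact h4 ▸ h1
      rw [fderivWithin_of_isOpen Metric.isOpen_ball hw]
      ext; simp [hd.hasFDerivAt.fderiv]
  have hRe : MapsTo H (Metric.ball 0 R) {z | z.re ≤ M} := by
    intro z hz
    have := hb z hz
    rw [hexp z hz, Complex.norm_exp, Real.exp_le_exp] at this
    exact this
  have hHb : ∀ z ∈ Metric.closedBall (0:ℂ) (R / 2), ‖H z‖ ≤ 2 * M := by
    intro z hz
    have hz' : ‖z‖ ≤ R / 2 := by simpa using hz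
    have := borelCaratheodory_zero hM
      (fun w hw => (hHd w hw).differentiableAt.differentiableWithinAt) hRe hR
      (by simp; linarith : z ∈ Metric.ball (0:ℂ) R) (by simp [hH])
    refine this.trans ?_
    rw [div_le_iff₀ (by linarith)]
    nlinarith [norm_nonneg z]
  have hL1 : ∀ z ∈ Metric.closedBall (0:ℂ) (R / 4), ‖logDeriv h z‖ ≤ 8 * M / R := by
    intro z hz
    have hz' : ‖z‖ ≤ R / 4 := by simpa using hz
    have hsub : ∀ w ∈ Metric.closedBall z (R / 4), ‖w‖ ≤ R / 2 := by
      intro w hw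
      have h1 : ‖w - z‖ ≤ R / 4 := by simpa [dist_eq_norm] using hw
      calc ‖w‖ = ‖(w - z) + z‖ := by ring_nf
        _ ≤ _ := (norm_add_le _ _).trans (by linarith)
    have hzR : z ∈ Metric.ball (0:ℂ) R := by simp; linarith
    have := norm_deriv_le_of_forall_mem_sphere_norm_le (f := H) (c := z) (R := R / 4) (C := 2 * M)
      (by positivity) (DifferentiableOn.diffContOnCl ?_) ?_
    · rw [(hHd z hzR).deriv] at this
      calc _ ≤ _ := this
        _ = _ := by field_simp; norm_num
    · rw [closure_ball _ (by positivity)]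
      intro w hw
      have := hsub w hw
      exact (hHd w (by simp; linarith)).differentiableAt.differentiableWithinAt
    · intro w hw
      exact hHb w (by simpa using hsub w (Metric.sphere_subset_closedBall hw))
  have hL2 : ∀ z ∈ Metric.ball (0:ℂ) (R / 8), ‖deriv (logDeriv h) z‖ ≤ 64 * M / R ^ 2 := by
    intro z hz
    have hz' : ‖z‖ < R / 8 := by simpa using hz
    have hsub : ∀ w ∈ Metric.closedBall z (R / 8), ‖w‖ ≤ R / 4 := by
      intro w hw
      have h1 : ‖w - z‖ ≤ R / 8 := by simpa [dist_eq_norm] using hw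
      calc ‖w‖ = ‖(w - z) + z‖ := by ring_nf
        _ ≤ _ := (norm_add_le _ _).trans (by linarith)
    have := norm_deriv_le_of_forall_mem_sphere_norm_le (f := logDeriv h) (c := z) (R := R / 8)
      (C := 8 * M / R) (by positivity) (DifferentiableOn.diffContOnCl ?_) ?_
    · calc _ ≤ _ := this
        _ = _ := by field_simp; norm_num
    · rw [closure_ball _ (by positivity)]
      refine hLd.mono fun w hw => ?_
      have := hsub w hw
      simp; linarith
    · intro w hw
      exact hL1 w (by simpa using hsub w (Metric.sphere_subset_closedBall hw))
  refine (convex_ball (0:ℂ) (R / 8)).norm_image_sub_le_of_norm_deriv_le (fun z hz => ?_) hL2 ht hs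
  have hz' : ‖z‖ < R / 8 := by simpa using hz
  exact (hLd z (by simp; linarith)).differentiableAt
    (Metric.isOpen_ball.mem_nhds (by simp; linarith))

/-- Truncated partial fractions: after removing the zeros in a disc of radius `R`, the logarithmic
derivative of an entire function varies by `O(M / R ^ 2)`, where `exp M` bounds the function on the
disc of radius `4 R`. -/
lemma norm_logDeriv_sub_sum_le {f : ℂ → ℂ} (hf : Differentiable ℂ f) (h0 : f 0 = 1) {R M : ℝ}
    (hR : 0 < R) (hM : 0 < M) (hb : ∀ z, ‖z‖ = 4 * R → ‖f z‖ ≤ Real.exp M) (S : Finset ℂ)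
    (hS : ∀ a, a ∈ S ↔ f a = 0 ∧ ‖a‖ ≤ R) {s t : ℂ} (hs : ‖s‖ < R / 8) (ht : ‖t‖ < R / 8)
    (hfs : f s ≠ 0) (hft : f t ≠ 0) :
    ‖(logDeriv f s - ∑ a ∈ S, (analyticOrderNatAt f a : ℂ) / (s - a)) -
      (logDeriv f t - ∑ a ∈ S, (analyticOrderNatAt f a : ℂ) / (t - a))‖
        ≤ 64 * M / R ^ 2 * ‖s - t‖ := by
  obtain ⟨g, hg, hgS, hfg⟩ := exists_div_finset hf (by rw [h0]; exact one_ne_zero) S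
  have hg0 : g 0 ≠ 0 := by
    intro h
    have := hfg 0
    rw [h0, h, mul_zero] at this
    exact one_ne_zero this
  have hP0 : (∏ a ∈ S, (0 - a) ^ analyticOrderNatAt f a) * g 0 = 1 := by rw [← hfg, h0]
  set h : ℂ → ℂ := fun z => g z / g 0 with hh
  have hhd : Differentiable ℂ h := by simp only [hh]; fun_prop
  have hbd : ∀ z ∈ Metric.closedBall (0:ℂ) (4 * R), ‖h z‖ ≤ Real.exp M := by
    intro z hz
    refine norm_le_of_forall_mem_frontier_norm_le (U := Metric.ball (0:ℂ) (4 * R))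
      Metric.isBounded_ball hhd.diffContOnCl (fun w hw => ?_) ?_
    · rw [frontier_ball _ (by positivity)] at hw
      have hw : ‖w‖ = 4 * R := by simpa using hw
      refine le_trans ?_ (hb w hw)
      have hP : (∏ a ∈ S, ‖0 - a‖ ^ analyticOrderNatAt f a) ≤
          ∏ a ∈ S, ‖w - a‖ ^ analyticOrderNatAt f a := by
        refine Finset.prod_le_prod (fun _ _ => by positivity) fun a ha => ?_
        have h1 := ((hS a).mp ha).2
        have h2 := norm_sub_norm_le w a
        refine pow_le_pow_left₀ (norm_nonneg _) ?_ _
        rw [zero_sub, norm_neg]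
        linarith
      have e1 := congrArg norm hP0
      have e2 := congrArg norm (hfg w)
      rw [norm_mul, norm_prod, norm_one] at e1
      rw [norm_mul, norm_prod] at e2
      simp only [norm_pow] at e1 e2
      have hgp : 0 < ‖g 0‖ := norm_pos_iff.mpr hg0
      simp only [hh, norm_div]
      rw [div_le_iff₀ hgp, e2]
      calc ‖g w‖ = ‖g w‖ * ((∏ a ∈ S, ‖0 - a‖ ^ analyticOrderNatAt f a) * ‖g 0‖) := by
            rw [e1, mul_one]
        _ ≤ ‖g w‖ * ((∏ a ∈ S, ‖w - a‖ ^ analyticOrderNatAt f a) * ‖g 0‖) := by gcongr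
        _ = _ := by ring
    · rw [closure_ball _ (by positivity)]; exact hz
  have hne : ∀ z ∈ Metric.ball (0:ℂ) R, h z ≠ 0 := by
    intro z hz hz0
    have hgz : g z = 0 := by simpa [hh, hg0] using hz0
    have hfz : f z = 0 := by rw [hfg, hgz, mul_zero]
    have hz' : ‖z‖ < R := by simpa using hz
    exact hgS z ((hS z).mpr ⟨hfz, hz'.le⟩) hgz
  have key : ∀ z, f z ≠ 0 →
      logDeriv f z - ∑ a ∈ S, (analyticOrderNatAt f a : ℂ) / (z - a) = logDeriv h z := by
    intro z hz
    have hgz : g z ≠ 0 := by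
      intro h
      exact hz (by rw [hfg, h, mul_zero])
    have hza : ∀ a ∈ S, z - a ≠ 0 := by
      intro a ha h
      rw [sub_eq_zero.mp h] at hz
      exact hz ((hS a).mp ha).1
    have e : logDeriv f z = logDeriv (fun z => (∏ a ∈ S, (z - a) ^ analyticOrderNatAt f a) * g z) z := by
      congr 1; exact funext hfg
    rw [e, logDeriv_mul (f := fun z => ∏ a ∈ S, (z - a) ^ analyticOrderNatAt f a) z
      (Finset.prod_ne_zero_iff.mpr fun a ha => pow_ne_zero _ (hza a ha)) hgz
      (by fun_prop) (hg z), logDeriv_prod (f := fun a z => (z - a) ^ analyticOrderNatAt f a)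
      (fun a ha => pow_ne_zero _ (hza a ha)) (fun a _ => by fun_prop)]
    have : ∀ a ∈ S, logDeriv (fun z => (z - a) ^ analyticOrderNatAt f a) z =
        (analyticOrderNatAt f a : ℂ) / (z - a) := by
      intro a _
      rw [logDeriv_fun_pow (by fun_prop)]
      simp [logDeriv, div_eq_mul_inv]
    rw [Finset.sum_congr rfl this, add_sub_cancel_left]
    simp only [logDeriv, hh, Pi.div_apply, deriv_div_const]
    field_simp
  rw [key s hfs, key t hft]
  exact norm_logDeriv_sub_le hhd hR hM (by simp [hh, hg0]) hne
    (fun z hz => hbd z (by simp at hz ⊢; linarith)) (by simpa using hs) (by simpa using ht)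

/-! ### Partial fractions of `ξ'/ξ` -/

/-- The zeros of `ξ`, that is, the nontrivial zeros of `ζ`. -/
abbrev Zer : Type := {z : ℂ // xi z = 0}

/-- The multiplicity of a zero of `ξ`. -/
noncomputable def mult (ρ : Zer) : ℝ := analyticOrderNatAt xi ρ

/-- `max |ρ| |1 - ρ|`: the modulus of that element of the pair `{ρ, 1 - ρ}` which lies to the right
of (or on) the critical line. -/
noncomputable def zmax (ρ : Zer) : ℝ := max ‖(ρ : ℂ)‖ ‖1 - (ρ : ℂ)‖

lemma Zer.ne_zero (ρ : Zer) : (ρ : ℂ) ≠ 0 := by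
  intro h; have := ρ.2; rw [h, xi_zero] at this; exact one_ne_zero this

lemma Zer.ne_one (ρ : Zer) : (ρ : ℂ) ≠ 1 := by
  intro h; have := ρ.2; rw [h, xi_one] at this; exact one_ne_zero this

lemma xi_ne_zero_of_one_le_re {s : ℂ} (hs : 1 ≤ s.re) : xi s ≠ 0 := by
  rcases eq_or_ne s 1 with rfl | h1
  · rw [xi_one]; exact one_ne_zero
  have h0 : s ≠ 0 := by rintro rfl; simp at hs; linarith
  rw [xi_eq h0 h1]
  have hz := riemannZeta_ne_zero_of_one_le_re hs
  rw [riemannZeta_def_of_ne_zero h0] at hz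
  have : completedRiemannZeta s ≠ 0 := fun h => hz (by rw [h, zero_div])
  exact mul_ne_zero (mul_ne_zero h0 (sub_ne_zero.mpr h1)) this

lemma Zer.re_lt_one (ρ : Zer) : (ρ : ℂ).re < 1 := by
  by_contra! h
  exact xi_ne_zero_of_one_le_re h ρ.2

lemma Zer.re_pos (ρ : Zer) : 0 < (ρ : ℂ).re := by
  by_contra! h
  refine xi_ne_zero_of_one_le_re (s := 1 - ρ) (by simpa using h) ?_
  rw [xi_one_sub]; exact ρ.2

lemma one_le_mult (ρ : Zer) : 1 ≤ mult ρ := by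
  have h1 := analyticOrderAt_ne_top_of_entire differentiable_xi (by simp [xi_zero]) ρ
  have h2 : analyticOrderAt xi ρ ≠ 0 := fun h =>
    (differentiable_xi.analyticAt (ρ : ℂ)).analyticOrderAt_eq_zero.mp h ρ.2
  have h3 : analyticOrderNatAt xi ρ ≠ 0 := by
    intro h
    rw [analyticOrderNatAt, ENat.toNat_eq_zero] at h
    exact h.elim h2 h1
  unfold mult
  exact_mod_cast Nat.one_le_iff_ne_zero.mpr h3

lemma mult_pos (ρ : Zer) : 0 < mult ρ := lt_of_lt_of_le one_pos (one_le_mult ρ)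

lemma zmax_pos (ρ : Zer) : 0 < zmax ρ := lt_max_of_lt_left (norm_pos_iff.mpr ρ.ne_zero)

lemma zmax_le (ρ : Zer) : zmax ρ ≤ ‖(ρ : ℂ)‖ + 1 := by
  refine max_le (by linarith) ?_
  have := norm_sub_le 1 (ρ : ℂ)
  simp at this ⊢; linarith

lemma zmax_le' (ρ : Zer) : zmax ρ ≤ ‖1 - (ρ : ℂ)‖ + 1 := by
  refine max_le ?_ (by linarith)
  have := norm_sub_le 1 (1 - (ρ : ℂ))
  simp at this ⊢; linarith

lemma finite_zeros (R : ℝ) : {ρ : Zer | ‖(ρ : ℂ)‖ ≤ R}.Finite := by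
  have hcod := AnalyticOnNhd.preimage_zero_mem_codiscrete (f := xi) (x := 0)
    (fun z _ => differentiable_xi.analyticAt z) (by simp [xi_zero])
  have h := mem_codiscrete'.mp hcod
  have hset : (xi ⁻¹' {0}ᶜ)ᶜ = {z | xi z = 0} := by ext; simp
  have hcl : IsClosed {z | xi z = 0} := by
    exact isClosed_eq differentiable_xi.continuous continuous_const
  have hd : IsDiscrete {z | xi z = 0} := by rw [← hset]; exact h.2
  have hfin : (Metric.closedBall (0:ℂ) R ∩ {z | xi z = 0}).Finite :=
    ((isCompact_closedBall (0:ℂ) R).inter_right hcl).finite (hd.mono inter_subset_right)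
  refine Finite.of_finite_image (f := Subtype.val) (hfin.subset ?_) Subtype.val_injective.injOn
  rintro _ ⟨ρ, hρ, rfl⟩
  exact ⟨by simpa using hρ, ρ.2⟩

/-- The zeros of modulus at most `R`. -/
noncomputable def zerosLE (R : ℝ) : Finset Zer := (finite_zeros R).toFinset

lemma mem_zerosLE {R : ℝ} {ρ : Zer} : ρ ∈ zerosLE R ↔ ‖(ρ : ℂ)‖ ≤ R := by simp [zerosLE]

lemma tendsto_zerosLE : Tendsto (fun n : ℕ => zerosLE n) atTop atTop := by
  refine tendsto_atTop_finset_of_monotone (fun a b hab ρ hρ => ?_) fun ρ => ?_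
  · rw [mem_zerosLE] at hρ ⊢
    exact hρ.trans (by exact_mod_cast hab)
  · obtain ⟨n, hn⟩ := exists_nat_ge ‖(ρ : ℂ)‖
    exact ⟨n, mem_zerosLE.mpr hn⟩

/-- The contribution of the zero `ρ` (paired with `1 - ρ`) to twice the logarithmic derivative
of `ξ`. -/
noncomputable def zterm (s : ℂ) (ρ : Zer) : ℂ := mult ρ * (1 / (s - ρ) + 1 / (s - 1 + ρ))

lemma logDeriv_xi_one_sub (s : ℂ) : logDeriv xi (1 - s) = - logDeriv xi s := by
  have h : deriv xi s = - deriv xi (1 - s) := by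
    conv_lhs => rw [show xi = fun z => xi (1 - z) from funext fun z => (xi_one_sub z).symm]
    rw [deriv_comp_const_sub]
  simp only [logDeriv_apply, xi_one_sub, h]
  ring

lemma tendsto_sum_zterm {s : ℂ} (hs : xi s ≠ 0) :
    Tendsto (fun n : ℕ => ∑ ρ ∈ zerosLE n, zterm s ρ) atTop (𝓝 (2 * logDeriv xi s)) := by
  obtain ⟨C, hC, hgrow⟩ := exists_xi_growth
  rw [tendsto_iff_norm_sub_tendsto_zero]
  set M : ℝ → ℝ := fun R => C * ((4 + 4 * R) * √(4 + 4 * R)) + 1 with hM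
  have hlim : Tendsto (fun n : ℕ => 64 * M n / (n : ℝ) ^ 2 * ‖s - (1 - s)‖) atTop (𝓝 0) := by
    have hz : Tendsto (fun n : ℕ => 64 * (C * 32 + 1) * ‖s - (1 - s)‖ * (√(n:ℝ))⁻¹) atTop (𝓝 0) := by
      have : Tendsto (fun n : ℕ => (√(n:ℝ))⁻¹) atTop (𝓝 0) :=
        tendsto_inv_atTop_zero.comp (Real.tendsto_sqrt_atTop.comp tendsto_natCast_atTop_atTop)
      simpa using this.const_mul (64 * (C * 32 + 1) * ‖s - (1 - s)‖)
    refine squeeze_zero' (Eventually.of_forall fun n => ?_) ?_ hz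
    · simp only [hM]; positivity
    · filter_upwards [eventually_ge_atTop 1] with n hn
      have hn : (1:ℝ) ≤ n := by exact_mod_cast hn
      have hq : 0 < √(n:ℝ) := Real.sqrt_pos.mpr (by linarith)
      have hq1 : 1 ≤ √(n:ℝ) := Real.one_le_sqrt.mpr hn
      have hsq : √(n:ℝ) * √(n:ℝ) = n := Real.mul_self_sqrt (by linarith)
      have h1 : √(4 + 4 * (n:ℝ)) ≤ 4 * √(n:ℝ) := by
        rw [Real.sqrt_le_left (by positivity)]
        nlinarith
      have h2 : M n ≤ (C * 32 + 1) * (n * √(n:ℝ)) := by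
        have : (4 + 4 * (n:ℝ)) * √(4 + 4 * (n:ℝ)) ≤ (8 * n) * (4 * √(n:ℝ)) := by
          gcongr; linarith
        have h3 : 1 ≤ n * √(n:ℝ) := by nlinarith
        simp only [hM]
        nlinarith
      have h4 : 64 * M n / (n : ℝ) ^ 2 ≤ 64 * (C * 32 + 1) * (√(n:ℝ))⁻¹ := by
        rw [div_le_iff₀ (by positivity)]
        have : 64 * (C * 32 + 1) * (√(n:ℝ))⁻¹ * (n:ℝ)^2 = 64 * ((C * 32 + 1) * (n * √(n:ℝ))) := by
          have : (n:ℝ)^2 = √(n:ℝ) * √(n:ℝ) * n := by rw [hsq]; ring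
          rw [this]; field_simp
        rw [this]; linarith
      calc _ ≤ 64 * (C * 32 + 1) * (√(n:ℝ))⁻¹ * ‖s - (1 - s)‖ := by gcongr
        _ = _ := by ring
  refine squeeze_zero' (Eventually.of_forall fun n => norm_nonneg _) ?_ hlim
  obtain ⟨n0, hn0⟩ := exists_nat_gt (8 * (‖s‖ + 1))
  filter_upwards [eventually_ge_atTop n0] with n hn
  have hn' : (n0:ℝ) ≤ n := by exact_mod_cast hn
  have hnpos : (0:ℝ) < n := by linarith [norm_nonneg s]
  have hs1 : ‖1 - s‖ ≤ 1 + ‖s‖ := by simpa using norm_sub_le 1 s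
  have := norm_logDeriv_sub_sum_le differentiable_xi xi_zero hnpos (M := M n)
    (by simp only [hM]; positivity) (fun z hz => ?_) ((zerosLE n).map ⟨Subtype.val, Subtype.val_injective⟩)
    (fun a => ?_) (s := s) (t := 1 - s) (by linarith) (by linarith) hs (by rwa [xi_one_sub])
  · rw [norm_sub_rev]
    refine le_trans (le_of_eq ?_) this
    congr 1
    rw [Finset.sum_map, Finset.sum_map, logDeriv_xi_one_sub]
    have : ∑ ρ ∈ zerosLE n, zterm s ρ =
        ∑ ρ ∈ zerosLE n, (analyticOrderNatAt xi ρ : ℂ) / (s - ρ) -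
        ∑ ρ ∈ zerosLE n, (analyticOrderNatAt xi ρ : ℂ) / (1 - s - ρ) := by
      rw [← Finset.sum_sub_distrib]
      refine Finset.sum_congr rfl fun ρ _ => ?_
      have : (s - 1 + (ρ:ℂ)) = -(1 - s - ρ) := by ring
      simp only [zterm, mult, ofReal_natCast, this, div_neg]
      ring
    rw [this]
    simp only [Function.Embedding.coeFn_mk]
    ring
  · refine (hgrow z).trans (Real.exp_le_exp.mpr ?_)
    rw [hz]
    simp only [hM]
    linarith
  · simp only [Finset.mem_map, mem_zerosLE, Function.Embedding.coeFn_mk]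
    constructor
    · rintro ⟨ρ, h, rfl⟩; exact ⟨ρ.2, h⟩
    · rintro ⟨h, h'⟩; exact ⟨⟨a, h⟩, h', rfl⟩

/-- The pair `ρ, 1 - ρ` contributes a positive amount to `ξ'/ξ` at `1`, of size at least `1 / zmax ρ ^ 2`; this
is what lets the numerical value of `F 1` control all sums over zeros. -/
lemma re_pair_ge (ρ : Zer) : 1 / zmax ρ ^ 2 ≤ (1 / (1 - (ρ : ℂ)) + 1 / (ρ : ℂ)).re := by
  have h0 := ρ.re_pos
  have h1 := ρ.re_lt_one
  have hn0 : 0 < ‖(ρ : ℂ)‖ := norm_pos_iff.mpr ρ.ne_zero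
  have hn1 : 0 < ‖1 - (ρ : ℂ)‖ := norm_pos_iff.mpr (sub_ne_zero.mpr ρ.ne_one.symm)
  have e : (1 / (1 - (ρ : ℂ)) + 1 / (ρ : ℂ)).re
      = (1 - (ρ : ℂ).re) / ‖1 - (ρ : ℂ)‖ ^ 2 + (ρ : ℂ).re / ‖(ρ : ℂ)‖ ^ 2 := by
    simp [Complex.inv_re, Complex.normSq_eq_norm_sq]
  rw [e]
  have a1 : (1 - (ρ : ℂ).re) / zmax ρ ^ 2 ≤ (1 - (ρ : ℂ).re) / ‖1 - (ρ : ℂ)‖ ^ 2 := by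
    have : ‖1 - (ρ : ℂ)‖ ≤ zmax ρ := le_max_right _ _
    have : 0 ≤ 1 - (ρ : ℂ).re := by linarith
    gcongr
  have a2 : (ρ : ℂ).re / zmax ρ ^ 2 ≤ (ρ : ℂ).re / ‖(ρ : ℂ)‖ ^ 2 := by
    have : ‖(ρ : ℂ)‖ ≤ zmax ρ := le_max_left _ _
    gcongr
  have : 1 / zmax ρ ^ 2 = (1 - (ρ : ℂ).re) / zmax ρ ^ 2 + (ρ : ℂ).re / zmax ρ ^ 2 := by ring
  linarith

/-- The logarithmic derivative of `ξ`. -/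
noncomputable def F (s : ℂ) : ℂ := logDeriv xi s

/-- From the partial fractions at `s = 1` and `re_pair_ge`. It also shows that the sum over the zeros
converges. -/
lemma sum_mult_le (u : Finset Zer) : ∑ ρ ∈ u, mult ρ / zmax ρ ^ 2 ≤ 2 * (F 1).re := by
  have ht := (Complex.continuous_re.tendsto _).comp
    (tendsto_sum_zterm (s := 1) (by rw [xi_one]; exact one_ne_zero))
  have hre : (2 * logDeriv xi 1).re = 2 * (F 1).re := by simp [F]
  rw [hre] at ht
  have hev : ∀ᶠ n : ℕ in atTop, u ⊆ zerosLE n := tendsto_zerosLE.eventually (eventually_ge_atTop u)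
  refine ge_of_tendsto ht ?_
  filter_upwards [hev] with n hn
  simp only [Function.comp_apply, Complex.re_sum]
  have hterm : ∀ ρ : Zer, mult ρ / zmax ρ ^ 2 ≤ (zterm 1 ρ).re := by
    intro ρ
    have := mul_le_mul_of_nonneg_left (re_pair_ge ρ) (mult_pos ρ).le
    rw [zterm, re_ofReal_mul]
    simpa [div_eq_mul_inv] using this
  calc _ ≤ ∑ ρ ∈ zerosLE n, mult ρ / zmax ρ ^ 2 :=
        Finset.sum_le_sum_of_subset_of_nonneg hn fun ρ _ _ =>
          div_nonneg (mult_pos ρ).le (sq_nonneg _)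
    _ ≤ _ := Finset.sum_le_sum fun ρ _ => hterm ρ

lemma summable_mult : Summable fun ρ : Zer => mult ρ / zmax ρ ^ 2 :=
  summable_of_sum_le (fun ρ => div_nonneg (mult_pos ρ).le (sq_nonneg _)) sum_mult_le

lemma tsum_mult_le : ∑' ρ : Zer, mult ρ / zmax ρ ^ 2 ≤ 2 * (F 1).re :=
  summable_mult.tsum_le_of_sum_le sum_mult_le

lemma eventually_zmax_ge (B : ℝ) : ∀ᶠ ρ : Zer in cofinite, B ≤ zmax ρ := by
  refine ((finite_zeros B).subset fun ρ (hρ : ¬ B ≤ zmax ρ) => ?_)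
  exact (le_max_left _ _).trans (not_le.mp hρ).le

lemma summable_zterm (s : ℂ) : Summable (zterm s) := by
  refine Summable.of_norm_bounded_eventually (summable_mult.mul_left (4 * ‖2 * s - 1‖)) ?_
  filter_upwards [eventually_zmax_ge (2 * (‖s‖ + 2))] with ρ hρ
  have hs := norm_nonneg s
  have h1 : zmax ρ / 2 ≤ ‖s - ρ‖ := by
    have := norm_sub_norm_le (ρ : ℂ) s
    rw [norm_sub_rev] at this
    linarith [zmax_le ρ]
  have h2 : zmax ρ / 2 ≤ ‖s - 1 + ρ‖ := by
    have := norm_sub_norm_le (1 - (ρ : ℂ)) s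
    rw [norm_sub_rev (1 - (ρ : ℂ)) s, show s - (1 - (ρ : ℂ)) = s - 1 + ρ by ring] at this
    linarith [zmax_le' ρ]
  have hz := zmax_pos ρ
  have n1 : s - ρ ≠ 0 := norm_pos_iff.mp (by linarith)
  have n2 : s - 1 + ρ ≠ 0 := norm_pos_iff.mp (by linarith)
  have e : zterm s ρ = mult ρ * ((2 * s - 1) / ((s - ρ) * (s - 1 + ρ))) := by
    rw [zterm]; congr 1; field_simp; ring
  rw [e, norm_mul, norm_div, norm_mul, norm_real, Real.norm_of_nonneg (mult_pos ρ).le]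
  have : zmax ρ / 2 * (zmax ρ / 2) ≤ ‖s - ρ‖ * ‖s - 1 + ρ‖ := by gcongr
  calc mult ρ * (‖2 * s - 1‖ / (‖s - ρ‖ * ‖s - 1 + ρ‖))
      ≤ mult ρ * (‖2 * s - 1‖ / (zmax ρ / 2 * (zmax ρ / 2))) := by
        have := (mult_pos ρ).le
        gcongr
    _ = _ := by field_simp; norm_num

/-- Partial fraction expansion of `ξ'/ξ`, symmetrised under `ρ ↦ 1 - ρ`, which makes it absolutely
convergent and removes the constant of Hadamard's factorisation. -/
lemma hasSum_zterm {s : ℂ} (hs : xi s ≠ 0) : HasSum (zterm s) (2 * F s) := by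
  have h := (summable_zterm s).hasSum
  have h2 : Tendsto (fun n : ℕ => ∑ ρ ∈ zerosLE n, zterm s ρ) atTop (𝓝 (∑' ρ, zterm s ρ)) :=
    h.comp tendsto_zerosLE
  rwa [tendsto_nhds_unique h2 (tendsto_sum_zterm hs)] at h

/-! ### The series of the digamma function -/

/-- The terms of the series for the digamma function, `ψ(z + 1) = -γ + ∑ digTerm z n`. -/
noncomputable def digTerm (z : ℂ) (n : ℕ) : ℂ := 1 / ((n : ℂ) + 1) - 1 / ((n : ℂ) + 1 + z)

lemma digTerm_eq {z : ℂ} (hz : 0 < z.re) (n : ℕ) :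
    digTerm z n = z / (((n : ℂ) + 1) * ((n : ℂ) + 1 + z)) := by
  have h1 : ((n : ℂ) + 1) ≠ 0 := Nat.cast_add_one_ne_zero n
  have h2 : ((n : ℂ) + 1 + z) ≠ 0 := by
    intro h
    have := congrArg Complex.re h
    simp at this
    have hn : (0:ℝ) ≤ n := Nat.cast_nonneg n
    linarith
  rw [digTerm]
  field_simp
  ring

lemma norm_digTerm_le {z : ℂ} (hz : 0 < z.re) (n : ℕ) : ‖digTerm z n‖ ≤ ‖z‖ / ((n : ℝ) + 1) ^ 2 := by
  have hn : (0:ℝ) ≤ n := Nat.cast_nonneg n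
  rw [digTerm_eq hz, norm_div, norm_mul]
  have h1 : ‖(n : ℂ) + 1‖ = (n : ℝ) + 1 := by
    rw [← Nat.cast_succ, Complex.norm_natCast]; push_cast; ring
  have h2 : (n : ℝ) + 1 ≤ ‖(n : ℂ) + 1 + z‖ := by
    refine le_trans ?_ (Complex.re_le_norm _)
    simp; linarith
  rw [h1, sq]
  gcongr

lemma summable_inv_sq : Summable fun n : ℕ => 1 / ((n : ℝ) + 1) ^ 2 := by
  have := (summable_nat_add_iff 1).mpr (Real.summable_one_div_nat_pow.mpr (by norm_num : 1 < 2))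
  simpa using this

lemma summable_digTerm {z : ℂ} (hz : 0 < z.re) : Summable (digTerm z) := by
  refine Summable.of_norm_bounded (summable_inv_sq.mul_left ‖z‖) fun n => ?_
  refine (norm_digTerm_le hz n).trans (le_of_eq ?_)
  ring

/-- The logarithmic derivative of the real Gamma function. -/
noncomputable def rdig (x : ℝ) : ℝ := deriv Real.Gamma x / Real.Gamma x

lemma differentiableAt_rGamma {x : ℝ} (hx : 0 < x) : DifferentiableAt ℝ Real.Gamma x := by
  refine Real.differentiableAt_Gamma fun m h => ?_
  have : (0:ℝ) ≤ m := Nat.cast_nonneg m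
  linarith

/-- `Γ'/Γ` increases on the positive reals since `Γ` is log-convex. -/
lemma rdig_mono : MonotoneOn rdig (Ioi 0) := by
  have h := Real.convexOn_log_Gamma.monotoneOn_deriv fun x (hx : 0 < x) =>
    (Real.differentiableAt_log (Real.Gamma_pos_of_pos hx).ne').comp x (differentiableAt_rGamma hx)
  have e : ∀ x ∈ Ioi (0:ℝ), deriv (Real.log ∘ Real.Gamma) x = rdig x := by
    intro x hx
    have := (Real.hasDerivAt_log (Real.Gamma_pos_of_pos hx).ne').comp x
      (differentiableAt_rGamma hx).hasDerivAt
    rw [this.deriv, rdig]; ring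
  intro x hx y hy hxy
  rw [← e x hx, ← e y hy]
  exact h hx hy hxy

lemma rdig_add_one {x : ℝ} (hx : 0 < x) : rdig (x + 1) = rdig x + 1 / x := by
  have hG := Real.Gamma_pos_of_pos hx
  have hd : deriv Real.Gamma (x + 1) = Real.Gamma x + x * deriv Real.Gamma x := by
    rw [← deriv_comp_add_const]
    have h1 : (fun y => Real.Gamma (y + 1)) =ᶠ[𝓝 x] fun y => y * Real.Gamma y := by
      filter_upwards [lt_mem_nhds hx] with y hy
      exact Real.Gamma_add_one hy.ne'
    rw [h1.deriv_eq]
    have := (hasDerivAt_id x).mul (differentiableAt_rGamma hx).hasDerivAt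
    have h2 := this.deriv
    simp only [id] at h2
    rw [← one_mul (Real.Gamma x), ← h2]
    rfl
  rw [rdig, hd, Real.Gamma_add_one hx.ne', rdig]
  field_simp
  ring

lemma rdig_add_nat {x : ℝ} (hx : 0 < x) (N : ℕ) :
    rdig (x + N) = rdig x + ∑ n ∈ Finset.range N, 1 / (x + n) := by
  induction N with
  | zero => simp
  | succ N ih =>
    have : x + ((N + 1 : ℕ) : ℝ) = (x + N) + 1 := by push_cast; ring
    rw [this, rdig_add_one (by positivity), ih, Finset.sum_range_succ]
    ring

lemma rdig_one : rdig 1 = -Real.eulerMascheroniConstant := by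
  have := Real.deriv_Gamma_nat 0
  simp at this
  simp [rdig, this]

/-- The recursion for `rdig` and its monotonicity determine it up to an error `O(1 / N)`. -/
lemma tendsto_rdig_sum {x : ℝ} (hx : 0 < x) :
    Tendsto (fun N : ℕ => ∑ n ∈ Finset.range N, (1 / ((n : ℝ) + 1) - 1 / ((n : ℝ) + 1 + x))) atTop
      (𝓝 (rdig (x + 1) + Real.eulerMascheroniConstant)) := by
  have key : ∀ N : ℕ, (rdig (x + 1) + Real.eulerMascheroniConstant) -
      ∑ n ∈ Finset.range N, (1 / ((n : ℝ) + 1) - 1 / ((n : ℝ) + 1 + x)) =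
      rdig (x + 1 + N) - rdig (1 + N) := by
    intro N
    rw [rdig_add_nat (by linarith), rdig_add_nat one_pos, rdig_one, Finset.sum_sub_distrib]
    have e1 : ∀ n : ℕ, (1:ℝ) / (x + 1 + n) = 1 / ((n:ℝ) + 1 + x) := fun n => by ring_nf
    have e2 : ∀ n : ℕ, (1:ℝ) / (1 + n) = 1 / ((n:ℝ) + 1) := fun n => by ring_nf
    simp only [e1, e2]
    ring
  obtain ⟨k, hk⟩ := exists_nat_ge x
  have hlim : Tendsto (fun N : ℕ => (k : ℝ) * (1 / ((N : ℝ) + 1))) atTop (𝓝 0) := by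
    simpa using tendsto_one_div_add_atTop_nhds_zero_nat.const_mul (k : ℝ)
  have h0 : Tendsto (fun N : ℕ => (rdig (x + 1) + Real.eulerMascheroniConstant) -
      ∑ n ∈ Finset.range N, (1 / ((n : ℝ) + 1) - 1 / ((n : ℝ) + 1 + x))) atTop (𝓝 0) := by
    refine squeeze_zero (fun N => ?_) (fun N => ?_) hlim
    · rw [key, sub_nonneg]
      have hN : (0:ℝ) ≤ N := Nat.cast_nonneg N
      exact rdig_mono (by simp; linarith) (by simp; linarith) (by linarith)
    · rw [key]
      have hN : (0:ℝ) ≤ N := Nat.cast_nonneg N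
      have h1 : rdig (x + 1 + N) ≤ rdig (1 + N + k) :=
        rdig_mono (by simp; linarith) (by simp; linarith) (by linarith)
      rw [rdig_add_nat (x := 1 + N) (by positivity)] at h1
      have h2 : ∑ n ∈ Finset.range k, 1 / (1 + (N:ℝ) + n) ≤ ∑ n ∈ Finset.range k, 1 / ((N:ℝ) + 1) := by
        refine Finset.sum_le_sum fun n _ => ?_
        have : (0:ℝ) ≤ n := Nat.cast_nonneg n
        exact one_div_le_one_div_of_le (by positivity) (by linarith)
      simp at h2
      simp at h1 ⊢
      linarith
  have := h0.const_sub (rdig (x + 1) + Real.eulerMascheroniConstant)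
  simpa using this

lemma digamma_ofReal {x : ℝ} (hx : 0 < x) : digamma x = rdig x := by
  have hd : DifferentiableAt ℂ Gamma x := by
    refine differentiableAt_Gamma _ fun m h => ?_
    have := congrArg Complex.re h
    simp at this
    have : (0:ℝ) ≤ m := Nat.cast_nonneg m
    linarith
  have h1 := hd.hasDerivAt.comp_ofReal
  have h2 := (differentiableAt_rGamma hx).hasDerivAt.ofReal_comp
  have : (fun y : ℝ => Gamma (y : ℂ)) = fun y : ℝ => ((Real.Gamma y : ℝ) : ℂ) :=
    funext fun y => Gamma_ofReal y
  rw [this] at h1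
  rw [digamma_def, logDeriv_apply, h1.unique h2, Gamma_ofReal, rdig]
  push_cast; rfl

/-- The classical series for the digamma function: on the positive reals it follows from the
convexity of `log Γ`, and in the right half-plane by analytic continuation. -/
lemma hasSum_digTerm {z : ℂ} (hz : 0 < z.re) : HasSum (digTerm z) (digamma (z + 1) + Real.eulerMascheroniConstant) := by
  set B := ‖z‖ + 2
  set U : Set ℂ := {w | 0 < w.re} ∩ Metric.ball 0 B with hU
  have hUo : IsOpen U := (isOpen_lt continuous_const continuous_re).inter Metric.isOpen_ball
  have hUc : IsPreconnected U :=
    ((convex_halfSpace_re_gt 0).inter (convex_ball 0 B)).isPreconnected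
  have hf : AnalyticOnNhd ℂ (fun w => digamma (w + 1) + Real.eulerMascheroniConstant) U := by
    refine DifferentiableOn.analyticOnNhd (fun w hw => ?_) hUo
    have hw : 0 < w.re := hw.1
    have hne : ∀ m : ℕ, w + 1 ≠ -m := fun m h => by
      have := congrArg Complex.re h
      simp at this
      have : (0:ℝ) ≤ m := Nat.cast_nonneg m
      linarith
    have ho : IsOpen {w : ℂ | 0 < w.re} := isOpen_lt continuous_const continuous_re
    have hGd : DifferentiableOn ℂ Gamma {w : ℂ | 0 < w.re} := fun v hv =>
      (differentiableAt_Gamma v fun m h => by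
        have h2 := congrArg Complex.re h
        simp at h2
        have : (0:ℝ) ≤ m := Nat.cast_nonneg m
        have : 0 < v.re := hv
        linarith).differentiableWithinAt
    have hA : AnalyticAt ℂ Gamma (w + 1) :=
      hGd.analyticOnNhd ho (w + 1) (by simp; linarith)
    have hG0 : Gamma (w + 1) ≠ 0 := Gamma_ne_zero_of_re_pos (by simp; linarith)
    have hd : DifferentiableAt ℂ digamma (w + 1) := by
      rw [digamma_def]; unfold logDeriv
      exact hA.deriv.differentiableAt.div hA.differentiableAt hG0
    have : DifferentiableAt ℂ (fun w => digamma (w + 1)) w := by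
      exact hd.comp w (f := fun w => w + 1) (by fun_prop)
    exact (this.add_const _).differentiableWithinAt
  have hg : AnalyticOnNhd ℂ (fun w => ∑' n, digTerm w n) U := by
    refine DifferentiableOn.analyticOnNhd ?_ hUo
    refine differentiableOn_tsum_of_summable_norm (summable_inv_sq.mul_left B) (fun n w hw => ?_) hUo
      fun n w hw => ?_
    · have hw : 0 < w.re := hw.1
      have : ((n : ℂ) + 1 + w) ≠ 0 := by
        intro h
        have := congrArg Complex.re h
        simp at this
        have hn : (0:ℝ) ≤ n := Nat.cast_nonneg n
        linarith
      unfold digTerm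
      have : DifferentiableAt ℂ (fun w : ℂ => 1 / ((n : ℂ) + 1) - 1 / ((n : ℂ) + 1 + w)) w := by
        fun_prop (disch := assumption)
      exact this.differentiableWithinAt
    · have h1 : ‖w‖ < B := by simpa using hw.2
      refine (norm_digTerm_le hw.1 n).trans ?_
      rw [mul_one_div]
      gcongr
  have hreal : ∀ x : ℝ, 0 < x → digamma ((x : ℂ) + 1) + Real.eulerMascheroniConstant = ∑' n, digTerm (x : ℂ) n := by
    intro x hx
    have h1 := (summable_digTerm (z := x) (by simpa using hx)).hasSum.tendsto_sum_nat
    have h2 := (continuous_ofReal.tendsto _).comp (tendsto_rdig_sum hx)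
    refine tendsto_nhds_unique ?_ h1
    have e1 : digamma ((x : ℂ) + 1) + Real.eulerMascheroniConstant = ((rdig (x + 1) + Real.eulerMascheroniConstant : ℝ) : ℂ) := by
      rw [← ofReal_one, ← ofReal_add, digamma_ofReal (by linarith)]; push_cast; rfl
    rw [e1]
    refine h2.congr fun N => ?_
    simp [digTerm]
  have hBU : (1:ℂ) ∈ U := by
    refine ⟨by simp, ?_⟩
    simp [B]; linarith [norm_nonneg z]
  have heq := hf.eqOn_of_preconnected_of_frequently_eq hg hUc hBU ?_
  · have hzU : z ∈ U := ⟨hz, by simp [B]⟩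
    have := heq hzU
    simp only at this
    rw [this]
    exact (summable_digTerm hz).hasSum
  · have ht : Tendsto (fun x : ℝ => (x : ℂ)) (𝓝[>] 1) (𝓝[≠] 1) := by
      refine tendsto_nhdsWithin_iff.mpr ⟨?_, ?_⟩
      · have := (continuous_ofReal.tendsto (1:ℝ))
        simp only [ofReal_one] at this
        exact this.mono_left nhdsWithin_le_nhds
      · filter_upwards [self_mem_nhdsWithin] with x hx
        have hx : (1:ℝ) < x := hx
        simp only [mem_compl_iff, mem_singleton_iff]
        exact_mod_cast hx.ne'
    refine ht.frequently (Eventually.frequently ?_)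
    filter_upwards [self_mem_nhdsWithin] with x hx
    exact hreal x (lt_trans one_pos hx)

/-- The terms with index at least `‖z‖` sum to at most `1`, the others to at most a harmonic sum. -/
lemma digamma_re_le {z : ℂ} (hz : 0 < z.re) :
    (digamma (z + 1)).re ≤ Real.log (‖z‖ + 2) + 1 := by
  have hz0 : 0 < ‖z‖ := lt_of_lt_of_le hz (Complex.re_le_norm z)
  set N := ⌈‖z‖⌉₊ with hN
  have hN1 : 0 < N := Nat.ceil_pos.mpr hz0
  have hNz : ‖z‖ ≤ N := Nat.le_ceil _
  have hNz2 : (N:ℝ) ≤ ‖z‖ + 1 := (Nat.ceil_lt_add_one hz0.le).le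
  have hs := (Complex.hasSum_re (hasSum_digTerm hz))
  have hsplit := hs.summable.sum_add_tsum_nat_add N
  rw [hs.tsum_eq] at hsplit
  have h1 : ∑ n ∈ Finset.range N, (digTerm z n).re ≤ harmonic N := by
    rw [harmonic]
    push_cast
    refine Finset.sum_le_sum fun n _ => ?_
    have hn : (0:ℝ) ≤ n := Nat.cast_nonneg n
    have e : (1 / ((n : ℂ) + 1)).re = ((n:ℝ)+1)⁻¹ := by
      rw [one_div]
      have : ((n:ℂ) + 1) = (((n:ℝ) + 1 : ℝ) : ℂ) := by push_cast; rfl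
      rw [this, ← ofReal_inv, ofReal_re]
    rw [digTerm, sub_re, e]
    have : 0 ≤ (1 / ((n : ℂ) + 1 + z)).re := by
      rw [one_div, inv_re]
      apply div_nonneg _ (normSq_nonneg _)
      simp; linarith
    linarith
  have h2 : ∑' n, (digTerm z (n + N)).re ≤ 1 := by
    have hsum2 := (summable_nat_add_iff N).mpr hs.summable
    have hpart : ∀ k : ℕ, ∑ n ∈ Finset.range k, (digTerm z (n + N)).re ≤
        ‖z‖ / N - ‖z‖ / (N + k) := by
      intro k
      induction k with
      | zero => simp
      | succ k ih =>
        rw [Finset.sum_range_succ]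
        have hb := (Complex.re_le_norm _).trans (norm_digTerm_le hz (k + N))
        have hN' : (0:ℝ) < N := by exact_mod_cast hN1
        have hk : (0:ℝ) ≤ k := Nat.cast_nonneg k
        have : ‖z‖ / (((k + N : ℕ) : ℝ) + 1) ^ 2 ≤ ‖z‖ / (N + k) - ‖z‖ / (N + ((k + 1 : ℕ) : ℝ)) := by
          push_cast
          rw [div_sub_div _ _ (by positivity) (by positivity), div_le_div_iff₀ (by positivity) (by positivity)]
          have : 0 ≤ ‖z‖ * ((N:ℝ) + k + 1) := by positivity
          nlinarith
        linarith
    refine hsum2.tsum_le_of_sum_range_le fun k => (hpart k).trans ?_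
    have hN' : (0:ℝ) < N := by exact_mod_cast hN1
    have : ‖z‖ / N ≤ 1 := (div_le_one hN').mpr hNz
    have : 0 ≤ ‖z‖ / (N + k) := by positivity
    linarith
  have h3 := Real.eulerMascheroniSeq_lt_eulerMascheroniConstant N
  rw [Real.eulerMascheroniSeq] at h3
  have h4 : Real.log ((N:ℝ) + 1) ≤ Real.log (‖z‖ + 2) :=
    Real.log_le_log (by positivity) (by linarith)
  have h5 : (digamma (z + 1) + Real.eulerMascheroniConstant).re = (digamma (z + 1)).re + Real.eulerMascheroniConstant := by simp
  linarith

lemma rdig_three_le : rdig 3 ≤ 1 := by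
  have h := rdig_add_nat one_pos 2
  rw [rdig_one] at h
  have : (1:ℝ) + ((2:ℕ):ℝ) = 3 := by norm_num
  rw [this] at h
  rw [h]
  have := Real.one_half_lt_eulerMascheroniConstant
  simp [Finset.sum_range_succ]
  norm_num
  linarith

/-! ### The value of `ξ'/ξ` at `1` -/

/-- `ξ'/ξ` in terms of `ζ'/ζ`, from the definition of the completed zeta function. -/
lemma F_eq {s : ℂ} (hs : 1 < s.re) :
    F s = 1 / (s - 1) - (Real.log Real.pi : ℂ) / 2 + digamma (s / 2 + 1) / 2
      + logDeriv riemannZeta s := by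
  have h0 : s ≠ 0 := by rintro rfl; simp at hs; linarith
  have h1 : s ≠ 1 := by rintro rfl; simp at hs
  have hpi : (Real.pi : ℂ) ≠ 0 := by exact_mod_cast Real.pi_ne_zero
  have hev : xi =ᶠ[𝓝 s] fun w => ((w * (w - 1)) * (((Real.pi : ℂ) ^ (-w / 2)) * Gamma (w / 2)))
      * riemannZeta w := by
    have : ∀ᶠ w : ℂ in 𝓝 s, 1 < w.re := (continuous_re.isOpen_preimage _ isOpen_Ioi).mem_nhds hs
    filter_upwards [this] with w hw
    have hw0 : w ≠ 0 := by rintro rfl; simp at hw; linarith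
    have hw1 : w ≠ 1 := by rintro rfl; simp at hw
    have hG : Gammaℝ w ≠ 0 := Gammaℝ_ne_zero_of_re_pos (by linarith)
    rw [xi_eq hw0 hw1, riemannZeta_def_of_ne_zero hw0, ← Gammaℝ_def]
    field_simp
  have hh : ∀ m : ℕ, s / 2 ≠ -m := by
    intro m h
    have := congrArg Complex.re h
    have hm : (0:ℝ) ≤ m := Nat.cast_nonneg m
    simp at this
    linarith
  have hΓ : Gamma (s / 2) ≠ 0 := Gamma_ne_zero hh
  have hΓd : DifferentiableAt ℂ Gamma (s / 2) := differentiableAt_Gamma _ hh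
  have hcomp : HasDerivAt (fun w : ℂ => Gamma (w / 2)) (deriv Gamma (s / 2) * (1 / 2)) s :=
    hΓd.hasDerivAt.comp s ((hasDerivAt_id s).div_const 2)
  have hpow : HasDerivAt (fun w : ℂ => (Real.pi : ℂ) ^ (-w / 2))
      ((Real.pi : ℂ) ^ (-s / 2) * Complex.log Real.pi * (-1 / 2)) s :=
    ((hasDerivAt_id s).neg.div_const 2).const_cpow (Or.inl hpi)
  have hpz : (Real.pi : ℂ) ^ (-s / 2) ≠ 0 := by simp [cpow_eq_zero_iff, hpi]
  have hz : riemannZeta s ≠ 0 := riemannZeta_ne_zero_of_one_le_re hs.le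
  have hzd : DifferentiableAt ℂ riemannZeta s := differentiableAt_riemannZeta h1
  have hs1 : s - 1 ≠ 0 := sub_ne_zero.mpr h1
  have hq : HasDerivAt (fun w : ℂ => w * (w - 1)) (1 * (s - 1) + s * 1) s :=
    (hasDerivAt_id s).mul ((hasDerivAt_id s).sub_const 1)
  have hlog : logDeriv xi s = logDeriv (fun w => ((w * (w - 1)) *
      (((Real.pi : ℂ) ^ (-w / 2)) * Gamma (w / 2))) * riemannZeta w) s := by
    rw [logDeriv_apply, logDeriv_apply, hev.deriv_eq, hev.eq_of_nhds]
  rw [F, hlog]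
  rw [logDeriv_mul (f := fun w => (w * (w - 1)) * (((Real.pi : ℂ) ^ (-w / 2)) * Gamma (w / 2)))
    s (by positivity) hz (hq.differentiableAt.mul (hpow.differentiableAt.mul hcomp.differentiableAt)) hzd]
  rw [logDeriv_mul (f := fun w : ℂ => w * (w - 1)) (g := fun w => ((Real.pi : ℂ) ^ (-w / 2)) * Gamma (w / 2))
    s (by positivity) (by positivity) hq.differentiableAt (hpow.differentiableAt.mul hcomp.differentiableAt)]
  rw [logDeriv_mul (f := fun w : ℂ => (Real.pi : ℂ) ^ (-w / 2)) (g := fun w => Gamma (w / 2))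
    s hpz hΓ hpow.differentiableAt hcomp.differentiableAt]
  rw [logDeriv_apply, logDeriv_apply (fun w : ℂ => (Real.pi : ℂ) ^ (-w / 2)),
    logDeriv_apply (fun w : ℂ => Gamma (w / 2)), hq.deriv, hpow.deriv, hcomp.deriv,
    digamma_apply_add_one _ hh, digamma_def, logDeriv_apply Gamma, ← ofReal_log Real.pi_pos.le]
  field_simp
  ring

/-- Since `ξ = 1 + s (s - 1) Λ₀(s)`, the derivative at `1` is `Λ₀(1)`, whose value comes from that of
`completedRiemannZeta` at `1`. -/
lemma xi_deriv_one : F 1 = 1 + ((Real.eulerMascheroniConstant : ℂ) - Complex.log (4 * Real.pi)) / 2 := by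
  have h : HasDerivAt xi (((1 * ((1:ℂ) - 1) + 1 * 1) * completedRiemannZeta₀ 1
      + (1 * ((1:ℂ) - 1)) * deriv completedRiemannZeta₀ 1)) 1 :=
    ((((hasDerivAt_id (1:ℂ)).mul ((hasDerivAt_id (1:ℂ)).sub_const 1))).mul
      (differentiable_completedZeta₀ 1).hasDerivAt).const_add 1
  have h1 := completedRiemannZeta_one
  rw [completedRiemannZeta_eq] at h1
  rw [F, logDeriv_apply, h.deriv, xi_one]
  simp at h1 ⊢
  rw [← h1]
  ring

lemma gamma_le : Real.eulerMascheroniConstant ≤ 0.58503 := by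
  have h := Real.eulerMascheroniConstant_lt_eulerMascheroniSeq' 64
  rw [Real.eulerMascheroniSeq'] at h
  have h64 : Real.log (64:ℝ) = 6 * Real.log 2 := by
    rw [show (64:ℝ) = 2 ^ 6 by norm_num, Real.log_pow]; norm_num
  have hh : ((harmonic 64 : ℚ) : ℝ) ≤ 4.74391 := by
    have : harmonic 64 ≤ 4.74391 := by
      norm_num [harmonic, Finset.sum_range_succ]
    exact_mod_cast (Rat.cast_le (K := ℝ)).mpr this |>.trans (by norm_num)
  have := Real.log_two_gt_d9
  norm_num [h64] at h
  linarith

lemma gamma_ge : 0.57 ≤ Real.eulerMascheroniConstant := by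
  have h := Real.eulerMascheroniSeq_lt_eulerMascheroniConstant 99
  rw [Real.eulerMascheroniSeq] at h
  have hh : (5.17736:ℝ) ≤ ((harmonic 99 : ℚ) : ℝ) := by
    have : 5.17736 ≤ harmonic 99 := by
      norm_num [harmonic, Finset.sum_range_succ]
    exact le_trans (by norm_num) ((Rat.cast_le (K := ℝ)).mpr this)
  have h100 : Real.log (100:ℝ) ≤ 4.607 := by
    have h5 : 31 * Real.log 100 ≤ 206 * Real.log 2 := by
      rw [← Real.log_rpow (by norm_num), ← Real.log_rpow (by norm_num)]
      refine Real.log_le_log (by positivity) ?_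
      norm_num
    have := Real.log_two_lt_d9
    linarith
  norm_num at h
  linarith

lemma log_pi_ge : 1.1446 ≤ Real.log Real.pi := by
  have h1 : Real.log 3.1415 ≤ Real.log Real.pi := 
    Real.log_le_log (by norm_num) Real.pi_gt_d4.le
  have h5 : 180 * Real.log 2 ≤ 109 * Real.log 3.1415 := by
    rw [← Real.log_rpow (by norm_num), ← Real.log_rpow (by norm_num)]
    refine Real.log_le_log (by positivity) ?_
    norm_num
  have := Real.log_two_gt_d9
  linarith

/-- The exact value is `1 + γ / 2 - log (4 π) / 2 = 0.0231…`. -/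
lemma F_one_re_le : (F 1).re ≤ 0.0271 := by
  have : F 1 = ((1 + (Real.eulerMascheroniConstant - (2 * Real.log 2 + Real.log Real.pi)) / 2 : ℝ) : ℂ) := by
    rw [xi_deriv_one]
    have h4 : Real.log (4 * Real.pi) = 2 * Real.log 2 + Real.log Real.pi := by
      rw [Real.log_mul (by norm_num) Real.pi_ne_zero, show (4:ℝ) = 2 ^ 2 by norm_num, Real.log_pow]
      norm_num
    have : Complex.log (4 * Real.pi) = ((2 * Real.log 2 + Real.log Real.pi : ℝ) : ℂ) := by
      rw [← h4, ofReal_log (by positivity)]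
      push_cast; rfl
    rw [this]
    push_cast
    ring
  rw [this, ofReal_re]
  have := gamma_le
  have := log_pi_ge
  have := Real.log_two_gt_d9
  linarith

/-! ### A zero-free region -/

/-- The zero `1 - ρ` attached to `ρ` by the functional equation. -/
def Zer.dual (ρ : Zer) : Zer := ⟨1 - ρ.1, by rw [xi_one_sub]; exact ρ.2⟩

@[simp] lemma Zer.coe_dual (ρ : Zer) : (ρ.dual : ℂ) = 1 - ρ := rfl

lemma zmax_dual (ρ : Zer) : zmax ρ.dual = zmax ρ := by
  simp [zmax, max_comm]

/-- A single zero already uses up a term `1 / zmax ρ ^ 2` of the sum in `sum_mult_le`, so `|ρ|` cannot be small. -/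
lemma inv_zmax_le (ρ : Zer) : 1 / zmax ρ ^ 2 ≤ 0.0542 := by
  have h := sum_mult_le {ρ}
  simp only [Finset.sum_singleton] at h
  have h1 : 1 / zmax ρ ^ 2 ≤ mult ρ / zmax ρ ^ 2 := by
    have := one_le_mult ρ
    gcongr
  have := F_one_re_le
  linarith

lemma dual_ne (ρ : Zer) : ρ ≠ ρ.dual := by
  intro h
  have h1 := congrArg Subtype.val h
  have h2 : (ρ : ℂ) = 1 - ρ := h1
  have h3 : (ρ : ℂ) = 1 / 2 := by linear_combination h2 / 2
  have := inv_zmax_le ρ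
  rw [zmax, ← h2, max_self, h3] at this
  norm_num at this

/-- Both `ρ` and `1 - ρ` occur in the sum in `sum_mult_le`, whence `2 / zmax ρ ^ 2 ≤ 0.0542`. -/
lemma six_le_zmax (ρ : Zer) : 6 ≤ zmax ρ := by
  have h := sum_mult_le {ρ, ρ.dual}
  rw [Finset.sum_pair (dual_ne ρ), zmax_dual] at h
  have hz := zmax_pos ρ
  have h1 : ∀ ρ' : Zer, 1 / zmax ρ ^ 2 ≤ mult ρ' / zmax ρ ^ 2 := by
    intro ρ'
    have := one_le_mult ρ'
    gcongr
  have := F_one_re_le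
  have h2 : 2 * (1 / zmax ρ ^ 2) ≤ 0.0542 := by linarith [h1 ρ, h1 ρ.dual]
  by_contra hc
  push Not at hc
  have : zmax ρ ^ 2 ≤ 36 := by nlinarith
  have : 1 / 36 ≤ 1 / zmax ρ ^ 2 := one_div_le_one_div_of_le (by positivity) this
  linarith

/-- The distance of the pair `{ρ, 1 - ρ}` from the boundary of the critical strip. -/
noncomputable def gap (ρ : Zer) : ℝ := min (ρ : ℂ).re (1 - (ρ : ℂ).re)

lemma gap_pos (ρ : Zer) : 0 < gap ρ := lt_min ρ.re_pos (by linarith [ρ.re_lt_one])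

lemma gap_le (ρ : Zer) : gap ρ ≤ 1 / 2 := by
  rcases le_total (ρ : ℂ).re (1 / 2) with h | h
  · exact (min_le_left _ _).trans h
  · exact (min_le_right _ _).trans (by linarith)

lemma gap_dual (ρ : Zer) : gap ρ.dual = gap ρ := by
  simp [gap, min_comm]

lemma re_term_nonneg {s : ℂ} (hs : 1 < s.re) (ρ : Zer) : 0 ≤ (1 / (s - ρ)).re := by
  rw [one_div, inv_re]
  apply div_nonneg _ (normSq_nonneg _)
  simp; linarith [ρ.re_lt_one]

lemma re_term_nonneg' {s : ℂ} (hs : 1 < s.re) (ρ : Zer) : 0 ≤ (1 / (s - 1 + ρ)).re := by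
  rw [one_div, inv_re]
  apply div_nonneg _ (normSq_nonneg _)
  simp; linarith [ρ.re_pos]

lemma zterm_re (s : ℂ) (ρ : Zer) :
    (zterm s ρ).re = mult ρ * ((1 / (s - ρ)).re + (1 / (s - 1 + ρ)).re) := by
  rw [zterm, re_ofReal_mul, add_re]

lemma zterm_re_nonneg {s : ℂ} (hs : 1 < s.re) (ρ : Zer) : 0 ≤ (zterm s ρ).re := by
  rw [zterm_re]
  exact mul_nonneg (mult_pos ρ).le (add_nonneg (re_term_nonneg hs ρ) (re_term_nonneg' hs ρ))

lemma sum_zterm_re_le {s : ℂ} (hs : 1 < s.re) (u : Finset Zer) :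
    ∑ ρ ∈ u, (zterm s ρ).re ≤ 2 * (F s).re := by
  have h := Complex.hasSum_re (hasSum_zterm (xi_ne_zero_of_one_le_re hs.le))
  have := sum_le_hasSum u (fun ρ _ => zterm_re_nonneg hs ρ) h
  simpa using this

lemma F_re_nonneg {s : ℂ} (hs : 1 < s.re) : 0 ≤ (F s).re := by
  have := sum_zterm_re_le hs ∅
  simp at this
  linarith

/-- All terms of the partial fractions of `F` have nonnegative real part in `Re s > 1`, so a single pole bounds
`Re F` from below. -/
lemma F_re_ge {s : ℂ} (hs : 1 < s.re) (ρ : Zer) : (1 / (s - ρ)).re ≤ (F s).re := by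
  have h := sum_zterm_re_le hs {ρ, ρ.dual}
  rw [Finset.sum_pair (dual_ne ρ), zterm_re, zterm_re] at h
  have e : s - 1 + (ρ.dual : ℂ) = s - ρ := by simp
  rw [e] at h
  have h1 := re_term_nonneg hs ρ
  have h2 := re_term_nonneg' hs ρ
  have h3 := re_term_nonneg hs ρ.dual
  nlinarith [one_le_mult ρ, one_le_mult ρ.dual]

open ArithmeticFunction in
lemma hasSum_logDeriv_zeta {s : ℂ} (hs : 1 < s.re) :
    HasSum (fun n => (LSeries.term (fun n => (vonMangoldt n : ℂ)) s n)) (-logDeriv riemannZeta s) := by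
  have h := (LSeriesSummable_vonMangoldt hs).hasSum
  have h2 := LSeries_vonMangoldt_eq_deriv_riemannZeta_div hs
  rw [logDeriv_apply, ← neg_div, ← h2]
  exact h

open ArithmeticFunction in
lemma term_re (σ t : ℝ) {n : ℕ} (hn : n ≠ 0) :
    (LSeries.term (fun n => (vonMangoldt n : ℂ)) (σ + t * I) n).re
      = vonMangoldt n * (n : ℝ) ^ (-σ) * Real.cos (t * Real.log n) := by
  have hn' : (0:ℝ) < n := by exact_mod_cast Nat.pos_of_ne_zero hn
  have hnc : (n : ℂ) ≠ 0 := by exact_mod_cast hn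
  rw [LSeries.term_of_ne_zero hn, div_eq_mul_inv, re_ofReal_mul, ← cpow_neg,
    cpow_def_of_ne_zero hnc, exp_re, ← Complex.natCast_log, Real.rpow_def_of_pos hn']
  simp only [mul_re, mul_im, neg_re, neg_im, add_re, add_im, ofReal_re, ofReal_im, I_re, I_im]
  rw [show Real.log n * -(σ + (t * 0 - 0 * 1)) - 0 * -(0 + (t * 1 + 0 * 0)) = Real.log n * -σ by ring,
    show Real.log n * -(0 + (t * 1 + 0 * 0)) + 0 * -(σ + (t * 0 - 0 * 1)) = -(t * Real.log n) by ring,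
    Real.cos_neg]
  ring

/-- From `3 + 4 cos θ + cos 2θ = 2 (1 + cos θ)² ≥ 0`. -/
lemma three_four_one {σ : ℝ} (hσ : 1 < σ) (t : ℝ) :
    3 * (logDeriv riemannZeta σ).re + 4 * (logDeriv riemannZeta (σ + t * I)).re
      + (logDeriv riemannZeta (σ + (2 * t : ℝ) * I)).re ≤ 0 := by
  have h0 := Complex.hasSum_re (hasSum_logDeriv_zeta (s := σ + (0:ℝ) * I) (by simpa using hσ))
  have h1 := Complex.hasSum_re (hasSum_logDeriv_zeta (s := σ + t * I) (by simpa using hσ))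
  have h2 := Complex.hasSum_re (hasSum_logDeriv_zeta (s := σ + (2 * t : ℝ) * I) (by simpa using hσ))
  have h := ((h0.mul_left 3).add (h1.mul_left 4)).add h2
  have := h.nonneg fun n => ?_
  · simp at this ⊢
    linarith
  · rcases eq_or_ne n 0 with rfl | hn
    · simp
    rw [term_re _ _ hn, term_re _ _ hn, term_re _ _ hn]
    have : 0 ≤ ArithmeticFunction.vonMangoldt n * (n : ℝ) ^ (-σ) :=
      mul_nonneg ArithmeticFunction.vonMangoldt_nonneg (by positivity)
    rw [show 2 * t * Real.log n = 2 * (t * Real.log n) by ring, Real.cos_two_mul]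
    simp only [zero_mul, Real.cos_zero]
    nlinarith [mul_nonneg this (sq_nonneg (1 + Real.cos (t * Real.log n)))]

lemma logDeriv_zeta_re_nonpos {σ : ℝ} (hσ : 1 < σ) : (logDeriv riemannZeta σ).re ≤ 0 := by
  have := three_four_one hσ 0
  simp at this
  linarith

lemma logDeriv_zeta_re {s : ℂ} (hs : 1 < s.re) : (logDeriv riemannZeta s).re =
    (F s).re - (1 / (s - 1)).re + Real.log Real.pi / 2 - (digamma (s / 2 + 1)).re / 2 := by
  rw [F_eq hs]
  have : ∀ z : ℂ, (z / 2).re = z.re / 2 := fun z => by simp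
  simp only [add_re, sub_re, this, ofReal_re]
  ring

/-- Classical zero-free region, from `3 + 4 cos θ + cos 2θ ≥ 0` at the abscissa `1 + 6 gap ρ`. -/
lemma inv_gap_le_aux (ρ : Zer) (hβ : 1 / 2 ≤ (ρ : ℂ).re) :
    1 / gap ρ ≤ 35 * Real.log (zmax ρ) + 4.8 := by
  have hgap : gap ρ = 1 - (ρ : ℂ).re := min_eq_right (by linarith)
  have hg0 := gap_pos ρ
  have hg1 := gap_le ρ
  have hr6 := six_le_zmax ρ
  set δ := gap ρ with hδ
  set β := (ρ : ℂ).re with hβd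
  set t := (ρ : ℂ).im with ht
  set r := zmax ρ with hr
  -- at distance `6 δ` from `1` and `7 δ` from `ρ`, one has `4 / 7 - 3 / 6 = 1 / 14 > 0`
  set σ := 1 + 6 * δ with hσ
  have hσ1 : 1 < σ := by linarith
  have hβδ : β = 1 - δ := by linarith
  have hρ : (ρ : ℂ) = β + t * I := (Complex.re_add_im _).symm
  have hsq : ‖(ρ : ℂ)‖ ^ 2 = β ^ 2 + t ^ 2 := by
    rw [← Complex.normSq_eq_norm_sq, normSq_apply]; ring
  have hsq' : ‖1 - (ρ : ℂ)‖ ^ 2 = (1 - β) ^ 2 + t ^ 2 := by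
    rw [← Complex.normSq_eq_norm_sq, normSq_apply]; simp; ring
  have hrn : r = ‖(ρ : ℂ)‖ := by
    refine max_eq_left ?_
    refine abs_le_of_sq_le_sq' ?_ (norm_nonneg _) |>.2
    rw [hsq, hsq']; nlinarith
  have ht35 : 35 ≤ t ^ 2 := by
    have : 36 ≤ r ^ 2 := by nlinarith
    rw [hrn, hsq] at this
    nlinarith
  have h := three_four_one hσ1 t
  have hs0 : (1:ℝ) < (σ : ℂ).re := by simpa using hσ1
  have hs1 : (1:ℝ) < (σ + t * I : ℂ).re := by simpa using hσ1
  have hs2 : (1:ℝ) < (σ + (2 * t : ℝ) * I : ℂ).re := by simpa using hσ1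
  rw [logDeriv_zeta_re hs0, logDeriv_zeta_re hs1, logDeriv_zeta_re hs2] at h
  have f0 := F_re_nonneg hs0
  have f1 := F_re_ge hs1 ρ
  have f2 := F_re_nonneg hs2
  have e1 : (1 / ((σ + t * I : ℂ) - ρ)).re = 1 / (7 * δ) := by
    rw [hρ, show (σ + t * I : ℂ) - (β + t * I) = ((7 * δ : ℝ) : ℂ) by
      rw [hσ, hβδ]; push_cast; ring, ← ofReal_one, ← ofReal_div, ofReal_re]
  have p0 : (1 / ((σ : ℂ) - 1)).re = 1 / (6 * δ) := by
    rw [show (σ : ℂ) - 1 = ((6 * δ : ℝ) : ℂ) by rw [hσ]; push_cast; ring, ← ofReal_one,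
      ← ofReal_div, ofReal_re]
  have pt : ∀ t' : ℝ, 35 ≤ t' ^ 2 → (1 / ((σ + t' * I : ℂ) - 1)).re ≤ 3 / t' ^ 2 := by
    intro t' ht'
    rw [one_div, inv_re, normSq_apply]
    simp only [sub_re, add_re, ofReal_re, mul_re, I_re, mul_zero, ofReal_im, I_im, mul_one, sub_self,
      add_zero, one_re, sub_im, add_im, mul_im, zero_add, one_im, sub_zero]
    have : σ - 1 = 6 * δ := by rw [hσ]; ring
    rw [this]
    apply div_le_div₀ (by norm_num) (by linarith) (by linarith) (by nlinarith)
  have p1 := pt t ht35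
  have p2 := pt (2 * t) (by nlinarith)
  have q1 : 3 / t ^ 2 ≤ 3 / 35 := by gcongr
  have q2 : 3 / (2 * t) ^ 2 ≤ 3 / 140 := by
    apply div_le_div_of_nonneg_left (by norm_num) (by norm_num) (by nlinarith)
  have d0 : (digamma ((σ : ℂ) / 2 + 1)).re ≤ 1 := by
    have : (σ : ℂ) / 2 + 1 = ((σ / 2 + 1 : ℝ) : ℂ) := by push_cast; ring
    rw [this, digamma_ofReal (by linarith), ofReal_re]
    exact (rdig_mono (by simp; linarith) (by simp) (by linarith)).trans rdig_three_le
  have d1 : (digamma ((σ + t * I : ℂ) / 2 + 1)).re ≤ Real.log r + 0.125 + 1 := by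
    refine (digamma_re_le (by simp; linarith)).trans ?_
    have hn : ‖(σ + t * I : ℂ) / 2‖ ≤ (r + 3.5) / 2 := by
      rw [norm_div]
      have : ‖(σ + t * I : ℂ)‖ ≤ ‖(ρ : ℂ)‖ + ‖((7 * δ : ℝ) : ℂ)‖ := by
        refine le_of_eq_of_le (congrArg _ ?_) (norm_add_le _ _)
        rw [hρ, hσ, hβδ]; push_cast; ring
      rw [norm_real, Real.norm_of_nonneg (by linarith)] at this
      have h2 : ‖(2:ℂ)‖ = 2 := by simp
      rw [h2]
      linarith
    have hl : Real.log (‖(σ + t * I : ℂ) / 2‖ + 2) ≤ Real.log (r * 1.125) :=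
      Real.log_le_log (by positivity) (by linarith)
    rw [Real.log_mul (by linarith) (by norm_num)] at hl
    have := Real.log_le_sub_one_of_pos (show (0:ℝ) < 1.125 by norm_num)
    linarith
  have d2 : (digamma ((σ + (2 * t : ℝ) * I : ℂ) / 2 + 1)).re ≤ Real.log r + 0.6 + 1 := by
    refine (digamma_re_le (by simp; linarith)).trans ?_
    have hn : ‖(σ + (2 * t : ℝ) * I : ℂ) / 2‖ ≤ (2 * r + 3) / 2 := by
      rw [norm_div]
      have : ‖(σ + (2 * t : ℝ) * I : ℂ)‖ ≤ ‖(2 * ρ : ℂ)‖ + ‖((-1 + 8 * δ : ℝ) : ℂ)‖ := by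
        refine le_of_eq_of_le (congrArg _ ?_) (norm_add_le _ _)
        rw [hρ, hσ, hβδ]; push_cast; ring
      rw [norm_real, Real.norm_eq_abs, norm_mul] at this
      have h3 : |-1 + 8 * δ| ≤ 3 := abs_le.mpr ⟨by linarith, by linarith⟩
      have h2 : ‖(2:ℂ)‖ = 2 := by simp
      rw [h2] at this ⊢
      linarith
    have hl : Real.log (‖(σ + (2 * t : ℝ) * I : ℂ) / 2‖ + 2) ≤ Real.log (r * 1.6) :=
      Real.log_le_log (by positivity) (by linarith)
    rw [Real.log_mul (by linarith) (by norm_num)] at hl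
    have := Real.log_le_sub_one_of_pos (show (0:ℝ) < 1.6 by norm_num)
    linarith
  have hpi := log_pi_ge
  rw [e1] at f1
  rw [p0] at h
  have hid : 4 * (1 / (7 * δ)) - 3 * (1 / (6 * δ)) = (1 / δ) / 14 := by field_simp; norm_num
  linarith

lemma inv_gap_le (ρ : Zer) : 1 / gap ρ ≤ 35 * Real.log (zmax ρ) + 4.8 := by
  rcases le_total (1 / 2) (ρ : ℂ).re with h | h
  · exact inv_gap_le_aux ρ h
  · have := inv_gap_le_aux ρ.dual (by simp; linarith)
    rwa [gap_dual, zmax_dual] at this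

/-! ### Sums over the zeros -/

lemma log_one_add_three_mul {u : ℝ} (h0 : 0 ≤ u) (h1 : u ≤ 1) :
    u * Real.log 4 ≤ Real.log (1 + 3 * u) := by
  have h := strictConcaveOn_log_Ioi.concaveOn.2 (x := 1) (y := 4) (by simp) (by simp)
    (show 0 ≤ 1 - u by linarith) h0 (by ring)
  simp only [smul_eq_mul, Real.log_one, mul_zero, zero_add] at h
  rwa [show (1 - u) * 1 + u * 4 = 1 + 3 * u by ring] at h

/-- One step of the dyadic telescoping `log (1 + r²/σ²)` along `σ ↦ 2σ`. -/
lemma log_step {r σ : ℝ} (hσ : 0 < σ) :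
    Real.log (1 + r ^ 2 / σ ^ 2) - Real.log (1 + r ^ 2 / (2 * σ) ^ 2)
      ≤ Real.log 4 * (r ^ 2 * (1 / (σ ^ 2 + r ^ 2))) := by
  set q := r ^ 2 / σ ^ 2 with hq
  have hq0 : 0 ≤ q := by positivity
  have hq' : r ^ 2 / (2 * σ) ^ 2 = q / 4 := by rw [hq]; field_simp; norm_num
  have e1 : r ^ 2 * (1 / (σ ^ 2 + r ^ 2)) = 1 - 1 / (1 + q) := by rw [hq]; field_simp; ring
  rw [hq', e1]
  have h := log_one_add_three_mul (u := 1 / (1 + q)) (by positivity)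
    (by rw [div_le_one (by linarith)]; linarith)
  have e2 : 1 + 3 * (1 / (1 + q)) = 4 * (1 + q / 4) / (1 + q) := by field_simp; ring
  rw [e2, Real.log_div (by positivity) (by positivity), Real.log_mul (by norm_num) (by positivity)] at h
  linarith

/-- At `σ > 1` the pair `ρ, 1 - ρ` contributes at least a Poisson kernel of width `σ` at height `zmax ρ`. -/
lemma pair_re_ge {σ : ℝ} (hσ : 1 < σ) (ρ : Zer) :
    mult ρ * ((2 * σ - 1) / (σ ^ 2 + zmax ρ ^ 2)) ≤ (zterm σ ρ).re := by
  rw [zterm_re]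
  refine mul_le_mul_of_nonneg_left ?_ (mult_pos ρ).le
  have hβ0 := ρ.re_pos
  have hβ1 := ρ.re_lt_one
  have hn : (ρ : ℂ).im ^ 2 ≤ zmax ρ ^ 2 := by
    refine sq_le_sq' ?_ ?_
    · have := (abs_le.mp ((abs_im_le_norm (ρ : ℂ)).trans (le_max_left _ ‖1 - (ρ : ℂ)‖))).1
      exact this
    · exact (abs_le.mp ((abs_im_le_norm (ρ : ℂ)).trans (le_max_left _ ‖1 - (ρ : ℂ)‖))).2
  set β := (ρ : ℂ).re
  set t := (ρ : ℂ).im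
  have a1 : (1 / ((σ : ℂ) - ρ)).re = (σ - β) / ((σ - β) ^ 2 + t ^ 2) := by
    rw [one_div, inv_re, normSq_apply]; simp [β, t]; ring
  have a2 : (1 / ((σ : ℂ) - 1 + ρ)).re = (σ - 1 + β) / ((σ - 1 + β) ^ 2 + t ^ 2) := by
    rw [one_div, inv_re, normSq_apply]; simp [β, t]; ring
  rw [a1, a2]
  have b1 : (σ - β) / (σ ^ 2 + zmax ρ ^ 2) ≤ (σ - β) / ((σ - β) ^ 2 + t ^ 2) := by
    apply div_le_div_of_nonneg_left (by linarith) (by nlinarith) (by nlinarith)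
  have b2 : (σ - 1 + β) / (σ ^ 2 + zmax ρ ^ 2) ≤ (σ - 1 + β) / ((σ - 1 + β) ^ 2 + t ^ 2) := by
    apply div_le_div_of_nonneg_left (by linarith) (by nlinarith) (by nlinarith)
  have : (2 * σ - 1) / (σ ^ 2 + zmax ρ ^ 2) =
    (σ - β) / (σ ^ 2 + zmax ρ ^ 2) + (σ - 1 + β) / (σ ^ 2 + zmax ρ ^ 2) := by ring
  linarith

/-- Uses that `harmonic n - log n` decreases, evaluated at `n = 4`. -/
lemma rdig_nat_le (n : ℕ) (hn : 4 ≤ n) : rdig (n + 1) ≤ Real.log n - 2 * Real.log 2 + 1.5134 := by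
  have h := rdig_add_nat one_pos n
  rw [rdig_one, add_comm (1:ℝ) n] at h
  have hh : ∑ k ∈ Finset.range n, 1 / ((1:ℝ) + k) = (harmonic n : ℝ) := by
    rw [harmonic]; push_cast
    exact Finset.sum_congr rfl fun k _ => by rw [add_comm, one_div]
  rw [hh] at h
  have ha := Real.strictAnti_eulerMascheroniSeq'.antitone hn
  rw [Real.eulerMascheroniSeq', Real.eulerMascheroniSeq', if_neg (by omega), if_neg (by omega)] at ha
  have h4 : ((harmonic 4 : ℚ) : ℝ) = 25 / 12 := by
    have : harmonic 4 = 25 / 12 := by norm_num [harmonic, Finset.sum_range_succ]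
    rw [this]; norm_num
  have hl : Real.log ((4:ℕ):ℝ) = 2 * Real.log 2 := by
    rw [show (((4:ℕ):ℝ)) = 2 ^ 2 by norm_num, Real.log_pow]; norm_num
  rw [h4, hl] at ha
  have := gamma_ge
  linarith

/-- `F` grows like `(log σ) / 2`, so `F σ / (2 σ - 1)` is summable along `σ = 8 · 2 ^ j`. -/
lemma F_dyadic_le (j : ℕ) : (F ((8 * 2 ^ j : ℝ) : ℂ)).re / (2 * (8 * 2 ^ j) - 1) ≤
    (0.02187 + 0.02311 * j) / 2 ^ j := by
  set P : ℝ := 2 ^ j with hP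
  have hP1 : 1 ≤ P := one_le_pow₀ (by norm_num)
  have hs : (1:ℝ) < ((8 * P : ℝ) : ℂ).re := by rw [ofReal_re]; linarith
  have h := logDeriv_zeta_re hs
  have hz := logDeriv_zeta_re_nonpos (σ := 8 * P) (by linarith)
  have e1 : (1 / (((8 * P : ℝ) : ℂ) - 1)).re = 1 / (8 * P - 1) := by
    rw [← ofReal_one, ← ofReal_sub, ← ofReal_div, ofReal_re]
  have e2 : (digamma (((8 * P : ℝ) : ℂ) / 2 + 1)).re = rdig (((4 * 2 ^ j : ℕ) : ℝ) + 1) := by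
    have : ((8 * P : ℝ) : ℂ) / 2 + 1 = (((4 * 2 ^ j : ℕ) + 1 : ℝ) : ℂ) := by
      rw [hP]; push_cast; ring
    rw [this, digamma_ofReal (by positivity), ofReal_re]
  have h3 := rdig_nat_le (4 * 2 ^ j) (by have := Nat.one_le_two_pow (n := j); omega)
  have h4 : Real.log ((4 * 2 ^ j : ℕ) : ℝ) = 2 * Real.log 2 + j * Real.log 2 := by
    push_cast
    rw [Real.log_mul (by norm_num) (by positivity), Real.log_pow,
      show (4:ℝ) = 2 ^ 2 by norm_num, Real.log_pow]
    norm_num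
  rw [h4] at h3
  rw [e1, e2] at h
  have hpi := log_pi_ge
  have hl2 := Real.log_two_lt_d9
  have hj : (0:ℝ) ≤ j := Nat.cast_nonneg j
  have h5 : 1 / (8 * P - 1) ≤ 1 / 7 := by
    apply one_div_le_one_div_of_le (by norm_num); linarith
  have h6 : (j:ℝ) * Real.log 2 ≤ j * 0.6931471808 := by gcongr
  have hF : (F ((8 * P : ℝ) : ℂ)).re ≤ 0.328 + 0.3466 * j := by linarith
  have hF0 := F_re_nonneg hs
  calc (F ((8 * P : ℝ) : ℂ)).re / (2 * (8 * P) - 1) ≤ (0.328 + 0.3466 * j) / (15 * P) := by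
        apply div_le_div₀ (by positivity) hF (by positivity) (by linarith)
    _ = (0.328 / 15 + 0.3466 / 15 * j) / P := by field_simp
    _ ≤ _ := by
        gcongr <;> norm_num

lemma sum_dyadic (a b : ℝ) (ha : 0 ≤ a) (hb : 0 ≤ b) (J : ℕ) :
    ∑ j ∈ Finset.range J, (a + b * j) / 2 ^ j ≤ 2 * a + 2 * b := by
  have : ∑ j ∈ Finset.range J, (a + b * j) / 2 ^ j = 2 * a + 2 * b - (2 * a + 2 * b + 2 * b * J) / 2 ^ J := by
    induction J with
    | zero => simp
    | succ J ih =>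
      rw [Finset.sum_range_succ, ih, pow_succ]
      push_cast
      field_simp
      ring
  rw [this]
  have : 0 ≤ (2 * a + 2 * b + 2 * b * J) / 2 ^ J := by positivity
  linarith

/-- Summing the partial fractions of `F` at `σ = 8 · 2 ^ j` over `j` produces the weight `log (1 + zmax ρ ^ 2 / 64)`,
by the telescoping `log_step`; no count of zeros up to a given height is needed. -/
lemma sum_log_zmax_le (u : Finset Zer) :
    ∑ ρ ∈ u, mult ρ / zmax ρ ^ 2 * Real.log (zmax ρ) ≤ 0.24 := by
  set G : ℝ → ℝ := fun σ => ∑ ρ ∈ u, mult ρ / zmax ρ ^ 2 * Real.log (1 + zmax ρ ^ 2 / σ ^ 2) with hG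
  set H : ℝ → ℝ := fun σ => ∑ ρ ∈ u, mult ρ * (1 / (σ ^ 2 + zmax ρ ^ 2)) with hH
  have hH_le : ∀ σ : ℝ, 1 < σ → H σ ≤ 2 * ((F σ).re / (2 * σ - 1)) := by
    intro σ hσ
    have h1 := sum_zterm_re_le (s := σ) (by simpa using hσ) u
    have h2 : ∑ ρ ∈ u, mult ρ * ((2 * σ - 1) / (σ ^ 2 + zmax ρ ^ 2)) ≤ 2 * (F σ).re :=
      (Finset.sum_le_sum fun ρ _ => pair_re_ge hσ ρ).trans h1
    have h3 : ∑ ρ ∈ u, mult ρ * ((2 * σ - 1) / (σ ^ 2 + zmax ρ ^ 2)) = (2 * σ - 1) * H σ := by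
      rw [hH, Finset.mul_sum]
      exact Finset.sum_congr rfl fun ρ _ => by ring
    rw [← mul_div_assoc, le_div_iff₀ (by linarith)]
    linarith
  have hstep : ∀ σ : ℝ, 0 < σ → G σ - G (2 * σ) ≤ Real.log 4 * H σ := by
    intro σ hσ
    rw [hG, hH, ← Finset.sum_sub_distrib, Finset.mul_sum]
    refine Finset.sum_le_sum fun ρ _ => ?_
    have hz := zmax_pos ρ
    have h := mul_le_mul_of_nonneg_left (log_step (r := zmax ρ) hσ)
      (div_nonneg (mult_pos ρ).le (sq_nonneg (zmax ρ)))
    rw [mul_sub] at h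
    refine h.trans (le_of_eq ?_)
    field_simp
  have htel : ∀ J : ℕ, G 8 - G (8 * 2 ^ J) ≤
      Real.log 4 * (2 * ∑ j ∈ Finset.range J, (0.02187 + 0.02311 * (j:ℝ)) / 2 ^ j) := by
    intro J
    induction J with
    | zero => simp
    | succ J ih =>
      rw [Finset.sum_range_succ]
      have h1 := hstep (8 * 2 ^ J) (by positivity)
      have h2 := hH_le (8 * 2 ^ J) (by have : (1:ℝ) ≤ 2 ^ J := one_le_pow₀ (by norm_num)
                                       linarith)
      have h3 := F_dyadic_le J
      have e : (2:ℝ) * (8 * 2 ^ J) = 8 * 2 ^ (J + 1) := by ring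
      rw [e] at h1
      have h5 : 0 ≤ Real.log 4 := Real.log_nonneg (by norm_num)
      have h4 : Real.log 4 * H (8 * 2 ^ J) ≤ Real.log 4 * (2 * ((0.02187 + 0.02311 * (J:ℝ)) / 2 ^ J)) := by
        refine mul_le_mul_of_nonneg_left (h2.trans ?_) h5
        linarith
      linarith
  have hl4 : Real.log 4 ≤ 1.38630 := by
    rw [show (4:ℝ) = 2 ^ 2 by norm_num, Real.log_pow]
    have := Real.log_two_lt_d9
    norm_num; linarith
  have hl8 : Real.log 8 ≤ 2.0795 := by
    rw [show (8:ℝ) = 2 ^ 3 by norm_num, Real.log_pow]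
    have := Real.log_two_lt_d9
    norm_num; linarith
  have hG8 : G 8 ≤ 0.249424 := by
    have hlim : Tendsto (fun J : ℕ => G (8 * 2 ^ J)) atTop (𝓝 0) := by
      have h1 : Tendsto (fun J : ℕ => (8:ℝ) * 2 ^ J) atTop atTop :=
        (tendsto_pow_atTop_atTop_of_one_lt (by norm_num : (1:ℝ) < 2)).const_mul_atTop (by norm_num)
      have h2 : Tendsto G atTop (𝓝 (∑ ρ ∈ u, mult ρ / zmax ρ ^ 2 * Real.log (1 + 0))) := by
        refine tendsto_finsetSum _ fun ρ _ => Tendsto.const_mul _ ?_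
        have : Tendsto (fun σ : ℝ => 1 + zmax ρ ^ 2 / σ ^ 2) atTop (𝓝 (1 + 0)) :=
          ((tendsto_const_nhds).div_atTop (tendsto_pow_atTop (by norm_num))).const_add 1
        exact this.log (by norm_num)
      simp at h2
      exact h2.comp h1
    have hb : ∀ J : ℕ, G 8 - G (8 * 2 ^ J) ≤ 0.249424 := by
      intro J
      refine (htel J).trans ?_
      have h1 := sum_dyadic 0.02187 0.02311 (by norm_num) (by norm_num) J
      have h0 : 0 ≤ ∑ j ∈ Finset.range J, (0.02187 + 0.02311 * (j:ℝ)) / 2 ^ j :=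
        Finset.sum_nonneg fun j _ => by positivity
      nlinarith
    have := le_of_tendsto (hlim.const_sub (G 8)) (Eventually.of_forall hb)
    simpa using this
  have hfin : ∑ ρ ∈ u, mult ρ / zmax ρ ^ 2 * (2 * Real.log (zmax ρ) - 2 * Real.log 8) ≤ G 8 := by
    refine Finset.sum_le_sum fun ρ _ => ?_
    have hz := zmax_pos ρ
    refine mul_le_mul_of_nonneg_left ?_ (div_nonneg (mult_pos ρ).le (sq_nonneg _))
    have : Real.log (zmax ρ ^ 2 / 8 ^ 2) ≤ Real.log (1 + zmax ρ ^ 2 / 8 ^ 2) :=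
      Real.log_le_log (by positivity) (by linarith)
    rw [Real.log_div (by positivity) (by norm_num), Real.log_pow, Real.log_pow] at this
    push_cast at this
    exact this
  have hsplit : ∑ ρ ∈ u, mult ρ / zmax ρ ^ 2 * (2 * Real.log (zmax ρ) - 2 * Real.log 8) =
      2 * ∑ ρ ∈ u, mult ρ / zmax ρ ^ 2 * Real.log (zmax ρ)
        - 2 * Real.log 8 * ∑ ρ ∈ u, mult ρ / zmax ρ ^ 2 := by
    rw [Finset.mul_sum, Finset.mul_sum, ← Finset.sum_sub_distrib]
    exact Finset.sum_congr rfl fun ρ _ => by ring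
  have hm : ∑ ρ ∈ u, mult ρ / zmax ρ ^ 2 ≤ 0.0542 := by
    have := sum_mult_le u
    have := F_one_re_le
    linarith
  have hm0 : 0 ≤ ∑ ρ ∈ u, mult ρ / zmax ρ ^ 2 :=
    Finset.sum_nonneg fun ρ _ => div_nonneg (mult_pos ρ).le (sq_nonneg _)
  have : Real.log 8 * ∑ ρ ∈ u, mult ρ / zmax ρ ^ 2 ≤ 2.0795 * 0.0542 := by
    have : 0 ≤ Real.log 8 := Real.log_nonneg (by norm_num)
    gcongr
  linarith

/-- The zero-free region turns the logarithmic weight into the reciprocal distance to the edge of the strip. -/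
lemma sum_inv_gap_le (u : Finset Zer) :
    ∑ ρ ∈ u, mult ρ / zmax ρ ^ 2 * (1 / gap ρ) ≤ 8.67 := by
  have h1 : ∑ ρ ∈ u, mult ρ / zmax ρ ^ 2 * (1 / gap ρ) ≤
      ∑ ρ ∈ u, (35 * (mult ρ / zmax ρ ^ 2 * Real.log (zmax ρ)) + 4.8 * (mult ρ / zmax ρ ^ 2)) := by
    refine Finset.sum_le_sum fun ρ _ => ?_
    have := mul_le_mul_of_nonneg_left (inv_gap_le ρ)
      (div_nonneg (mult_pos ρ).le (sq_nonneg (zmax ρ)))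
    linarith
  rw [Finset.sum_add_distrib, ← Finset.mul_sum, ← Finset.mul_sum] at h1
  have := sum_log_zmax_le u
  have := sum_mult_le u
  have := F_one_re_le
  linarith

/-- The zero-free region makes the zeros at the edge of the strip contribute `O(e^u / u)`. -/
lemma sum_exp_gap_le (u : Finset Zer) {y : ℝ} (hy : 0 < y) :
    ∑ ρ ∈ u, mult ρ / zmax ρ ^ 2 * Real.exp ((1 - gap ρ) * y) ≤ 3.2 * (Real.exp y / y) := by
  have h1 : ∀ ρ ∈ u, mult ρ / zmax ρ ^ 2 * Real.exp ((1 - gap ρ) * y) ≤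
      (mult ρ / zmax ρ ^ 2 * (1 / gap ρ)) * (Real.exp y / (2.71 * y)) := by
    intro ρ _
    have hg := gap_pos ρ
    rw [mul_assoc]
    refine mul_le_mul_of_nonneg_left ?_ (div_nonneg (mult_pos ρ).le (sq_nonneg (zmax ρ)))
    have h2 : gap ρ * y * 2.71 ≤ Real.exp (gap ρ * y) := by
      have h3 := Real.add_one_le_exp (gap ρ * y - 1)
      rw [Real.exp_sub, le_div_iff₀ (Real.exp_pos _)] at h3
      have := Real.exp_one_gt_d9
      have : 0 < gap ρ * y := by positivity
      nlinarith
    have e : Real.exp ((1 - gap ρ) * y) = Real.exp y / Real.exp (gap ρ * y) := by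
      rw [← Real.exp_sub]; ring_nf
    rw [e, div_mul_div_comm, one_mul, ← mul_assoc]
    apply div_le_div_of_nonneg_left (Real.exp_pos y).le (by positivity)
    linarith
  refine (Finset.sum_le_sum h1).trans ?_
  rw [← Finset.sum_mul]
  refine (mul_le_mul_of_nonneg_right (sum_inv_gap_le u) (by positivity)).trans (le_of_lt ?_)
  rw [mul_div_assoc', mul_div_assoc', div_lt_div_iff₀ (by positivity) hy]
  have : 0 < Real.exp y * y := by positivity
  nlinarith

/-! ### Laplace transforms -/

/-- `LT f c G`: the continuous function `f` vanishes on `(-∞, 0]`, is bounded by `c e^{3u/2}` on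
`[0, ∞)`, and has Laplace transform `G` on the line `Re s = 2`. -/
structure LT (f : ℝ → ℂ) (c : ℝ) (G : ℂ → ℂ) : Prop where
  cont : Continuous f
  zero : ∀ u ≤ 0, f u = 0
  bd : ∀ u, 0 ≤ u → ‖f u‖ ≤ c * Real.exp (3 / 2 * u)
  tr : ∀ s : ℂ, s.re = 2 → ∫ u in Ioi (0:ℝ), f u * cexp (-s * u) = G s

namespace LT

variable {f g : ℝ → ℂ} {c d : ℝ} {G H : ℂ → ℂ}

lemma c_nonneg (h : LT f c G) : 0 ≤ c := by
  have := (norm_nonneg _).trans (h.bd 0 le_rfl)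
  simpa using this

lemma bd_mul (h : LT f c G) {s : ℂ} (hs : s.re = 2) {u : ℝ} (hu : 0 < u) :
    ‖f u * cexp (-s * u)‖ ≤ c * Real.exp (-(1/2) * u) := by
  rw [norm_mul, Complex.norm_exp]
  have : (-s * u).re = -2 * u := by simp [hs]
  rw [this]
  calc ‖f u‖ * Real.exp (-2 * u) ≤ c * Real.exp (3 / 2 * u) * Real.exp (-2 * u) := by
        gcongr; exact h.bd u hu.le
    _ = _ := by rw [mul_assoc, ← Real.exp_add]; ring_nf

lemma integrable_exp_half : IntegrableOn (fun u : ℝ => Real.exp (-(1/2) * u)) (Ioi 0) :=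
  exp_neg_integrableOn_Ioi 0 (by norm_num)

lemma integrable (h : LT f c G) {s : ℂ} (hs : s.re = 2) :
    IntegrableOn (fun u : ℝ => f u * cexp (-s * u)) (Ioi 0) := by
  refine Integrable.mono' (integrable_exp_half.const_mul c) ?_ ?_
  · have := h.cont
    exact Continuous.aestronglyMeasurable (by fun_prop)
  · refine (ae_restrict_iff' measurableSet_Ioi).mpr (Eventually.of_forall fun u hu => ?_)
    exact h.bd_mul hs hu

lemma add (h : LT f c G) (h' : LT g d H) : LT (fun u => f u + g u) (c + d) (fun s => G s + H s) where
  cont := h.cont.add h'.cont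
  zero u hu := by simp [h.zero u hu, h'.zero u hu]
  bd u hu := by
    have := norm_add_le (f u) (g u)
    have := h.bd u hu
    have := h'.bd u hu
    linarith
  tr s hs := by
    simp only [add_mul]
    rw [integral_add (h.integrable hs) (h'.integrable hs), h.tr s hs, h'.tr s hs]

lemma const_mul (h : LT f c G) (k : ℂ) : LT (fun u => k * f u) (‖k‖ * c) (fun s => k * G s) where
  cont := continuous_const.mul h.cont
  zero u hu := by simp [h.zero u hu]
  bd u hu := by
    rw [norm_mul, mul_assoc]
    gcongr
    exact h.bd u hu
  tr s hs := by
    simp only [mul_assoc]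
    rw [integral_const_mul, h.tr s hs]

lemma norm_le_abs (h : LT f c G) (u : ℝ) : ‖f u‖ ≤ c * Real.exp (3 / 2 * |u|) := by
  rcases le_total 0 u with hu | hu
  · rw [abs_of_nonneg hu]; exact h.bd u hu
  · rw [h.zero u hu, norm_zero]
    exact mul_nonneg h.c_nonneg (Real.exp_pos _).le

lemma congr_tr (h : LT f c G) (hG : ∀ s : ℂ, s.re = 2 → G s = H s) : LT f c H :=
  ⟨h.cont, h.zero, h.bd, fun s hs => (h.tr s hs).trans (hG s hs)⟩

/-- A series of functions with summable bounds may be transformed term by term. -/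
lemma tsum {ι : Type} [Countable ι] {f : ι → ℝ → ℂ} {c : ι → ℝ} {G : ι → ℂ → ℂ} {g : ℂ → ℂ}
    (h : ∀ i, LT (f i) (c i) (G i)) (hc : Summable c)
    (hG : ∀ s : ℂ, s.re = 2 → HasSum (fun i => G i s) (g s)) :
    LT (fun u => ∑' i, f i u) (∑' i, c i) g where
  cont := by
    refine continuous_iff_continuousAt.mpr fun u => ?_
    have hon : ContinuousOn (fun u => ∑' i, f i u) (Ioo (u - 1) (u + 1)) := by
      refine continuousOn_tsum (u := fun i => c i * Real.exp (3 / 2 * (|u| + 1)))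
        (fun i => (h i).cont.continuousOn) (hc.mul_right _) fun i v hv => ?_
      refine ((h i).norm_le_abs v).trans ?_
      have hcn := (h i).c_nonneg
      have : |v| ≤ |u| + 1 := by
        have h1 : |v - u| ≤ 1 := abs_le.mpr ⟨by linarith [hv.1], by linarith [hv.2]⟩
        have := abs_sub_abs_le_abs_sub v u
        linarith
      gcongr
    exact hon.continuousAt (Ioo_mem_nhds (by linarith) (by linarith))
  zero u hu := by simp [fun i => (h i).zero u hu]
  bd u hu := by
    have hs := hc.mul_right (Real.exp (3 / 2 * u))
    rw [← tsum_mul_right]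
    exact tsum_of_norm_bounded hs.hasSum fun i => (h i).bd u hu
  tr s hs := by
    simp only [← tsum_mul_right]
    rw [← integral_tsum_of_summable_integral_norm (fun i => (h i).integrable hs)]
    · simp only [fun i => (h i).tr s hs]
      exact (hG s hs).tsum_eq
    · refine Summable.of_nonneg_of_le (fun i => integral_nonneg fun _ => norm_nonneg _) (fun i => ?_)
        (hc.mul_right (∫ u in Ioi (0:ℝ), Real.exp (-(1/2) * u)))
      rw [← integral_const_mul]
      exact setIntegral_mono_on ((h i).integrable hs).norm (integrable_exp_half.const_mul _)
        measurableSet_Ioi fun u hu => (h i).bd_mul hs hu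

/-- Uniqueness of the Laplace transform, from Fourier inversion. -/
lemma eq_zero (h : LT f c G) (hG : ∀ s : ℂ, s.re = 2 → G s = 0) : f = 0 := by
  set g : ℝ → ℂ := fun u => f u * cexp (-2 * u) with hg
  have hgc : Continuous g := by
    have := h.cont
    fun_prop
  have hsupp : ∀ s : ℂ, ∀ u ∉ Ioi (0:ℝ), f u * cexp (-s * u) = 0 := fun s u hu => by
    rw [h.zero u (not_lt.mp hu), zero_mul]
  have hgi : Integrable g := by
    have h1 := h.integrable (s := 2) (by simp)
    refine (integrableOn_iff_integrable_of_support_subset fun u hu => ?_).mp h1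
    by_contra hn
    exact hu (hsupp 2 u hn)
  have hF : FourierTransform.fourier g = 0 := by
    funext w
    rw [Real.fourier_real_eq_integral_exp_smul]
    have h1 := h.tr (2 + (2 * Real.pi * w : ℝ) * I) (by simp)
    rw [hG _ (by simp), setIntegral_eq_integral_of_forall_compl_eq_zero
      (fun u hu => hsupp _ u hu)] at h1
    simp only [Pi.zero_apply]
    rw [← h1]
    congr 1
    funext v
    rw [hg, smul_eq_mul]
    simp only
    rw [mul_left_comm, ← Complex.exp_add]
    congr 2
    push_cast
    ring
  have h2 := hgc.fourierInv_fourier_eq hgi (by rw [hF]; exact integrable_zero _ _ _)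
  rw [hF] at h2
  have h3 : FourierTransformInv.fourierInv (0 : ℝ → ℂ) = 0 := by
    funext w
    simp [Real.fourierInv_eq]
  rw [h3] at h2
  funext u
  have h4 : g u = 0 := by rw [← h2]; rfl
  simpa [hg] using h4

end LT

lemma integral_exp_transform {s w : ℂ} (h : w.re < s.re) :
    ∫ u in Ioi (0:ℝ), cexp (w * u) * cexp (-s * u) = 1 / (s - w) := by
  have h1 := integral_exp_mul_complex_Ioi (a := w - s) (by simpa using h) 0
  simp only [ofReal_zero, mul_zero, Complex.exp_zero] at h1
  rw [show (1:ℂ) / (s - w) = -1 / (w - s) by rw [← neg_sub, div_neg, neg_div], ← h1]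
  congr 1
  funext u
  rw [← Complex.exp_add]; ring_nf

lemma integrableOn_exp_transform {s w : ℂ} (h : w.re < s.re) :
    IntegrableOn (fun u : ℝ => cexp (w * u) * cexp (-s * u)) (Ioi 0) := by
  have h1 := integrableOn_exp_mul_complex_Ioi (a := w - s) (by simpa using h) 0
  refine h1.congr_fun (fun u _ => ?_) measurableSet_Ioi
  simp only
  rw [← Complex.exp_add]; ring_nf

lemma le_exp_mul {u : ℝ} : u ≤ Real.exp (3 / 2 * u) := by
  have h := Real.add_one_le_exp (3 / 2 * u)
  rcases le_total 0 u with hu | hu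
  · linarith
  · exact hu.trans (Real.exp_pos _).le

/-- The ramp `u ↦ max u 0`, with Laplace transform `1 / s²`. -/
lemma lt_ramp : LT (fun u => ((max u 0 : ℝ) : ℂ)) 1 (fun s => 1 / s ^ 2) where
  cont := by fun_prop
  zero u hu := by simp [hu]
  bd u hu := by
    rw [norm_real, max_eq_left hu, Real.norm_of_nonneg hu, one_mul]
    exact le_exp_mul
  tr s hs := by
    have hs0 : s ≠ 0 := by rintro rfl; simp at hs
    have e : ∀ u ∈ Ioi (0:ℝ), ((max u 0 : ℝ) : ℂ) * cexp (-s * u) = u * cexp (-s * u) := by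
      intro u hu
      rw [max_eq_left (le_of_lt hu)]
    rw [setIntegral_congr_fun measurableSet_Ioi e]
    have hd : ∀ u ∈ Ici (0:ℝ), HasDerivAt (fun u : ℝ => -((u:ℂ) / s + 1 / s ^ 2) * cexp (-s * u))
        (u * cexp (-s * u)) u := by
      intro u _
      have h1 : HasDerivAt (fun u : ℝ => (u : ℂ)) 1 u := Complex.ofRealCLM.hasDerivAt
      have h2 := (((h1.div_const s).add_const (1 / s ^ 2)).neg).mul (h1.const_mul (-s)).cexp
      refine h2.congr_deriv ?_
      simp only [Pi.neg_apply]
      field_simp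
      ring
    have hint : IntegrableOn (fun u : ℝ => (u:ℂ) * cexp (-s * u)) (Ioi 0) := by
      refine Integrable.mono' LT.integrable_exp_half ?_ ?_
      · exact Continuous.aestronglyMeasurable (by fun_prop)
      · refine (ae_restrict_iff' measurableSet_Ioi).mpr (Eventually.of_forall fun u hu => ?_)
        rw [norm_mul, Complex.norm_exp, norm_real, Real.norm_of_nonneg (le_of_lt hu)]
        have : (-s * u).re = -2 * u := by simp [hs]
        rw [this]
        calc u * Real.exp (-2 * u) ≤ Real.exp (3 / 2 * u) * Real.exp (-2 * u) := by
              gcongr; exact le_exp_mul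
          _ = _ := by rw [← Real.exp_add]; ring_nf
    have hlim : Tendsto (fun u : ℝ => -((u:ℂ) / s + 1 / s ^ 2) * cexp (-s * u)) atTop (𝓝 0) := by
      rw [tendsto_zero_iff_norm_tendsto_zero]
      have hb : Tendsto (fun u : ℝ => ‖1 / s‖ * (u ^ 1 * Real.exp (-2 * u))
          + ‖1 / s ^ 2‖ * (u ^ 0 * Real.exp (-2 * u))) atTop (𝓝 0) := by
        have k : ∀ n : ℕ, Tendsto (fun u : ℝ => u ^ n * Real.exp (-2 * u)) atTop (𝓝 0) := by
          intro n
          have := Real.tendsto_pow_mul_exp_neg_atTop_nhds_zero n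
          refine squeeze_zero' ?_ ?_ this
          · filter_upwards [eventually_ge_atTop 0] with u hu
            positivity
          · filter_upwards [eventually_ge_atTop 0] with u hu
            gcongr
            linarith
        have := ((k 1).const_mul ‖1 / s‖).add ((k 0).const_mul ‖1 / s ^ 2‖)
        rwa [mul_zero, mul_zero, add_zero] at this
      refine squeeze_zero' (Eventually.of_forall fun _ => norm_nonneg _) ?_ hb
      filter_upwards [eventually_ge_atTop 0] with u hu
      rw [norm_mul, Complex.norm_exp, norm_neg]
      have : (-s * u).re = -2 * u := by simp [hs]
      rw [this]
      have h1 : ‖(u:ℂ) / s + 1 / s ^ 2‖ ≤ u * ‖1 / s‖ + ‖1 / s ^ 2‖ := by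
        refine (norm_add_le _ _).trans ?_
        rw [div_eq_mul_one_div (u:ℂ) s, norm_mul (u:ℂ), norm_real, Real.norm_of_nonneg hu]
      have := mul_le_mul_of_nonneg_right h1 (Real.exp_pos (-2 * u)).le
      linarith
    rw [integral_Ioi_of_hasDerivAt_of_tendsto' hd hint hlim]
    simp

/-- The second-order Taylor remainder of `e^{wu}`, with Laplace transform `1 / (s² (s - w))`. -/
lemma lt_exp {w : ℂ} (h0 : w ≠ 0) (h1 : w.re ≤ 1) :
    LT (fun u => if u ≤ 0 then 0 else (cexp (w * u) - 1 - w * u) / w ^ 2)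
      ((2 + ‖w‖) / ‖w‖ ^ 2) (fun s => 1 / (s ^ 2 * (s - w))) where
  cont := by
    refine Continuous.if_le (by fun_prop) (by fun_prop) continuous_id continuous_const fun u hu => ?_
    have hu : u = 0 := hu
    simp [hu]
  zero u hu := by simp [hu]
  bd u hu := by
    have hw : 0 < ‖w‖ := norm_pos_iff.mpr h0
    split_ifs with h
    · rw [norm_zero]; positivity
    rw [norm_div, norm_pow, div_mul_eq_mul_div]
    gcongr
    have a1 : ‖cexp (w * u)‖ ≤ Real.exp (3 / 2 * u) := by
      rw [Complex.norm_exp]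
      have : (w * u).re = w.re * u := by simp
      rw [this]
      gcongr
      linarith
    have a2 : (1:ℝ) ≤ Real.exp (3 / 2 * u) := Real.one_le_exp (by positivity)
    have a3 : ‖w * u‖ ≤ ‖w‖ * Real.exp (3 / 2 * u) := by
      rw [norm_mul, norm_real, Real.norm_of_nonneg hu]
      gcongr
      exact le_exp_mul
    have := norm_sub_le (cexp (w * u) - 1) (w * u)
    have := norm_sub_le (cexp (w * u)) 1
    rw [norm_one] at this
    linarith
  tr s hs := by
    have hs0 : s ≠ 0 := by rintro rfl; simp at hs
    have hsw : s - w ≠ 0 := by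
      intro h
      have := congrArg Complex.re h
      simp [hs] at this
      linarith
    have e : ∀ u ∈ Ioi (0:ℝ), (if u ≤ 0 then 0 else (cexp (w * u) - 1 - w * u) / w ^ 2) * cexp (-s * u)
        = (1 / w ^ 2) * (cexp (w * u) * cexp (-s * u) - cexp (0 * u) * cexp (-s * u)
          - w * (((max u 0 : ℝ) : ℂ) * cexp (-s * u))) := by
      intro u hu
      rw [max_eq_left (le_of_lt hu), if_neg (not_le.mpr hu), zero_mul, Complex.exp_zero]
      ring
    have i1 := integrableOn_exp_transform (s := s) (w := w) (by linarith)
    have i2 := integrableOn_exp_transform (s := s) (w := 0) (by simp [hs])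
    have i3 := (lt_ramp.integrable hs).const_mul w
    rw [setIntegral_congr_fun measurableSet_Ioi e, integral_const_mul, integral_sub (f := fun u : ℝ => cexp (w * u) * cexp (-s * u)
      - cexp (0 * u) * cexp (-s * u)) (i1.sub i2) i3, integral_sub i1 i2, integral_const_mul, integral_exp_transform (by linarith),
      integral_exp_transform (by simp [hs]), lt_ramp.tr s hs]
    field_simp
    ring

/-- The ramp starting at `l`, whose transform is `1 / s²` times `e^{-sl}`. -/
lemma lt_log {l : ℝ} (hl : 0 ≤ l) :
    LT (fun u => ((max (u - l) 0 : ℝ) : ℂ)) (Real.exp (-(3/2) * l)) (fun s => cexp (-s * l) / s ^ 2) where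
  cont := by fun_prop
  zero u hu := by
    have : u - l ≤ 0 := by linarith
    simp [this]
  bd u hu := by
    rw [norm_real, Real.norm_of_nonneg (le_max_right _ _), ← Real.exp_add]
    refine max_le (le_exp_mul.trans (le_of_eq ?_)) (Real.exp_pos _).le
    ring_nf
  tr s hs := by
    have h := lt_ramp.tr s hs
    have z0 : ∀ u ∉ Ioi (0:ℝ), ((max u 0 : ℝ) : ℂ) * cexp (-s * u) = 0 := fun u hu => by
      have hu : u ≤ 0 := not_lt.mp hu
      rw [max_eq_right hu]; simp
    have z1 : ∀ u ∉ Ioi (0:ℝ), ((max (u - l) 0 : ℝ) : ℂ) * cexp (-s * u) = 0 := fun u hu => by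
      have hu : u ≤ 0 := not_lt.mp hu
      rw [max_eq_right (by linarith)]; simp
    rw [setIntegral_eq_integral_of_forall_compl_eq_zero z0] at h
    rw [setIntegral_eq_integral_of_forall_compl_eq_zero z1]
    have e : ∀ u : ℝ, ((max (u - l) 0 : ℝ) : ℂ) * cexp (-s * u) =
        cexp (-s * l) * (((max (u - l) 0 : ℝ) : ℂ) * cexp (-s * (u - l : ℝ))) := by
      intro u
      rw [mul_left_comm, ← Complex.exp_add]
      congr 2
      push_cast; ring
    simp only [e]
    rw [integral_const_mul, integral_sub_right_eq_self (fun u : ℝ => ((max u 0 : ℝ) : ℂ) * cexp (-s * u)), h]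
    ring

/-! ### The explicit formula -/

instance : Countable Zer := by
  have h : Function.support (fun ρ : Zer => mult ρ / zmax ρ ^ 2) = univ := by
    refine eq_univ_of_forall fun ρ => ?_
    have := mult_pos ρ
    have := zmax_pos ρ
    exact (by positivity : mult ρ / zmax ρ ^ 2 ≠ 0)
  have := summable_mult.countable_support
  rw [h] at this
  exact countable_univ_iff.mp this

lemma norm_sq_coe (ρ : Zer) : ‖(ρ : ℂ)‖ ^ 2 = (ρ : ℂ).re ^ 2 + (ρ : ℂ).im ^ 2 := by
  rw [← Complex.normSq_eq_norm_sq, normSq_apply]; ring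

lemma norm_sq_one_sub (ρ : Zer) : ‖1 - (ρ : ℂ)‖ ^ 2 = (1 - (ρ : ℂ).re) ^ 2 + (ρ : ℂ).im ^ 2 := by
  rw [← Complex.normSq_eq_norm_sq, normSq_apply]; simp; ring

lemma norm_sq_ge (ρ : Zer) : 35 / 36 * zmax ρ ^ 2 ≤ ‖(ρ : ℂ)‖ ^ 2 := by
  have h6 := six_le_zmax ρ
  have h0 := ρ.re_pos
  have h1 := ρ.re_lt_one
  have e1 := norm_sq_coe ρ
  have e2 := norm_sq_one_sub ρ
  have h36 : 36 ≤ zmax ρ ^ 2 := by nlinarith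
  rcases max_choice ‖(ρ : ℂ)‖ ‖1 - (ρ : ℂ)‖ with h | h
  · have : zmax ρ = ‖(ρ : ℂ)‖ := h
    nlinarith
  · have : zmax ρ = ‖1 - (ρ : ℂ)‖ := h
    rw [← this] at e2
    nlinarith

lemma norm_sq_ge' (ρ : Zer) : 35 / 36 * zmax ρ ^ 2 ≤ ‖1 - (ρ : ℂ)‖ ^ 2 := by
  have := norm_sq_ge ρ.dual
  rwa [zmax_dual, Zer.coe_dual] at this

/-- The kernel with Laplace transform `1 / (s² (s - w))`. -/
noncomputable def ker (w : ℂ) (u : ℝ) : ℂ := if u ≤ 0 then 0 else (cexp (w * u) - 1 - w * u) / w ^ 2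

lemma lt_ker {w : ℂ} (h0 : w ≠ 0) (h1 : w.re ≤ 1) :
    LT (ker w) ((2 + ‖w‖) / ‖w‖ ^ 2) (fun s => 1 / (s ^ 2 * (s - w))) := lt_exp h0 h1

lemma ker_pair (ρ : Zer) {u : ℝ} (hu : 0 < u) : ker ρ u + ker (1 - ρ) u =
    cexp (ρ * u) / ρ ^ 2 + cexp ((1 - ρ) * u) / (1 - ρ) ^ 2 - 1 / (ρ : ℂ) ^ 2 - 1 / (1 - (ρ : ℂ)) ^ 2
      - u * (1 / (1 - (ρ : ℂ)) + 1 / ρ) := by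
  have h0 := ρ.ne_zero
  have h1 : 1 - (ρ : ℂ) ≠ 0 := sub_ne_zero.mpr ρ.ne_one.symm
  rw [ker, ker, if_neg (not_le.mpr hu), if_neg (not_le.mpr hu)]
  field_simp
  ring

/-- Combining `ρ` with `1 - ρ` cancels the terms of size `1 / |ρ|`, which makes the sum over the zeros absolutely
convergent. -/
lemma lt_pair (ρ : Zer) : LT (fun u => ker ρ u + ker (1 - ρ) u) (10 / zmax ρ ^ 2)
    (fun s => (1 / (s - ρ) + 1 / (s - 1 + ρ)) / s ^ 2) := by
  have h0 := ρ.ne_zero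
  have h1 : 1 - (ρ : ℂ) ≠ 0 := sub_ne_zero.mpr ρ.ne_one.symm
  have h := (lt_ker ρ.ne_zero ρ.re_lt_one.le).add (lt_ker h1 (by simp; exact ρ.re_pos.le))
  refine ⟨h.cont, h.zero, fun u hu => ?_, fun s hs => (h.tr s hs).trans ?_⟩
  · have hz := zmax_pos ρ
    rcases hu.eq_or_lt with rfl | hu0
    · simp [ker]; positivity
    rw [ker_pair ρ hu0]
    set E := Real.exp (3 / 2 * u)
    have hE : 1 ≤ E := Real.one_le_exp (by positivity)
    have b : ∀ w : ℂ, w.re ≤ 1 → 35 / 36 * zmax ρ ^ 2 ≤ ‖w‖ ^ 2 →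
        ‖cexp (w * u) / w ^ 2‖ ≤ 2 * E / zmax ρ ^ 2 := by
      intro w hw hw2
      rw [norm_div, norm_pow, Complex.norm_exp]
      have : (w * u).re = w.re * u := by simp
      rw [this, div_le_div_iff₀ (by nlinarith) (by positivity)]
      have : Real.exp (w.re * u) ≤ E := by
        apply Real.exp_le_exp.mpr; nlinarith
      have : Real.exp (w.re * u) * zmax ρ ^ 2 ≤ E * zmax ρ ^ 2 := by gcongr
      nlinarith
    have b2 : ∀ w : ℂ, 35 / 36 * zmax ρ ^ 2 ≤ ‖w‖ ^ 2 → ‖1 / w ^ 2‖ ≤ 2 * E / zmax ρ ^ 2 := by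
      intro w hw2
      rw [norm_div, norm_pow, norm_one, div_le_div_iff₀ (by nlinarith) (by positivity)]
      have : 1 * zmax ρ ^ 2 ≤ E * zmax ρ ^ 2 := by gcongr
      nlinarith
    have b3 : ‖(u:ℂ) * (1 / (1 - (ρ : ℂ)) + 1 / ρ)‖ ≤ 2 * E / zmax ρ ^ 2 := by
      have e : 1 / (1 - (ρ : ℂ)) + 1 / ρ = 1 / (ρ * (1 - ρ)) := by field_simp; ring
      have n0 := norm_sq_ge ρ
      have n1 := norm_sq_ge' ρ
      have p0 : 0 < ‖(ρ : ℂ)‖ := norm_pos_iff.mpr h0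
      have p1 : 0 < ‖1 - (ρ : ℂ)‖ := norm_pos_iff.mpr h1
      have hp : zmax ρ ^ 2 / 2 ≤ ‖(ρ : ℂ)‖ * ‖1 - (ρ : ℂ)‖ := by
        refine abs_le_of_sq_le_sq' ?_ (by positivity) |>.2
        have : (35 / 36 * zmax ρ ^ 2) * (35 / 36 * zmax ρ ^ 2) ≤ ‖(ρ : ℂ)‖ ^ 2 * ‖1 - (ρ : ℂ)‖ ^ 2 := by
          gcongr
        nlinarith [sq_nonneg (zmax ρ ^ 2)]
      rw [e, norm_mul, norm_div, norm_one, norm_mul, norm_real, Real.norm_of_nonneg hu, mul_one_div,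
        div_le_div_iff₀ (by positivity) (by positivity)]
      have : u ≤ E := le_exp_mul
      have : u * zmax ρ ^ 2 ≤ E * zmax ρ ^ 2 := by gcongr
      have : E * (zmax ρ ^ 2 / 2) ≤ E * (‖(ρ : ℂ)‖ * ‖1 - (ρ : ℂ)‖) := by gcongr
      nlinarith
    have c1 := b ρ ρ.re_lt_one.le (norm_sq_ge ρ)
    have c2 := b (1 - ρ) (by simp; exact ρ.re_pos.le) (norm_sq_ge' ρ)
    have c3 := b2 ρ (norm_sq_ge ρ)
    have c4 := b2 (1 - ρ) (norm_sq_ge' ρ)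
    refine (norm_sub_le _ _).trans ?_
    have := norm_sub_le (cexp (ρ * u) / (ρ:ℂ) ^ 2 + cexp ((1 - ρ) * u) / (1 - (ρ:ℂ)) ^ 2 - 1 / (ρ : ℂ) ^ 2)
      (1 / (1 - (ρ : ℂ)) ^ 2)
    have := norm_sub_le (cexp (ρ * u) / (ρ:ℂ) ^ 2 + cexp ((1 - ρ) * u) / (1 - (ρ:ℂ)) ^ 2) (1 / (ρ : ℂ) ^ 2)
    have := norm_add_le (cexp (ρ * u) / (ρ:ℂ) ^ 2) (cexp ((1 - ρ) * u) / (1 - (ρ:ℂ)) ^ 2)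
    have e : 10 / zmax ρ ^ 2 * E = 5 * (2 * E / zmax ρ ^ 2) := by ring
    rw [e]
    linarith
  · have n1 : s - ρ ≠ 0 := by
      intro h
      have := congrArg Complex.re h
      have := ρ.re_lt_one
      simp [hs] at *
      linarith
    have n2 : s - 1 + ρ ≠ 0 := by
      intro h
      have := congrArg Complex.re h
      have := ρ.re_pos
      simp [hs] at *
      linarith
    have n3 : s ≠ 0 := by rintro rfl; simp at hs
    rw [show s - (1 - (ρ:ℂ)) = s - 1 + ρ by ring]
    field_simp

/-- The contribution of the trivial zero `-2(n+1)` to the explicit formula. -/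
noncomputable def trivKer (n : ℕ) (u : ℝ) : ℂ :=
  (1 / (2 * ((n:ℂ) + 1))) * ((max u 0 : ℝ) : ℂ) + (-1) * ker (-(2 * ((n:ℂ) + 1))) u

lemma trivKer_eq (n : ℕ) {u : ℝ} (hu : 0 < u) :
    trivKer n u = (((1 - Real.exp (-(2 * (n + 1)) * u)) / (4 * ((n:ℝ) + 1) ^ 2) : ℝ) : ℂ) := by
  have h : ((n:ℂ) + 1) ≠ 0 := by exact_mod_cast n.succ_ne_zero
  rw [trivKer, ker, if_neg (not_le.mpr hu), max_eq_left hu.le]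
  push_cast
  field_simp
  ring

lemma lt_trivKer (n : ℕ) : LT (trivKer n) (1 / ((n:ℝ) + 1) ^ 2) (fun s => digTerm (s / 2) n / 2 / s ^ 2) := by
  have h : ((n:ℂ) + 1) ≠ 0 := by exact_mod_cast n.succ_ne_zero
  have hn : (0:ℝ) ≤ n := Nat.cast_nonneg n
  have h1 := (lt_ramp.const_mul (1 / (2 * ((n:ℂ) + 1)))).add
    ((lt_ker (w := -(2 * ((n:ℂ) + 1))) (by simp [h]) (by simp; linarith)).const_mul (-1))
  refine ⟨h1.cont, h1.zero, fun u hu => ?_, fun s hs => (h1.tr s hs).trans ?_⟩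
  · rcases hu.eq_or_lt with rfl | hu0
    · simp [trivKer, ker]; positivity
    rw [trivKer_eq n hu0, norm_real, Real.norm_of_nonneg, div_eq_mul_inv, mul_comm]
    · have a : 1 - Real.exp (-(2 * (n + 1)) * u) ≤ 1 := by linarith [Real.exp_pos (-(2 * (n + 1)) * u)]
      have b : (1:ℝ) ≤ Real.exp (3 / 2 * u) := Real.one_le_exp (by positivity)
      have c : (4 * ((n:ℝ) + 1) ^ 2)⁻¹ ≤ 1 / ((n:ℝ) + 1) ^ 2 := by
        rw [← one_div]
        apply one_div_le_one_div_of_le (by positivity)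
        nlinarith
      have : (0:ℝ) ≤ 1 / ((n:ℝ) + 1) ^ 2 := by positivity
      exact mul_le_mul c (a.trans b) (by
        have : Real.exp (-(2 * (n + 1)) * u) ≤ 1 := Real.exp_le_one_iff.mpr (by nlinarith)
        linarith) (by positivity)
    · have : Real.exp (-(2 * (n + 1)) * u) ≤ 1 := Real.exp_le_one_iff.mpr (by nlinarith)
      apply div_nonneg (by linarith) (by positivity)
  · have n3 : s ≠ 0 := by rintro rfl; simp at hs
    have n1 : s + 2 * ((n:ℂ) + 1) ≠ 0 := by
      intro h
      have := congrArg Complex.re h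
      simp [hs] at this
      linarith
    have n2 : (n:ℂ) + 1 + s / 2 ≠ 0 := by
      intro h
      apply n1
      linear_combination 2 * h
    have n4 : 2 * ((n:ℂ) + 1) + s ≠ 0 := by rwa [add_comm]
    rw [digTerm, sub_neg_eq_add]
    field_simp
    ring

open ArithmeticFunction in
/-- `∑ Λ(n) (u - log n)₊`, the Cesàro mean of `ψ` on the logarithmic scale. -/
noncomputable def psiOne (u : ℝ) : ℝ := ∑' n : ℕ, vonMangoldt n * max (u - Real.log n) 0

open ArithmeticFunction in
lemma term_eq (s : ℂ) (n : ℕ) : LSeries.term (fun n => (vonMangoldt n : ℂ)) s n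
      = vonMangoldt n * cexp (-s * (Real.log n : ℝ)) := by
  rcases eq_or_ne n 0 with rfl | hn
  · simp
  have hnc : (n : ℂ) ≠ 0 := by exact_mod_cast hn
  rw [LSeries.term_of_ne_zero hn, div_eq_mul_inv, ← cpow_neg,
    cpow_def_of_ne_zero hnc, ← Complex.natCast_log]
  ring_nf

open ArithmeticFunction in
/-- Termwise transformation of the Dirichlet series of `-ζ'/ζ`. -/
lemma lt_psiOne : ∃ c, LT (fun u => (psiOne u : ℂ)) c (fun s => -logDeriv riemannZeta s / s ^ 2) := by
  have h : ∀ n : ℕ, LT (fun u => (vonMangoldt n : ℂ) * ((max (u - Real.log n) 0 : ℝ) : ℂ))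
      (‖(vonMangoldt n : ℂ)‖ * Real.exp (-(3/2) * Real.log n))
      (fun s => (vonMangoldt n : ℂ) * (cexp (-s * (Real.log n : ℝ)) / s ^ 2)) := fun n =>
    (lt_log (Real.log_natCast_nonneg n)).const_mul _
  have hc : Summable fun n : ℕ => ‖(vonMangoldt n : ℂ)‖ * Real.exp (-(3/2) * Real.log n) := by
    have h1 := (LSeriesSummable_vonMangoldt (s := (3/2 : ℝ)) (by simp; norm_num)).norm
    refine h1.congr fun n => ?_
    rw [term_eq, norm_mul, Complex.norm_exp]
    congr 2
    simp [Complex.log_re]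
  have := LT.tsum h hc (g := fun s => -logDeriv riemannZeta s / s ^ 2) fun s hs => by
    have h1 := (hasSum_logDeriv_zeta (s := s) (by linarith)).div_const (s ^ 2)
    refine h1.congr_fun fun n => ?_
    rw [term_eq]
    ring
  have e : (fun u => (psiOne u : ℂ))
      = fun u => ∑' n : ℕ, (vonMangoldt n : ℂ) * ((max (u - Real.log n) 0 : ℝ) : ℂ) := by
    funext u
    rw [psiOne, ofReal_tsum]
    simp only [ofReal_mul]
  exact ⟨_, e ▸ this⟩

/-- The explicit formula for `psiOne`: both sides have the same Laplace transform by `F_eq` and the partial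
fractions `hasSum_digTerm`, `hasSum_zterm`. -/
lemma explicit_formula (u : ℝ) : (psiOne u : ℂ) = ker 1 u
    + (-(Real.log Real.pi : ℂ) / 2 - (Real.eulerMascheroniConstant : ℂ) / 2) * ((max u 0 : ℝ) : ℂ) + ∑' n, trivKer n u
    + (-1 / 2) * ∑' ρ : Zer, (mult ρ : ℂ) * (ker ρ u + ker (1 - ρ) u) := by
  obtain ⟨c, h0⟩ := lt_psiOne
  have h1 := lt_ker (w := 1) one_ne_zero (by simp)
  have h2 := lt_ramp.const_mul (-(Real.log Real.pi : ℂ) / 2 - (Real.eulerMascheroniConstant : ℂ) / 2)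
  have h3 := LT.tsum lt_trivKer summable_inv_sq
    (g := fun s => (digamma (s / 2 + 1) + Real.eulerMascheroniConstant) / 2 / s ^ 2) fun s hs => by
      have := hasSum_digTerm (z := s / 2) (by simp [hs])
      exact (this.div_const 2).div_const (s ^ 2)
  have h4 := LT.tsum (fun ρ => (lt_pair ρ).const_mul (mult ρ : ℂ))
    (by
      refine (summable_mult.mul_left 10).congr fun ρ => ?_
      rw [norm_real, Real.norm_of_nonneg (mult_pos ρ).le]; ring)
    (g := fun s => 2 * F s / s ^ 2) fun s hs => by
      have h := (hasSum_zterm (s := s) (xi_ne_zero_of_one_le_re (by linarith))).div_const (s ^ 2)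
      refine h.congr_fun fun ρ => ?_
      rw [zterm]; ring
  have h := h0.add ((((h1.add h2).add h3).add (h4.const_mul (-1 / 2))).const_mul (-1))
  have hz := h.eq_zero fun s hs => by
    have hs0 : s ≠ 0 := by rintro rfl; simp at hs
    have hs1 : s - 1 ≠ 0 := by
      intro h
      have := congrArg Complex.re h
      simp [hs] at this
      norm_num at this
    rw [F_eq (s := s) (by linarith)]
    field_simp
    ring
  have := congrFun hz u
  simp only [Pi.zero_apply] at this
  linear_combination this

/-! ### Bounds for `psiOne` -/

lemma pair_bound_aux (ρ : Zer) (hβ : 1 / 2 ≤ (ρ : ℂ).re) {u : ℝ} (hu : 0 < u) :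
    -(ker ρ u + ker (1 - ρ) u).re ≤
      (Real.exp ((1 - gap ρ) * u) + 36 / 35 * Real.exp (u / 2) + 71 / 35) / zmax ρ ^ 2
        + u * (1 / (1 - (ρ : ℂ)) + 1 / ρ).re := by
  have hz := zmax_pos ρ
  have h1 := ρ.re_lt_one
  have e1 := norm_sq_coe ρ
  have e2 := norm_sq_one_sub ρ
  have n0 : 0 < ‖(ρ : ℂ)‖ := norm_pos_iff.mpr ρ.ne_zero
  have n1 : 0 < ‖1 - (ρ : ℂ)‖ := norm_pos_iff.mpr (sub_ne_zero.mpr ρ.ne_one.symm)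
  have hzr : zmax ρ = ‖(ρ : ℂ)‖ := max_eq_left (by
    refine abs_le_of_sq_le_sq' ?_ (norm_nonneg _) |>.2
    nlinarith)
  have hg : 1 - gap ρ = (ρ : ℂ).re := by rw [gap, min_eq_right (by linarith)]; ring
  have hg' : 35 / 36 * zmax ρ ^ 2 ≤ ‖1 - (ρ : ℂ)‖ ^ 2 := norm_sq_ge' ρ
  have inv' : 1 / ‖1 - (ρ : ℂ)‖ ^ 2 ≤ 36 / 35 / zmax ρ ^ 2 := by
    rw [div_le_div_iff₀ (by positivity) (by positivity)]; linarith
  have a1 : -(Real.exp ((1 - gap ρ) * u) / zmax ρ ^ 2) ≤ (cexp (ρ * u) / (ρ : ℂ) ^ 2).re := by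
    have := (abs_le.mp (abs_re_le_norm (cexp (ρ * u) / (ρ : ℂ) ^ 2))).1
    rw [norm_div, norm_pow, Complex.norm_exp, ← hzr, re_mul_ofReal, ← hg] at this
    exact this
  have a2 : -(36 / 35 * Real.exp (u / 2) / zmax ρ ^ 2) ≤
      (cexp ((1 - ρ) * u) / (1 - (ρ : ℂ)) ^ 2).re := by
    have := (abs_le.mp (abs_re_le_norm (cexp ((1 - ρ) * u) / (1 - (ρ : ℂ)) ^ 2))).1
    rw [norm_div, norm_pow, Complex.norm_exp, re_mul_ofReal] at this
    have hx : Real.exp ((1 - (ρ : ℂ)).re * u) ≤ Real.exp (u / 2) := by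
      apply Real.exp_le_exp.mpr; simp; nlinarith
    have := mul_le_mul hx inv' (by positivity) (by positivity)
    rw [mul_one_div] at this
    calc _ = -(Real.exp (u / 2) * (36 / 35 / zmax ρ ^ 2)) := by ring
      _ ≤ _ := by linarith
  have a3 : (1 / (ρ : ℂ) ^ 2).re ≤ 1 / zmax ρ ^ 2 := by
    have := re_le_norm (1 / (ρ : ℂ) ^ 2)
    rwa [norm_div, norm_pow, norm_one, ← hzr] at this
  have a4 : (1 / (1 - (ρ : ℂ)) ^ 2).re ≤ 36 / 35 / zmax ρ ^ 2 := by
    have := re_le_norm (1 / (1 - (ρ : ℂ)) ^ 2)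
    rw [norm_div, norm_pow, norm_one] at this
    exact this.trans inv'
  rw [ker_pair ρ hu, sub_re, sub_re, sub_re, add_re, re_ofReal_mul]
  have : (Real.exp ((1 - gap ρ) * u) + 36 / 35 * Real.exp (u / 2) + 71 / 35) / zmax ρ ^ 2
    = Real.exp ((1 - gap ρ) * u) / zmax ρ ^ 2 + 36 / 35 * Real.exp (u / 2) / zmax ρ ^ 2
      + 1 / zmax ρ ^ 2 + 36 / 35 / zmax ρ ^ 2 := by ring
  linarith

/-- Of the two exponentials belonging to `ρ` and `1 - ρ`, one is at most `e^{(1 - gap ρ) u}` and the other at most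
`e^{u / 2}`. -/
lemma pair_bound (ρ : Zer) {u : ℝ} (hu : 0 < u) :
    -(ker ρ u + ker (1 - ρ) u).re ≤
      (Real.exp ((1 - gap ρ) * u) + 36 / 35 * Real.exp (u / 2) + 71 / 35) / zmax ρ ^ 2
        + u * (1 / (1 - (ρ : ℂ)) + 1 / ρ).re := by
  rcases le_total (1 / 2) (ρ : ℂ).re with h | h
  · exact pair_bound_aux ρ h hu
  · have := pair_bound_aux ρ.dual (by simp; linarith) hu
    rw [gap_dual, zmax_dual, Zer.coe_dual, sub_sub_cancel] at this
    rwa [add_comm (ker ρ u), add_comm (1 / (1 - (ρ : ℂ)))]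

lemma zterm_one_re (ρ : Zer) : (zterm 1 ρ).re = mult ρ * (1 / (1 - (ρ : ℂ)) + 1 / ρ).re := by
  rw [zterm_re, sub_self, zero_add, add_re]

/-- The zeros enter `psiOne` only through this sum. -/
lemma zero_sum_le (u : Finset Zer) {y : ℝ} (hy : 0 < y) {B : ℝ}
    (hB : ∑ ρ ∈ u, mult ρ / zmax ρ ^ 2 * Real.exp ((1 - gap ρ) * y) ≤ B) :
    ∑ ρ ∈ u, (-((mult ρ : ℂ) * (ker ρ y + ker (1 - ρ) y)).re) ≤
      B + 0.0558 * Real.exp (y / 2) + 0.11 + y * 0.0542 := by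
  have h1 : ∑ ρ ∈ u, (-((mult ρ : ℂ) * (ker ρ y + ker (1 - ρ) y)).re) ≤
      ∑ ρ ∈ u, (mult ρ / zmax ρ ^ 2 * Real.exp ((1 - gap ρ) * y)
        + (36 / 35 * Real.exp (y / 2) + 71 / 35) * (mult ρ / zmax ρ ^ 2)
        + y * (zterm 1 ρ).re) := by
    refine Finset.sum_le_sum fun ρ _ => ?_
    have := mul_le_mul_of_nonneg_left (pair_bound ρ hy) (mult_pos ρ).le
    rw [zterm_one_re, re_ofReal_mul]
    refine le_of_eq_of_le (by ring) (this.trans (le_of_eq ?_))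
    ring
  rw [Finset.sum_add_distrib, Finset.sum_add_distrib, ← Finset.mul_sum, ← Finset.mul_sum] at h1
  have h2 := sum_mult_le u
  have h3 := F_one_re_le
  have h4 : ∑ ρ ∈ u, (zterm 1 ρ).re ≤ 2 * (F 1).re := by
    have h := hasSum_zterm (s := 1) (xi_ne_zero_of_one_le_re (by simp))
    have hr := hasSum_re h
    have := sum_le_hasSum u (fun ρ _ => ?_) hr
    · simpa using this
    · rw [zterm_one_re]
      have := re_pair_ge ρ
      have := mult_pos ρ
      have : 0 ≤ 1 / zmax ρ ^ 2 := by positivity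
      nlinarith
  have e := Real.exp_pos (y / 2)
  have h5 : (36 / 35 * Real.exp (y / 2) + 71 / 35) * ∑ ρ ∈ u, mult ρ / zmax ρ ^ 2 ≤
      (36 / 35 * Real.exp (y / 2) + 71 / 35) * 0.0542 :=
    mul_le_mul_of_nonneg_left (by linarith) (by positivity)
  have h6 : y * ∑ ρ ∈ u, (zterm 1 ρ).re ≤ y * 0.0542 :=
    mul_le_mul_of_nonneg_left (by linarith) hy.le
  linarith

lemma tsum_trivKer_re_le {u : ℝ} (hu : 0 < u) : (∑' n, trivKer n u).re ≤ 0.4135 := by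
  have h := (hasSum_nat_add_iff' 1).mpr hasSum_zeta_two
  simp only [Finset.range_one, Finset.sum_singleton, Nat.cast_zero] at h
  norm_num at h
  have e : (∑' n, trivKer n u) = ((∑' n : ℕ, ((1 - Real.exp (-(2 * (n + 1)) * u)) /
      (4 * ((n:ℝ) + 1) ^ 2)) : ℝ) : ℂ) := by
    rw [ofReal_tsum]; exact tsum_congr fun n => trivKer_eq n hu
  rw [e, ofReal_re]
  have h4 := h.mul_left (1/4)
  have hle : ∀ n : ℕ, (1 - Real.exp (-(2 * (n + 1)) * u)) / (4 * ((n:ℝ) + 1) ^ 2) ≤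
      1/4 * (((n:ℝ) + 1) ^ 2)⁻¹ := fun n => by
    rw [div_le_iff₀ (by positivity)]
    field_simp
    linarith [Real.exp_pos (-(2 * ((n:ℝ) + 1) * u))]
  have hnn : ∀ n : ℕ, 0 ≤ (1 - Real.exp (-(2 * (n + 1)) * u)) / (4 * ((n:ℝ) + 1) ^ 2) := fun n => by
    have : Real.exp (-(2 * (n + 1)) * u) ≤ 1 := Real.exp_le_one_iff.mpr (by nlinarith [n.cast_nonneg (α := ℝ)])
    exact div_nonneg (by linarith) (by positivity)
  have := (Summable.of_nonneg_of_le hnn hle h4.summable).tsum_le_tsum hle h4.summable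
  rw [h4.tsum_eq] at this
  have := Real.pi_lt_d4
  nlinarith [Real.pi_pos]

/-- The explicit formula with the zeros estimated through `B`; the remaining terms are linear in `u` with
negative slope. -/
lemma psiOne_le_of {u : ℝ} (hu : 0 < u) {B : ℝ}
    (hB : ∀ v : Finset Zer, ∑ ρ ∈ v, mult ρ / zmax ρ ^ 2 * Real.exp ((1 - gap ρ) * u) ≤ B) :
    psiOne u ≤ Real.exp u + B / 2 + 0.03 * Real.exp (u / 2) := by
  have h := congrArg Complex.re (explicit_formula u)
  have hs : Summable fun ρ : Zer => (mult ρ : ℂ) * (ker ρ u + ker (1 - ρ) u) := by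
    refine Summable.of_norm_bounded (summable_mult.mul_left (10 * Real.exp (3 / 2 * u))) fun ρ => ?_
    have := mul_le_mul_of_nonneg_left ((lt_pair ρ).bd u hu.le) (mult_pos ρ).le
    rw [norm_mul, norm_real, Real.norm_of_nonneg (mult_pos ρ).le]
    refine this.trans (le_of_eq ?_)
    ring
  have hz : -(∑' ρ : Zer, (mult ρ : ℂ) * (ker ρ u + ker (1 - ρ) u)).re ≤
      B + 0.0558 * Real.exp (u / 2) + 0.11 + u * 0.0542 :=
    hasSum_le_of_sum_le (hasSum_re hs.hasSum).neg fun v => zero_sum_le v hu (hB v)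
  have hk : (ker 1 u).re = Real.exp u - 1 - u := by
    rw [ker, if_neg (not_le.mpr hu), one_mul, one_pow, div_one, sub_re, sub_re, exp_ofReal_re]; simp
  have ht := tsum_trivKer_re_le hu
  rw [ofReal_re, add_re, add_re, add_re, hk, re_mul_ofReal, max_eq_left hu.le,
    show (-1 / 2 : ℂ) = ((-1 / 2 : ℝ) : ℂ) by push_cast; ring, re_ofReal_mul] at h
  have hc : (-(Real.log Real.pi : ℂ) / 2 - (Real.eulerMascheroniConstant : ℂ) / 2).re = -Real.log Real.pi / 2 - Real.eulerMascheroniConstant / 2 := by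
    have : (-(Real.log Real.pi : ℂ) / 2 - (Real.eulerMascheroniConstant : ℂ) / 2) = ((-Real.log Real.pi / 2 - Real.eulerMascheroniConstant / 2 : ℝ) : ℂ) := by
      push_cast; ring
    rw [this, ofReal_re]
  rw [hc] at h
  have hg := gamma_ge
  have hp := log_pi_ge
  have he := Real.exp_pos (u / 2)
  have := mul_le_mul_of_nonneg_right
    (show -Real.log Real.pi / 2 - Real.eulerMascheroniConstant / 2 ≤ -0.85 by linarith) hu.le
  linarith

/-- The zeros are bounded trivially, by `e^u` times half of `∑ mult ρ / zmax ρ ^ 2 ≤ 0.0542`. -/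
lemma psiOne_le {u : ℝ} (hu : 0 < u) :
    psiOne u ≤ 1.0271 * Real.exp u + 0.03 * Real.exp (u / 2) := by
  have := psiOne_le_of hu (B := 0.0542 * Real.exp u) fun v => by
    have h1 : ∑ ρ ∈ v, mult ρ / zmax ρ ^ 2 * Real.exp ((1 - gap ρ) * u) ≤
        ∑ ρ ∈ v, mult ρ / zmax ρ ^ 2 * Real.exp u := by
      refine Finset.sum_le_sum fun ρ _ => ?_
      have := mult_pos ρ
      have := gap_pos ρ
      gcongr
      nlinarith
    rw [← Finset.sum_mul] at h1
    refine h1.trans (mul_le_mul_of_nonneg_right ?_ (Real.exp_pos u).le)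
    linarith [sum_mult_le v, F_one_re_le]
  linarith

/-- Bound that is sharp to first order, with the saving from the zero-free region. -/
lemma psiOne_le' {u : ℝ} (hu : 0 < u) :
    psiOne u ≤ Real.exp u + 1.6 * (Real.exp u / u) + 0.03 * Real.exp (u / 2) := by
  have := psiOne_le_of hu (B := 3.2 * (Real.exp u / u)) fun v => sum_exp_gap_le v hu
  linarith

/-! ### Partial summation over primes -/

lemma summable_psiOne (u : ℝ) : Summable fun n : ℕ =>
    ArithmeticFunction.vonMangoldt n * max (u - Real.log n) 0 := by
  refine summable_of_ne_finset_zero (s := Finset.range (⌊Real.exp u⌋₊ + 1)) fun n hn => ?_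
  rw [Finset.mem_range, not_lt, Nat.add_one_le_iff, Nat.floor_lt (Real.exp_pos u).le] at hn
  have : u < Real.log n := (Real.lt_log_iff_exp_lt ((Real.exp_pos u).trans hn)).mpr hn
  rw [max_eq_right (by linarith), mul_zero]

/-- Prime powers are dropped. -/
lemma prime_sum_le_psiOne (P : Finset ℕ) (hP : ∀ p ∈ P, p.Prime) (y : ℝ) :
    ∑ p ∈ P, Real.log p * max (y - Real.log p) 0 ≤ psiOne y := by
  have h := (summable_psiOne y).sum_le_tsum P fun n _ =>
    mul_nonneg ArithmeticFunction.vonMangoldt_nonneg (le_max_right _ _)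
  refine le_of_eq_of_le (Finset.sum_congr rfl fun p hp => ?_) h
  rw [ArithmeticFunction.vonMangoldt_apply_prime (hP p hp)]

/-- `eᵗ / t³`, the weight arising from partial summation. -/
noncomputable def ecube (y : ℝ) : ℝ := Real.exp y / y ^ 3

lemma hasDerivAt_ecube {y : ℝ} (hy : 0 < y) : HasDerivAt ecube (ecube y * (1 - 3 / y)) y := by
  have := (Real.hasDerivAt_exp y).div (hasDerivAt_pow 3 y) (by positivity)
  refine this.congr_deriv ?_
  rw [ecube]
  field_simp
  norm_num
  ring

lemma continuousOn_ecube {a b : ℝ} (ha : 0 < a) (hab : a ≤ b) : ContinuousOn ecube (uIcc a b) := by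
  rw [uIcc_of_le hab]
  exact fun y hy => (hasDerivAt_ecube (ha.trans_le hy.1)).continuousAt.continuousWithinAt

lemma ecube_pos {y : ℝ} (hy : 0 < y) : 0 < ecube y := by unfold ecube; positivity

/-- The derivative of `ecube` is `ecube y * (1 - 3 / y)`, and `1 - 3 / y ≥ 1 - 3 / a` on `[a, b]`. -/
lemma integral_ecube_le {a b : ℝ} (ha : 3 < a) (hab : a ≤ b) :
    ∫ y in a..b, ecube y ≤ (ecube b - ecube a) / (1 - 3 / a) := by
  have h3 : 0 < 1 - 3 / a := by
    rw [sub_pos, div_lt_one (by linarith)]; exact ha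
  have hc := continuousOn_ecube (by linarith) hab
  have hc' : ContinuousOn (fun y => ecube y * (1 - 3 / y)) (uIcc a b) := by
    refine hc.mul (continuousOn_const.sub (continuousOn_const.div continuousOn_id fun y hy => ?_))
    rw [uIcc_of_le hab] at hy
    exact (by linarith [hy.1] : (0:ℝ) < y).ne'
  rw [le_div_iff₀ h3, ← intervalIntegral.integral_mul_const]
  have h := intervalIntegral.integral_eq_sub_of_hasDerivAt (f := ecube) (a := a) (b := b)
    (fun y hy => by
      rw [uIcc_of_le hab] at hy
      exact hasDerivAt_ecube (by linarith [hy.1])) hc'.intervalIntegrable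
  rw [← h]
  refine intervalIntegral.integral_mono_on hab (hc.mul continuousOn_const).intervalIntegrable
    hc'.intervalIntegrable fun y hy => ?_
  have := ecube_pos (show 0 < y by linarith [hy.1])
  have : 3 / y ≤ 3 / a := div_le_div_of_nonneg_left (by norm_num) (by linarith) hy.1
  gcongr

lemma integral_ecube_le_const {a b M : ℝ} (ha : 0 < a) (hab : a ≤ b)
    (h : ∀ y ∈ Icc a b, ecube y ≤ M) : ∫ y in a..b, ecube y ≤ (b - a) * M := by
  have := intervalIntegral.integral_mono_on hab (continuousOn_ecube ha hab).intervalIntegrable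
    (intervalIntegrable_const (c := M) (μ := volume)) h
  simpa using this

lemma ecube_anti {a b : ℝ} (ha : 0 < a) (hab : a ≤ b) (hb : b ≤ 3) : ecube b ≤ ecube a := by
  refine antitoneOn_of_deriv_nonpos (D := Icc a b) (convex_Icc a b) ?_ ?_ ?_ ⟨le_rfl, hab⟩ ⟨hab, le_rfl⟩ hab
  · rw [← uIcc_of_le hab]; exact continuousOn_ecube ha hab
  · intro y hy
    rw [interior_Icc] at hy
    exact (hasDerivAt_ecube (ha.trans hy.1)).differentiableAt.differentiableWithinAt
  · intro y hy
    rw [interior_Icc] at hy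
    have h0 := ha.trans hy.1
    rw [(hasDerivAt_ecube h0).deriv]
    refine mul_nonpos_of_nonneg_of_nonpos (ecube_pos h0).le ?_
    rw [sub_nonpos, one_le_div h0]; linarith [hy.2]

lemma ecube_mono {a b : ℝ} (ha : 3 ≤ a) (hab : a ≤ b) : ecube a ≤ ecube b := by
  refine monotoneOn_of_deriv_nonneg (D := Icc a b) (convex_Icc a b) ?_ ?_ ?_ ⟨le_rfl, hab⟩ ⟨hab, le_rfl⟩ hab
  · rw [← uIcc_of_le hab]; exact continuousOn_ecube (by linarith) hab
  · intro y hy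
    rw [interior_Icc] at hy
    exact (hasDerivAt_ecube (by linarith [hy.1])).differentiableAt.differentiableWithinAt
  · intro y hy
    rw [interior_Icc] at hy
    have h0 : 0 < y := by linarith [hy.1]
    rw [(hasDerivAt_ecube h0).deriv]
    refine mul_nonneg (ecube_pos h0).le ?_
    rw [sub_nonneg, div_le_one h0]; linarith [hy.1]

lemma exp_nat_bounds (n : ℕ) : (2.718 : ℝ) ^ n ≤ Real.exp n ∧ Real.exp n ≤ (2.7183 : ℝ) ^ n := by
  have e : Real.exp n = Real.exp 1 ^ n := by rw [← Real.exp_nat_mul, mul_one]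
  have h1 := Real.exp_one_gt_d9
  have h2 := Real.exp_one_lt_d9
  rw [e]
  exact ⟨pow_le_pow_left₀ (by norm_num) (by linarith) n,
    pow_le_pow_left₀ (by positivity) (by linarith) n⟩

lemma ecube_nat_le (n : ℕ) : ecube n ≤ 2.7183 ^ n / (n : ℝ) ^ 3 :=
  div_le_div_of_nonneg_right (exp_nat_bounds n).2 (by positivity)

lemma ecube_nat_ge (n : ℕ) : 2.718 ^ n / (n : ℝ) ^ 3 ≤ ecube n :=
  div_le_div_of_nonneg_right (exp_nat_bounds n).1 (by positivity)

lemma integral_ecube_add {a b c : ℝ} (ha : 0 < a) (hab : a ≤ b) (hbc : b ≤ c) :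
    ∫ y in a..c, ecube y = (∫ y in a..b, ecube y) + ∫ y in b..c, ecube y :=
  (intervalIntegral.integral_add_adjacent_intervals (continuousOn_ecube ha hab).intervalIntegrable
    (continuousOn_ecube (ha.trans_le hab) hbc).intervalIntegrable).symm

lemma integral_ecube_seven : ∫ y in (Real.log 2)..7, ecube y ≤ 12.75 := by
  have l1 := Real.log_two_gt_d9
  have l2 := Real.log_two_lt_d9
  have hl : 0 < Real.log 2 := by linarith
  have h0 : ∫ y in (Real.log 2)..1, ecube y ≤ (1 - Real.log 2) * 6.01 := by
    refine integral_ecube_le_const hl (by linarith) fun y hy => ?_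
    refine (ecube_anti hl hy.1 (by linarith [hy.2])).trans ?_
    rw [ecube, Real.exp_log (by norm_num), div_le_iff₀ (by positivity)]
    have : (0.6931:ℝ) ^ 3 ≤ Real.log 2 ^ 3 := pow_le_pow_left₀ (by norm_num) (by linarith) 3
    norm_num at this ⊢
    linarith
  have dn : ∀ n : ℕ, 1 ≤ n → n ≤ 2 → ∫ y in (n:ℝ)..(n+1:ℝ), ecube y ≤ 2.7183 ^ n / (n : ℝ) ^ 3 := by
    intro n hn hn2
    have h1 : (1:ℝ) ≤ n := by exact_mod_cast hn
    have h2 : (n:ℝ) ≤ 2 := by exact_mod_cast hn2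
    have := integral_ecube_le_const (a := n) (b := n + 1) (by linarith) (by linarith) fun y hy =>
      (ecube_anti (by linarith) hy.1 (by linarith [hy.2])).trans (ecube_nat_le n)
    linarith
  have up : ∀ n : ℕ, 3 ≤ n → ∫ y in (n:ℝ)..(n+1:ℝ), ecube y ≤
      2.7183 ^ (n + 1) / ((n : ℝ) + 1) ^ 3 := by
    intro n hn
    have h1 : (3:ℝ) ≤ n := by exact_mod_cast hn
    have h2 := ecube_nat_le (n + 1)
    push_cast at h2
    have := integral_ecube_le_const (a := n) (b := n + 1) (by linarith) (by linarith) fun y hy =>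
      (ecube_mono (by linarith [hy.1]) hy.2).trans h2
    linarith
  have h1 := dn 1 le_rfl (by norm_num)
  have h2 := dn 2 (by norm_num) (by norm_num)
  have h3 := up 3 (by norm_num)
  have h4 := up 4 (by norm_num)
  have h5 := up 5 (by norm_num)
  have h6 := up 6 (by norm_num)
  norm_num at h1 h2 h3 h4 h5 h6
  rw [integral_ecube_add hl (show Real.log 2 ≤ 1 by linarith) (show (1:ℝ) ≤ 7 by norm_num),
    integral_ecube_add (a := 1) (b := 2) (by norm_num) (by norm_num) (by norm_num),
    integral_ecube_add (a := 2) (b := 3) (by norm_num) (by norm_num) (by norm_num),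
    integral_ecube_add (a := 3) (b := 4) (by norm_num) (by norm_num) (by norm_num),
    integral_ecube_add (a := 4) (b := 5) (by norm_num) (by norm_num) (by norm_num),
    integral_ecube_add (a := 5) (b := 6) (by norm_num) (by norm_num) (by norm_num)]
  linarith

lemma integral_ecube_le_four {y : ℝ} (hy : 7 ≤ y) : ∫ t in (Real.log 2)..y, ecube t ≤ 4 * ecube y := by
  have l2 := Real.log_two_lt_d9
  have hl : 0 < Real.log 2 := Real.log_pos (by norm_num)
  rw [integral_ecube_add hl (show Real.log 2 ≤ 7 by linarith) hy]
  have h1 := integral_ecube_seven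
  have h2 := integral_ecube_le (show (3:ℝ) < 7 by norm_num) hy
  have h3 := ecube_nat_ge 7
  have h4 := ecube_mono (show (3:ℝ) ≤ 7 by norm_num) hy
  norm_num at h2 h3
  linarith

lemma integral_ecube_twelve : ∫ y in (Real.log 2)..12, ecube y ≤ 1.52 * ecube 12 := by
  have l2 := Real.log_two_lt_d9
  have hl : 0 < Real.log 2 := Real.log_pos (by norm_num)
  have h1 := integral_ecube_seven
  have s7 := integral_ecube_le (show (3:ℝ) < 7 by norm_num) (show (7:ℝ) ≤ 8 by norm_num)
  have s8 := integral_ecube_le (show (3:ℝ) < 8 by norm_num) (show (8:ℝ) ≤ 9 by norm_num)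
  have s9 := integral_ecube_le (show (3:ℝ) < 9 by norm_num) (show (9:ℝ) ≤ 10 by norm_num)
  have s10 := integral_ecube_le (show (3:ℝ) < 10 by norm_num) (show (10:ℝ) ≤ 11 by norm_num)
  have s11 := integral_ecube_le (show (3:ℝ) < 11 by norm_num) (show (11:ℝ) ≤ 12 by norm_num)
  have u7 := ecube_nat_ge 7
  have u8 := ecube_nat_le 8
  have u9 := ecube_nat_le 9
  have u10 := ecube_nat_le 10
  have u11 := ecube_nat_le 11
  have v11 := ecube_nat_ge 11
  have v12 := ecube_nat_ge 12
  norm_num at s7 s8 s9 s10 s11 u7 u8 u9 u10 u11 v11 v12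
  rw [integral_ecube_add hl (show Real.log 2 ≤ 7 by linarith) (show (7:ℝ) ≤ 12 by norm_num),
    integral_ecube_add (a := 7) (b := 8) (by norm_num) (by norm_num) (by norm_num),
    integral_ecube_add (a := 8) (b := 9) (by norm_num) (by norm_num) (by norm_num),
    integral_ecube_add (a := 9) (b := 10) (by norm_num) (by norm_num) (by norm_num),
    integral_ecube_add (a := 10) (b := 11) (by norm_num) (by norm_num) (by norm_num)]
  linarith

lemma integral_ecube_le' {y : ℝ} (hy : 12 ≤ y) : ∫ t in (Real.log 2)..y, ecube t ≤ 1.52 * ecube y := by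
  have l2 := Real.log_two_lt_d9
  have hl : 0 < Real.log 2 := Real.log_pos (by norm_num)
  rw [integral_ecube_add hl (show Real.log 2 ≤ 12 by linarith) hy]
  have h1 := integral_ecube_twelve
  have h2 := integral_ecube_le (show (3:ℝ) < 12 by norm_num) hy
  have h4 := ecube_mono (show (3:ℝ) ≤ 12 by norm_num) hy
  norm_num at h2
  linarith

lemma integral_ecube_le_of_forty {y : ℝ} (hy : 40 ≤ y) :
    ∫ t in (Real.log 2)..y, ecube t ≤ 1.3 * ecube y := by
  have l2 := Real.log_two_lt_d9
  have hl : 0 < Real.log 2 := Real.log_pos (by norm_num)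
  rw [integral_ecube_add hl (show Real.log 2 ≤ 20 by linarith) (show 20 ≤ y by linarith)]
  have h1 := integral_ecube_le' (show (12:ℝ) ≤ 20 by norm_num)
  have h2 := integral_ecube_le (show (3:ℝ) < 20 by norm_num) (show 20 ≤ y by linarith)
  have h4 := ecube_mono (show (3:ℝ) ≤ 40 by norm_num) hy
  have h5 := ecube_nat_le 20
  have h6 := ecube_nat_ge 40
  norm_num at h2 h5 h6
  linarith

lemma integral_weight {v L : ℝ} (hv : Real.log 2 ≤ v) (hvL : v ≤ L) :
    ∫ y in (Real.log 2)..L, 2 * max (y - v) 0 / y ^ 3 = 1 / v - 2 / L + v / L ^ 2 := by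
  have hl : 0 < Real.log 2 := Real.log_pos (by norm_num)
  have hc : ∀ a b : ℝ, 0 < a → a ≤ b →
      IntervalIntegrable (fun y => 2 * max (y - v) 0 / y ^ 3) volume a b := by
    intro a b ha hab
    refine ContinuousOn.intervalIntegrable ?_
    rw [uIcc_of_le hab]
    refine ContinuousOn.div (by fun_prop) (by fun_prop) fun y hy => ?_
    have := ha.trans_le hy.1
    positivity
  have hv0 := hl.trans_le hv
  rw [← intervalIntegral.integral_add_adjacent_intervals (hc _ v hl hv) (hc v L hv0 hvL)]
  have h1 : ∫ y in (Real.log 2)..v, 2 * max (y - v) 0 / y ^ 3 = 0 := by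
    rw [intervalIntegral.integral_congr (g := fun _ => 0)]
    · simp
    · intro y hy
      rw [uIcc_of_le hv] at hy
      simp only
      rw [max_eq_right (by linarith [hy.2])]; simp
  have h2 : ∫ y in v..L, 2 * max (y - v) 0 / y ^ 3 = (-2 / L + v / L ^ 2) - (-2 / v + v / v ^ 2) := by
    refine intervalIntegral.integral_eq_sub_of_hasDerivAt (f := fun y => -2 / y + v / y ^ 2) ?_ (hc v L hv0 hvL)
    intro y hy
    rw [uIcc_of_le hvL] at hy
    have hy0 := hv0.trans_le hy.1
    rw [max_eq_left (by linarith [hy.1])]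
    have d1 := (hasDerivAt_const y (-2 : ℝ)).div (hasDerivAt_id y) hy0.ne'
    have d2 := (hasDerivAt_const y v).div (hasDerivAt_pow 2 y) (by positivity)
    refine (d1.add d2).congr_deriv ?_
    simp only [id]
    field_simp
    norm_num
    ring
  have hL0 := hv0.trans_le hvL
  rw [h1, h2]
  field_simp
  ring

/-- Partial summation, in the exact form
`1 / v - 1 / L = (L - v) / L² + ∫_v^L 2 (y - v) / y³ dy`. -/
lemma weight_eq {v L : ℝ} (hv : Real.log 2 ≤ v) (hL : Real.log 2 ≤ L) :
    max (1 - v / L) 0 ≤ v * max (L - v) 0 / L ^ 2 +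
      ∫ y in (Real.log 2)..L, 2 * (v * max (y - v) 0) / y ^ 3 := by
  have hl : 0 < Real.log 2 := Real.log_pos (by norm_num)
  have hv0 := hl.trans_le hv
  have hL0 := hl.trans_le hL
  rcases le_total v L with h | h
  · have e : ∀ y : ℝ, 2 * (v * max (y - v) 0) / y ^ 3 = v * (2 * max (y - v) 0 / y ^ 3) := fun y => by ring
    simp only [e]
    rw [intervalIntegral.integral_const_mul, integral_weight hv h,
      max_eq_left (a := L - v) (by linarith),
      max_eq_left (by rw [sub_nonneg, div_le_one hL0]; exact h)]
    refine le_of_eq ?_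
    field_simp
    ring
  · rw [max_eq_right (by rw [sub_nonpos, one_le_div hL0]; exact h)]
    refine add_nonneg (by positivity) (intervalIntegral.integral_nonneg hL fun y hy => ?_)
    have := hl.trans_le hy.1
    positivity

/-- A bound valid from `log 2` on, for use inside integrals. -/
lemma psiOne_le_crude {y : ℝ} (hy : Real.log 2 ≤ y) : psiOne y ≤ 1.05 * Real.exp y := by
  have hl : 0 < Real.log 2 := Real.log_pos (by norm_num)
  have h := psiOne_le (hl.trans_le hy)
  have e : Real.exp y = Real.exp (y / 2) * Real.exp (y / 2) := by rw [← Real.exp_add]; ring_nf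
  have h1 : Real.exp (Real.log 2 / 2) ≤ Real.exp (y / 2) := Real.exp_le_exp.mpr (by linarith)
  have h2 : Real.exp (Real.log 2 / 2) * Real.exp (Real.log 2 / 2) = 2 := by
    rw [← Real.exp_add, add_halves, Real.exp_log (by norm_num)]
  have h3 : 1.4 ≤ Real.exp (Real.log 2 / 2) := by nlinarith [Real.exp_pos (Real.log 2 / 2)]
  nlinarith

/-- Partial summation: `weight_eq` summed over the primes in `P`, followed by `psiOne_le_crude` under the integral. -/
lemma prime_weight_le (P : Finset ℕ) (hP : ∀ p ∈ P, p.Prime) {L : ℝ} (hL : Real.log 2 ≤ L) :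
    ∑ p ∈ P, max (1 - Real.log p / L) 0 ≤ psiOne L / L ^ 2 +
      2.1 * ∫ y in (Real.log 2)..L, ecube y := by
  have hl : 0 < Real.log 2 := Real.log_pos (by norm_num)
  have hlp : ∀ p ∈ P, Real.log 2 ≤ Real.log p := fun p hp =>
    Real.log_le_log (by norm_num) (by exact_mod_cast (hP p hp).two_le)
  have hi : ∀ p ∈ P, IntervalIntegrable
      (fun y => 2 * (Real.log p * max (y - Real.log p) 0) / y ^ 3) volume (Real.log 2) L := by
    intro p _
    refine ContinuousOn.intervalIntegrable ?_
    rw [uIcc_of_le hL]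
    refine ContinuousOn.div (by fun_prop) (by fun_prop) fun y hy => ?_
    have := hl.trans_le hy.1
    positivity
  have h1 : ∑ p ∈ P, max (1 - Real.log p / L) 0 ≤
      ∑ p ∈ P, (Real.log p * max (L - Real.log p) 0 / L ^ 2 +
        ∫ y in (Real.log 2)..L, 2 * (Real.log p * max (y - Real.log p) 0) / y ^ 3) :=
    Finset.sum_le_sum fun p hp => weight_eq (hlp p hp) hL
  rw [Finset.sum_add_distrib, ← Finset.sum_div, ← intervalIntegral.integral_finsetSum hi] at h1
  refine h1.trans (add_le_add (div_le_div_of_nonneg_right (prime_sum_le_psiOne P hP L)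
    (sq_nonneg L)) ?_)
  rw [← intervalIntegral.integral_const_mul]
  refine intervalIntegral.integral_mono_on hL (by have := IntervalIntegrable.sum P hi; rwa [Finset.sum_fn] at this)
    (continuousOn_const.mul (continuousOn_ecube hl hL)).intervalIntegrable fun y hy => ?_
  have hy0 := hl.trans_le hy.1
  rw [← Finset.sum_div, ← Finset.mul_sum, ecube, ← mul_div_assoc]
  have := prime_sum_le_psiOne P hP y
  have := psiOne_le_crude hy.1
  exact div_le_div_of_nonneg_right (by linarith) (by positivity)

/-! ### The case `log log n ≥ 12` -/

/-- Apart from `2` and `3` all primes lie in two residue classes modulo `6`. -/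
lemma card_le_of_log_le (P : Finset ℕ) (hP : ∀ p ∈ P, p.Prime) {y : ℝ} (hy : 2 ≤ y) :
    (((P.filter fun p : ℕ => Real.log p ≤ y).card : ℕ) : ℝ) ≤ (Real.exp y + 9) / 3 := by
  have h7 : (6:ℝ) ≤ Real.exp y := by
    have h1 : Real.exp 2 ≤ Real.exp y := Real.exp_le_exp.mpr hy
    have h2 := (exp_nat_bounds 2).1
    norm_num at h2
    linarith
  obtain ⟨m, hm⟩ : ∃ m, ⌊Real.exp y⌋₊ = 6 + m :=
    Nat.exists_eq_add_of_le (Nat.le_floor (by exact_mod_cast h7))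
  have hsub : P.filter (fun p : ℕ => Real.log p ≤ y) ⊆ (Finset.range (7 + m)).filter Nat.Prime := by
    intro p hp
    rw [Finset.mem_filter] at hp ⊢
    have hpp := hP p hp.1
    refine ⟨?_, hpp⟩
    have : (p:ℝ) ≤ Real.exp y := (Real.log_le_iff_le_exp (by exact_mod_cast hpp.pos)).mp hp.2
    have := Nat.le_floor this
    rw [Finset.mem_range]; omega
  have h1 := Finset.card_le_card hsub
  have h2 := Nat.primeCounting'_add_le (a := 6) (k := 7) (by norm_num) (by norm_num) m
  rw [Nat.primeCounting', Nat.count_eq_card_filter_range, Nat.count_eq_card_filter_range] at h2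
  have h3 : ((Finset.range 7).filter Nat.Prime).card = 3 := by decide
  have h4 : Nat.totient 6 = 2 := by decide
  rw [h4] at h2
  have h2' : ((Finset.range (7 + m)).filter Nat.Prime).card ≤ 3 + 2 * (m / 6 + 1) := by
    rw [← h3]; convert h2
  have h5 : 6 + m ≤ Real.exp y := by
    have := Nat.floor_le (Real.exp_pos y).le
    rw [hm] at this
    exact_mod_cast this
  have h6 : 3 * (P.filter fun p : ℕ => Real.log p ≤ y).card ≤ m + 15 := by omega
  have h6' : (3:ℝ) * (P.filter fun p : ℕ => Real.log p ≤ y).card ≤ m + 15 := by exact_mod_cast h6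
  linarith

lemma log_card_divisors {n : ℕ} (hn : n ≠ 0) :
    Real.log n.divisors.card = ∑ p ∈ n.primeFactors, Real.log (n.factorization p + 1) := by
  rw [Nat.card_divisors hn, Nat.cast_prod, Real.log_prod]
  · simp
  · intro p _; positivity

lemma log_eq_sum (n : ℕ) : Real.log n = ∑ p ∈ n.primeFactors, n.factorization p * Real.log p :=
  Real.log_nat_eq_sum_factorization n

/-- The gain `log (a + 1) - lam * a * v` split over the steps `k - 1 → k` of the exponent: the
steps `k = 1, 2, 3` are kept, the remaining ones are bounded together. -/
lemma local_bound (a : ℕ) {v lam : ℝ} (hlam : 0 < lam) (hv : Real.log 2 ≤ v) :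
    Real.log (a + 1) - lam * (a * v) ≤
      max (Real.log 2 - lam * v) 0 + max (Real.log (3 / 2) - lam * v) 0
      + max (Real.log (4 / 3) - lam * v) 0
      + (if lam * v ≤ Real.log (5 / 4) then
          max (Real.log (1 / (4 * (lam * Real.log 2))) - 1 + 4 * (lam * Real.log 2)) 0 else 0) := by
  have hl : 0 < Real.log 2 := Real.log_pos (by norm_num)
  have hv0 := hl.trans_le hv
  have m1 := le_max_left (Real.log 2 - lam * v) 0
  have m1' := le_max_right (Real.log 2 - lam * v) 0
  have m2 := le_max_left (Real.log (3 / 2) - lam * v) 0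
  have m2' := le_max_right (Real.log (3 / 2) - lam * v) 0
  have m3 := le_max_left (Real.log (4 / 3) - lam * v) 0
  have m3' := le_max_right (Real.log (4 / 3) - lam * v) 0
  have m4' : 0 ≤ (if lam * v ≤ Real.log (5 / 4) then
          max (Real.log (1 / (4 * (lam * Real.log 2))) - 1 + 4 * (lam * Real.log 2)) 0 else 0) := by
    split_ifs
    · exact le_max_right _ _
    · exact le_rfl
  have e3 : Real.log 3 = Real.log 2 + Real.log (3 / 2) := by
    rw [← Real.log_mul (by norm_num) (by norm_num)]; norm_num
  have e4 : Real.log 4 = Real.log 2 + Real.log (3 / 2) + Real.log (4 / 3) := by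
    rw [← Real.log_mul (by norm_num) (by norm_num), ← Real.log_mul (by norm_num) (by norm_num)]
    norm_num
  match a with
  | 0 => simp only [Nat.cast_zero, zero_add, Real.log_one]; linarith
  | 1 =>
    rw [show ((1 : ℕ) : ℝ) + 1 = 2 by norm_num, Nat.cast_one, one_mul]; linarith
  | 2 =>
    rw [show ((2 : ℕ) : ℝ) + 1 = 3 by norm_num, e3, Nat.cast_two]; linarith
  | b + 3 =>
    have hb : (0:ℝ) ≤ b := b.cast_nonneg
    have e : Real.log (((b + 3 : ℕ) : ℝ) + 1) = Real.log 4 + Real.log (1 + b / 4) := by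
      rw [← Real.log_mul (by norm_num) (by positivity)]
      congr 1
      push_cast; ring
    rw [e, e4]
    push_cast
    suffices h : Real.log (1 + b / 4) - lam * (b * v) ≤ (if lam * v ≤ Real.log (5 / 4) then
          max (Real.log (1 / (4 * (lam * Real.log 2))) - 1 + 4 * (lam * Real.log 2)) 0 else 0) by
      linarith
    split_ifs with h
    · refine le_trans ?_ (le_max_left _ _)
      set μ := lam * Real.log 2
      have hμ : 0 < μ := mul_pos hlam hl
      have h1 : μ * b ≤ lam * (b * v) := by
        have := mul_le_mul_of_nonneg_left hv (mul_nonneg hlam.le hb)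
        calc μ * b = lam * b * Real.log 2 := by ring
          _ ≤ _ := by linarith
      -- the tangent of `log` at `1`, used at `b + 4 = 1 / μ`, where `log (1 + b / 4) - μ * b` is maximal
      have h2 := Real.log_le_sub_one_of_pos (show 0 < μ * (b + 4) by positivity)
      have h3 : Real.log (1 + b / 4) = Real.log (μ * (b + 4)) + Real.log (1 / (4 * μ)) := by
        rw [← Real.log_mul (by positivity) (by positivity)]
        congr 1
        field_simp
        ring
      rw [h3]; linarith
    · have h1 : Real.log (1 + b / 4) ≤ b * Real.log (5 / 4) := by
        rw [← Real.log_pow]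
        apply Real.log_le_log (by positivity)
        have := one_add_mul_le_pow (a := (1/4:ℝ)) (by norm_num) b
        norm_num at this ⊢
        linarith
      push Not at h
      nlinarith

lemma max_sub_eq {c lam v : ℝ} (hc : 0 < c) : max (c - lam * v) 0 = c * max (1 - v / (c / lam)) 0 := by
  rw [← mul_max_of_nonneg _ _ hc.le |>.symm, mul_zero]
  congr 1
  field_simp

lemma logtwo_bounds : 0.693147 < Real.log 2 ∧ Real.log 2 < 0.693148 :=
  ⟨by linarith [Real.log_two_gt_d9], by linarith [Real.log_two_lt_d9]⟩

lemma ratio_bounds {L lam : ℝ} (hL : 0 < L) (hlam : lam = Real.log 2 / L) :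
    31 / 53 * L ≤ Real.log (3 / 2) / lam ∧ Real.log (3 / 2) / lam ≤ 0.585 * L ∧
    Real.log (4 / 3) / lam ≤ 5 / 12 * L ∧ 2 / 5 * L ≤ Real.log (4 / 3) / lam ∧
    Real.log (5 / 4) / lam ≤ 19 / 59 * L ∧ 3 / 10 * L ≤ Real.log (5 / 4) / lam := by
  have hl : 0 < Real.log 2 := Real.log_pos (by norm_num)
  have key : ∀ c : ℝ, c / lam = c / Real.log 2 * L := fun c => by rw [hlam]; field_simp
  have up : ∀ (x : ℝ) (k m : ℕ), 0 < x → 0 < k → x ^ k ≤ 2 ^ m →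
      Real.log x / lam ≤ (m / k : ℝ) * L := by
    intro x k m hx hk h
    have := Real.log_le_log (by positivity) h
    rw [Real.log_pow, Real.log_pow] at this
    rw [key]
    refine mul_le_mul_of_nonneg_right ?_ hL.le
    rw [div_le_div_iff₀ hl (by exact_mod_cast hk)]
    linarith
  have dn : ∀ (x : ℝ) (k m : ℕ), 0 < x → 0 < k → 2 ^ m ≤ x ^ k →
      (m / k : ℝ) * L ≤ Real.log x / lam := by
    intro x k m hx hk h
    have := Real.log_le_log (by positivity) h
    rw [Real.log_pow, Real.log_pow] at this
    rw [key]
    refine mul_le_mul_of_nonneg_right ?_ hL.le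
    rw [div_le_div_iff₀ (by exact_mod_cast hk) hl]
    linarith
  have h1 := dn (3/2) 53 31 (by norm_num) (by norm_num) (by norm_num)
  have h2 := up (3/2) 200 117 (by norm_num) (by norm_num) (by norm_num)
  have h3 := up (4/3) 12 5 (by norm_num) (by norm_num) (by norm_num)
  have h4 := dn (4/3) 5 2 (by norm_num) (by norm_num) (by norm_num)
  have h5 := up (5/4) 59 19 (by norm_num) (by norm_num) (by norm_num)
  have h6 := dn (5/4) 10 3 (by norm_num) (by norm_num) (by norm_num)
  norm_num at h1 h2 h3 h4 h5 h6 ⊢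
  exact ⟨h1, h2, h3, h4, h5, h6⟩

/-- Lower bound for the error scale `e^L / L³`. -/
lemma ecube_ge {L : ℝ} (hL : 12 ≤ L) :
    94.06 * Real.exp (0.75 * (L - 12)) ≤ ecube L := by
  have h0 : L ≤ 12 * Real.exp ((L - 12) / 12) := by
    have := Real.add_one_le_exp ((L - 12) / 12); linarith
  have h1 : L ^ 3 ≤ 1728 * Real.exp ((L - 12) / 4) := by
    have := pow_le_pow_left₀ (by linarith) h0 3
    rw [mul_pow, ← Real.exp_nat_mul] at this
    norm_num at this
    refine this.trans (le_of_eq ?_)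
    congr 2; ring
  have h2 : Real.exp L = Real.exp 12 * (Real.exp (0.75 * (L - 12)) * Real.exp ((L - 12) / 4)) := by
    rw [← Real.exp_add, ← Real.exp_add]; congr 1; ring
  have h3 := (exp_nat_bounds 12).1
  norm_num at h3
  have hp := mul_pos (Real.exp_pos (0.75 * (L - 12))) (Real.exp_pos ((L - 12) / 4))
  rw [ecube, le_div_iff₀ (by positivity), h2]
  calc 94.06 * Real.exp (0.75 * (L - 12)) * L ^ 3
      ≤ 94.06 * Real.exp (0.75 * (L - 12)) * (1728 * Real.exp ((L - 12) / 4)) := by gcongr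
    _ = 94.06 * 1728 * (Real.exp (0.75 * (L - 12)) * Real.exp ((L - 12) / 4)) := by ring
    _ ≤ _ := mul_le_mul_of_nonneg_right (by linarith) hp.le

/-- Contribution of the exponent step `1 → 2`. -/
lemma extras_two {P : Finset ℕ} (hP : ∀ p ∈ P, p.Prime) {L lam : ℝ} (hL : 12 ≤ L)
    (hlam : lam = Real.log 2 / L) :
    ∑ p ∈ P, max (Real.log (3 / 2) - lam * Real.log p) 0 ≤ 0.4055 * (51.2 * Real.exp (0.585 * (L - 12))) := by
  obtain ⟨hl1, hl2⟩ := logtwo_bounds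
  have hL0 : 0 < L := by linarith
  have hlam0 : 0 < lam := by rw [hlam]; positivity
  obtain ⟨r1, r2, r3, r4, r5, r6⟩ := ratio_bounds hL0 hlam
  have hc2 : Real.log (3 / 2) ≤ 0.4055 := by
    have := mul_le_mul_of_nonneg_right r2 hlam0.le
    rw [div_mul_cancel₀ _ hlam0.ne', hlam, mul_assoc, mul_div_cancel₀ _ hL0.ne'] at this
    linarith
  have hp2 : 0 < Real.log (3 / 2) := Real.log_pos (by norm_num)
  simp only [max_sub_eq hp2]
  obtain ⟨y2, hy2⟩ : ∃ y, y = Real.log (3 / 2) / lam := ⟨_, rfl⟩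
  rw [← hy2] at r1 r2 ⊢
  generalize ht : L - 12 = t at *
  have ht0 : 0 ≤ t := by linarith
  obtain ⟨q, hq⟩ : ∃ q, q = Real.exp (0.585 * t) := ⟨_, rfl⟩
  rw [← hq]
  have hq1 : 1 ≤ q := by rw [hq]; exact Real.one_le_exp (by positivity)
  have hy27 : 7.0188 ≤ y2 := by linarith
  have h1 := prime_weight_le P hP (L := y2) (by linarith)
  have h2 := psiOne_le_crude (y := y2) (by linarith)
  have h3 := integral_ecube_le_four (y := y2) (by linarith)
  have h4 : Real.exp y2 ≤ 1119.5 * q := by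
    have e1 : Real.exp y2 ≤ Real.exp 7 * Real.exp 0.02 * q := by
      rw [hq, ← Real.exp_add, ← Real.exp_add]
      apply Real.exp_le_exp.mpr; linarith
    have e2 := (exp_nat_bounds 7).2
    have e3 : Real.exp 0.02 ≤ 1.0205 := by
      have := Real.one_sub_le_exp_neg 0.02
      rw [Real.exp_neg] at this
      have hx := Real.exp_pos 0.02
      rw [← one_div, le_div_iff₀ hx] at this
      linarith
    norm_num at e2
    have : Real.exp 7 * Real.exp 0.02 ≤ 1119.5 := by
      have := mul_le_mul e2 e3 (Real.exp_pos _).le (by positivity)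
      linarith
    exact e1.trans (mul_le_mul_of_nonneg_right this (by positivity))
  have h5 : psiOne y2 / y2 ^ 2 + 2.1 * ∫ y in (Real.log 2)..y2, ecube y ≤ 51.2 * q := by
    have a1 : psiOne y2 / y2 ^ 2 ≤ 1.05 * Real.exp y2 / y2 ^ 2 := by gcongr
    have a2 : 7.0188 * ecube y2 ≤ Real.exp y2 / y2 ^ 2 := by
      have e : Real.exp y2 / y2 ^ 2 = y2 * ecube y2 := by rw [ecube]; field_simp
      have := ecube_pos (y := y2) (by linarith)
      rw [e]
      gcongr
    have a3 : Real.exp y2 / y2 ^ 2 ≤ 22.73 * q := by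
      rw [div_le_iff₀ (by positivity)]
      have : 49.26 ≤ y2 ^ 2 := by nlinarith
      have := mul_le_mul_of_nonneg_left this (show 0 ≤ 22.73 * q by positivity)
      linarith
    rw [mul_div_assoc] at a1
    generalize Real.exp y2 / y2 ^ 2 = W at a1 a2 a3
    generalize psiOne y2 / y2 ^ 2 = V at a1 ⊢
    linarith
  rw [← Finset.mul_sum]
  exact mul_le_mul hc2 (h1.trans h5) (Finset.sum_nonneg fun _ _ => le_max_right _ _) (by norm_num)

/-- Contribution of the exponent step `2 → 3`. -/
lemma extras_three {P : Finset ℕ} (hP : ∀ p ∈ P, p.Prime) {L lam : ℝ} (hL : 12 ≤ L)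
    (hlam : lam = Real.log 2 / L) :
    ∑ p ∈ P, max (Real.log (4 / 3) - lam * Real.log p) 0 ≤ 0.2889 * (52.5 * Real.exp (0.585 * (L - 12))) := by
  obtain ⟨hl1, hl2⟩ := logtwo_bounds
  have hL0 : 0 < L := by linarith
  have hlam0 : 0 < lam := by rw [hlam]; positivity
  obtain ⟨r1, r2, r3, r4, r5, r6⟩ := ratio_bounds hL0 hlam
  have hc3 : Real.log (4 / 3) ≤ 0.2889 := by
    have := mul_le_mul_of_nonneg_right r3 hlam0.le
    rw [div_mul_cancel₀ _ hlam0.ne', hlam, mul_assoc, mul_div_cancel₀ _ hL0.ne'] at this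
    linarith
  have hp3 : 0 < Real.log (4 / 3) := Real.log_pos (by norm_num)
  obtain ⟨y3, hy3⟩ : ∃ y, y = Real.log (4 / 3) / lam := ⟨_, rfl⟩
  rw [← hy3] at r3 r4
  generalize ht : L - 12 = t at *
  have ht0 : 0 ≤ t := by linarith
  obtain ⟨q, hq⟩ : ∃ q, q = Real.exp (0.585 * t) := ⟨_, rfl⟩
  rw [← hq]
  have hq1 : 1 ≤ q := by rw [hq]; exact Real.one_le_exp (by positivity)
  have h1 := card_le_of_log_le P hP (y := y3) (by linarith)
  have h4 : Real.exp y3 ≤ 148.5 * q := by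
    have e1 : Real.exp y3 ≤ Real.exp 5 * q := by
      rw [hq, ← Real.exp_add]
      apply Real.exp_le_exp.mpr; linarith
    have e2 := (exp_nat_bounds 5).2
    norm_num at e2
    exact e1.trans (mul_le_mul_of_nonneg_right (by linarith) (by positivity))
  have h5 : ∑ p ∈ P, max (Real.log (4 / 3) - lam * Real.log p) 0 ≤
      ∑ p ∈ P, if Real.log p ≤ y3 then (0.2889:ℝ) else 0 := by
    refine Finset.sum_le_sum fun p hp => ?_
    have hlp : 0 ≤ Real.log p := Real.log_natCast_nonneg p
    split_ifs with h
    · exact max_le (by nlinarith) (by norm_num)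
    · refine max_le ?_ le_rfl
      push Not at h
      rw [hy3, div_lt_iff₀ hlam0] at h
      linarith
  rw [← Finset.sum_filter, Finset.sum_const, nsmul_eq_mul] at h5
  linarith

/-- Contribution of all later exponent steps. -/
lemma extras_four {P : Finset ℕ} (hP : ∀ p ∈ P, p.Prime) {L lam : ℝ} (hL : 12 ≤ L)
    (hlam : lam = Real.log 2 / L) :
    ∑ p ∈ P, (if lam * Real.log p ≤ Real.log (5 / 4) then
      max (Real.log (1 / (4 * (lam * Real.log 2))) - 1 + 4 * (lam * Real.log 2)) 0 else 0)
      ≤ 19.1 * 0.993 * Real.exp (0.585 * (L - 12)) := by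
  obtain ⟨hl1, hl2⟩ := logtwo_bounds
  have hL0 : 0 < L := by linarith
  have hlam0 : 0 < lam := by rw [hlam]; positivity
  obtain ⟨r1, r2, r3, r4, r5, r6⟩ := ratio_bounds hL0 hlam
  obtain ⟨y4, hy4⟩ : ∃ y, y = Real.log (5 / 4) / lam := ⟨_, rfl⟩
  rw [← hy4] at r5 r6
  generalize ht : L - 12 = t at *
  have ht0 : 0 ≤ t := by linarith
  obtain ⟨q, hq⟩ : ∃ q, q = Real.exp (0.585 * t) := ⟨_, rfl⟩
  rw [← hq]
  have hq1 : 1 ≤ q := by rw [hq]; exact Real.one_le_exp (by positivity)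
  set M := max (Real.log (1 / (4 * (lam * Real.log 2))) - 1 + 4 * (lam * Real.log 2)) 0 with hM
  have hsq1 : 0.48045 ≤ Real.log 2 * Real.log 2 := by nlinarith
  have hsq2 : Real.log 2 * Real.log 2 ≤ 0.48046 := by nlinarith
  have hMle : M ≤ 0.993 * Real.exp (t / 11) := by
    refine max_le ?_ (by positivity)
    have b1 : 4 * (lam * Real.log 2) ≤ 0.1602 := by
      have : 4 * (lam * Real.log 2) = 4 * (Real.log 2 * Real.log 2) / L := by rw [hlam]; ring
      rw [this, div_le_iff₀ hL0]; linarith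
    have b2 : Real.log (1 / (4 * (lam * Real.log 2))) ≤ 1.8321 + t / 12 := by
      have e : 1 / (4 * (lam * Real.log 2)) ≤ 6.2442 * (L / 12) := by
        have : 1 / (4 * (lam * Real.log 2)) = L / (4 * (Real.log 2 * Real.log 2)) := by
          rw [hlam]; field_simp
        rw [this, div_le_iff₀ (by positivity)]
        nlinarith
      refine (Real.log_le_log (by positivity) e).trans ?_
      rw [Real.log_mul (by norm_num) (by positivity)]
      have e1 := Real.log_le_sub_one_of_pos (show 0 < L / 12 by positivity)
      have e2 : Real.log 6.2442 ≤ 1.8321 := by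
        have e3 : (6.2442:ℝ) ≤ 2 ^ 2 * 1.561051 := by norm_num
        refine (Real.log_le_log (by norm_num) e3).trans ?_
        rw [Real.log_mul (by norm_num) (by norm_num), Real.log_pow]
        have e4 : (1.561051:ℝ) ^ 14 ≤ 2 ^ 9 * 0.997 := by norm_num
        have e5 := Real.log_le_log (by norm_num) e4
        rw [Real.log_mul (by norm_num) (by norm_num), Real.log_pow, Real.log_pow] at e5
        have e6 := Real.log_le_sub_one_of_pos (show (0:ℝ) < 0.997 by norm_num)
        push_cast at e5 ⊢
        linarith
      linarith
    have b3 := Real.add_one_le_exp (t / 11)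
    linarith
  have h1 := card_le_of_log_le P hP (y := y4) (by linarith)
  have h4 : Real.exp y4 ≤ 48.15 * Real.exp (19 / 59 * t) := by
    have e1 : Real.exp y4 ≤ Real.exp 4 * Real.exp (-0.1355) * Real.exp (19 / 59 * t) := by
      rw [← Real.exp_add, ← Real.exp_add]
      apply Real.exp_le_exp.mpr; linarith
    have e2 := (exp_nat_bounds 4).2
    have e3 : Real.exp (-0.1355) ≤ 0.8807 := by
      have := Real.add_one_le_exp 0.1355
      have hx := Real.exp_pos 0.1355
      rw [Real.exp_neg, ← one_div, div_le_iff₀ hx]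
      linarith
    norm_num at e2
    have : Real.exp 4 * Real.exp (-0.1355) ≤ 48.15 := by
      have := mul_le_mul e2 e3 (Real.exp_pos _).le (by positivity)
      linarith
    exact e1.trans (mul_le_mul_of_nonneg_right this (by positivity))
  have h5 : ∑ p ∈ P, (if lam * Real.log p ≤ Real.log (5 / 4) then M else 0) =
      ((P.filter fun p : ℕ => Real.log p ≤ y4).card : ℝ) * M := by
    rw [← Finset.sum_filter, Finset.sum_const, nsmul_eq_mul]
    have : P.filter (fun p : ℕ => lam * Real.log p ≤ Real.log (5 / 4)) =
        P.filter fun p : ℕ => Real.log p ≤ y4 :=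
      Finset.filter_congr fun p _ => by rw [hy4, le_div_iff₀ hlam0, mul_comm]
    rw [this]
  have h6 : Real.exp (19 / 59 * t) * Real.exp (t / 11) ≤ q := by
    rw [hq, ← Real.exp_add]
    apply Real.exp_le_exp.mpr; linarith
  have h7 : (1:ℝ) ≤ Real.exp (19 / 59 * t) := Real.one_le_exp (by positivity)
  rw [h5]
  calc _ ≤ (19.1 * Real.exp (19 / 59 * t)) * (0.993 * Real.exp (t / 11)) :=
        mul_le_mul (by linarith) hMle (le_max_right _ _) (by positivity)
    _ = 19.1 * 0.993 * (Real.exp (19 / 59 * t) * Real.exp (t / 11)) := by ring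
    _ ≤ _ := by gcongr

/-- Contribution of the steps `k ≥ 2`. -/
lemma extras_le {P : Finset ℕ} (hP : ∀ p ∈ P, p.Prime) {L lam : ℝ} (hL : 12 ≤ L)
    (hlam : lam = Real.log 2 / L) :
    (1 + 0.165 * (L - 12)) * (∑ p ∈ P, max (Real.log (3 / 2) - lam * Real.log p) 0 +
      ∑ p ∈ P, max (Real.log (4 / 3) - lam * Real.log p) 0 +
      ∑ p ∈ P, (if lam * Real.log p ≤ Real.log (5 / 4) then
          max (Real.log (1 / (4 * (lam * Real.log 2))) - 1 + 4 * (lam * Real.log 2)) 0 else 0))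
      ≤ 0.584 * ecube L := by
  have s2 := extras_two hP hL hlam
  have s3 := extras_three hP hL hlam
  have s4 := extras_four hP hL hlam
  have hR := ecube_ge hL
  generalize ht : L - 12 = t at *
  have ht0 : 0 ≤ t := by linarith
  obtain ⟨q, hq⟩ : ∃ q, q = Real.exp (0.585 * t) := ⟨_, rfl⟩
  have hq1 : 1 ≤ q := by rw [hq]; exact Real.one_le_exp (by positivity)
  rw [← hq] at s2 s3 s4
  have hqe : Real.exp (0.75 * t) = q * Real.exp (0.165 * t) := by
    rw [hq, ← Real.exp_add]; congr 1; ring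
  have h8 := Real.add_one_le_exp (0.165 * t)
  rw [hqe] at hR
  have h9 : q * (0.165 * t + 1) ≤ q * Real.exp (0.165 * t) := by gcongr
  calc _ ≤ (1 + 0.165 * t) * (54.9 * q) := by
        apply mul_le_mul_of_nonneg_left _ (by positivity)
        linarith
    _ ≤ _ := by nlinarith

/-- The claim for `log log n ≥ 12`, with slope `lam = log 2 / L`. Between `L = 12` and `L = 40` the zeros are bounded
trivially by `psiOne_le`, afterwards by the zero-free region through `psiOne_le'`. -/
theorem bound_of_large {n : ℕ} (hn : 3 ≤ n) (hL : 12 ≤ Real.log (Real.log n)) :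
    Real.log (n.divisors.card)
      ≤ (Real.log n / Real.log (Real.log n)) *
        (Real.log 2 + Real.log 2 / Real.log (Real.log n)
          + 4.7626 * Real.log 2 / (Real.log (Real.log n)) ^ 2) := by
  obtain ⟨hl1, hl2⟩ := logtwo_bounds
  have hT0 : 0 < Real.log n := Real.log_pos (by exact_mod_cast (by omega : 1 < n))
  set L := Real.log (Real.log n) with hLdef
  have hTe : Real.log n = Real.exp L := (Real.exp_log hT0).symm
  have hL0 : 0 < L := by linarith
  set lam := Real.log 2 / L with hlam
  have hl : 0 < Real.log 2 := by linarith
  have hlam0 : 0 < lam := by positivity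
  have hP : ∀ p ∈ n.primeFactors, p.Prime := fun p hp => Nat.prime_of_mem_primeFactors hp
  have h1 : Real.log n.divisors.card - lam * Real.log n ≤
      ∑ p ∈ n.primeFactors, max (Real.log 2 - lam * Real.log p) 0 +
      (∑ p ∈ n.primeFactors, max (Real.log (3 / 2) - lam * Real.log p) 0 +
      ∑ p ∈ n.primeFactors, max (Real.log (4 / 3) - lam * Real.log p) 0 +
      ∑ p ∈ n.primeFactors, (if lam * Real.log p ≤ Real.log (5 / 4) then
          max (Real.log (1 / (4 * (lam * Real.log 2))) - 1 + 4 * (lam * Real.log 2)) 0 else 0)) := by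
    rw [log_card_divisors (by omega), log_eq_sum n, Finset.mul_sum, ← Finset.sum_sub_distrib,
      ← Finset.sum_add_distrib, ← Finset.sum_add_distrib, ← Finset.sum_add_distrib]
    refine Finset.sum_le_sum fun p hp => ?_
    have := local_bound (n.factorization p) hlam0
      (Real.log_le_log (by norm_num) (by exact_mod_cast (hP p hp).two_le) : Real.log 2 ≤ Real.log p)
    linarith
  set X := ∑ p ∈ n.primeFactors, max (Real.log (3 / 2) - lam * Real.log p) 0 +
      ∑ p ∈ n.primeFactors, max (Real.log (4 / 3) - lam * Real.log p) 0 +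
      ∑ p ∈ n.primeFactors, (if lam * Real.log p ≤ Real.log (5 / 4) then
          max (Real.log (1 / (4 * (lam * Real.log 2))) - 1 + 4 * (lam * Real.log 2)) 0 else 0) with hX
  have hXle := extras_le hP hL hlam
  rw [← hX] at hXle
  set R := ecube L with hR
  have hR0 : 0 < R := ecube_pos hL0
  have hRL : Real.exp L / L ^ 2 = R * L := by rw [hR, ecube]; field_simp
  have h2 := prime_weight_le n.primeFactors hP (L := L) (by linarith)
  have hmain : ∑ p ∈ n.primeFactors, max (1 - Real.log p / L) 0 ≤
      R * L + 4.7626 * R - 1.4428 * X := by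
    have hx : 0.03 * Real.exp (L / 2) / L ^ 2 ≤ 0.001 * R := by
      have e : Real.exp L = Real.exp (L / 2) * Real.exp (L / 2) := by rw [← Real.exp_add, add_halves]
      have e2 : 30 * L ≤ Real.exp (L / 2) := by
        have a1 : Real.exp (L / 2) = Real.exp 6 * Real.exp ((L - 12) / 2) := by
          rw [← Real.exp_add]; congr 1; ring
        have a2 := Real.add_one_le_exp ((L - 12) / 2)
        have a3 := (exp_nat_bounds 6).1
        norm_num at a3
        rw [a1]
        nlinarith [Real.exp_pos ((L - 12) / 2)]
      rw [hR, ecube, e, div_le_iff₀ (by positivity)]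
      have e3 : 0.001 * (Real.exp (L / 2) * Real.exp (L / 2) / L ^ 3) * L ^ 2 =
          0.001 * (Real.exp (L / 2) / L) * Real.exp (L / 2) := by field_simp
      rw [e3]
      have e4 : 30 ≤ Real.exp (L / 2) / L := by rw [le_div_iff₀ hL0]; exact e2
      nlinarith [Real.exp_pos (L / 2)]
    rcases le_total L 40 with h40 | h40
    · have h3 := psiOne_le hL0
      have h4 := integral_ecube_le' hL
      have h5 : psiOne L / L ^ 2 ≤ 1.0271 * (R * L) + 0.001 * R := by
        refine (div_le_div_of_nonneg_right h3 (sq_nonneg L)).trans ?_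
        rw [add_div, mul_div_assoc, hRL]; linarith
      -- `1.4428 > 1 / log 2`, and `1.569` is what `4.7626` leaves after `0.001` and `2.1 * 1.52`;
      -- at `L = 40` the right-hand side is still positive
      have h6 : 1.4428 * X ≤ (1.569 - 0.0271 * L) * R := by
        have hk : 0.8426 ≤ (1.569 - 0.0271 * L) * (1 + 0.165 * (L - 12)) := by nlinarith
        have hw : 0 < 1 + 0.165 * (L - 12) := by linarith
        refine le_of_mul_le_mul_left ?_ hw
        nlinarith
      linarith
    · have h3 := psiOne_le' hL0
      have h4 := integral_ecube_le_of_forty h40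
      have h5 : psiOne L / L ^ 2 ≤ R * L + 1.6 * R + 0.001 * R := by
        refine (div_le_div_of_nonneg_right h3 (sq_nonneg L)).trans ?_
        have : Real.exp L / L / L ^ 2 = R := by rw [hR, ecube]; field_simp
        rw [add_div, add_div, mul_div_assoc, hRL, this]; linarith
      -- `4.7626` exceeds `1.6 + 0.001 + 2.1 * 1.3` by more than `0.4`
      have h6 : 1.4428 * X ≤ 0.4 * R := by nlinarith
      linarith
  have hc : ∀ p : ℕ, max (Real.log 2 - lam * Real.log p) 0 = Real.log 2 * max (1 - Real.log p / L) 0 := by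
    intro p
    rw [max_sub_eq hl, hlam]
    congr 4
    field_simp
  simp only [hc] at h1
  rw [← Finset.mul_sum] at h1
  have hX0 : 0 ≤ X := by
    refine add_nonneg (add_nonneg (Finset.sum_nonneg fun _ _ => le_max_right _ _)
      (Finset.sum_nonneg fun _ _ => le_max_right _ _)) (Finset.sum_nonneg fun _ _ => ?_)
    split_ifs
    · exact le_max_right _ _
    · exact le_rfl
  have h7 := mul_le_mul_of_nonneg_left hmain hl.le
  have h8 : Real.log n / L * (Real.log 2 + Real.log 2 / L + 4.7626 * Real.log 2 / L ^ 2) =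
      lam * Real.log n + Real.log 2 * (R * L + 4.7626 * R) := by
    rw [hlam, hTe, hR, ecube]; field_simp; ring
  rw [h8]
  nlinarith

/-! ### Certified lines -/

/-- The product of all primes below `400`. -/
def smallPrimes : ℕ :=
  101711813138816844924236837117014535397962326595284001750280202679841694874264008030110521904988877540733288496933299638087626005351064797010220112569797363528290

/-- A computable sieve that accepts every prime; below `400 ^ 2` it accepts nothing else, which only
matters for the quality of the numerical bounds. -/
def cand (m : ℕ) : Bool :=
  bif Nat.ble 400 m then Nat.beq (Nat.gcd m smallPrimes) 1
  else bif Nat.ble 20 m then Nat.beq (Nat.gcd m 9699690) 1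
  else Nat.testBit 665772 m

/-- The least `e ≥ k` with `p ^ u * (e + 1) ^ v > (e + 2) ^ v`, searched for `fuel` steps. It is the exponent of
`p` in the integer maximizing `d(n) / n ^ (u / v)`. -/
def expo (u v p : ℕ) : ℕ → ℕ → ℕ
  | 0, k => k
  | fuel + 1, k => bif Nat.ble (p ^ u * (k + 1) ^ v) ((k + 2) ^ v) then expo u v p fuel (k + 1) else k

/-- The product of `f` over the `2 ^ k` integers starting at `lo`, by binary splitting. -/
def tree (f : ℕ → ℕ) : ℕ → ℕ → ℕ
  | 0, lo => f lo
  | k + 1, lo => tree f k lo * tree f k (lo + 2 ^ k)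

/-- The contribution of `m` to the maximizing integer `N`: the prime power of `N` if `m` passes the sieve, else `1`. -/
def weightN (u v m : ℕ) : ℕ := bif cand m then m ^ expo u v m 30 0 else 1

/-- The contribution of `m` to the number of divisors of the maximizing integer `N`. -/
def weightD (u v m : ℕ) : ℕ := bif cand m then expo u v m 30 0 + 1 else 1

/-- The certificate checked for the slope `u / v`: the integer `N` maximizing `d(n) / n ^ (u / v)` satisfies
`N ≥ 2 ^ (KN / mN)` and has at most `2 ^ (KD / mD)` divisors; no prime beyond `2 ^ K` divides it. -/
def lineOK (u v K KN mN KD mD : ℕ) : Bool :=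
  Nat.ble (2 ^ KN) (tree (weightN u v) K 0 ^ mN) &&
  (Nat.ble (tree (weightD u v) K 0 ^ mD) (2 ^ KD) &&
  (Nat.ble v (K * u) && Nat.ble (32 ^ v) (2 ^ u * 31 ^ v)))

lemma cand_of_prime {p : ℕ} (hp : p.Prime) : cand p = true := by
  rcases lt_or_ge p 400 with h | h
  · have : ∀ p < 400, p.minFac = p → p = 1 ∨ p = 0 ∨ cand p = true := by decide +kernel
    rcases this p h hp.minFac_eq with h1 | h1 | h1
    · exact absurd h1 hp.one_lt.ne'
    · exact absurd h1 hp.ne_zero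
    · exact h1
  · have hq : smallPrimes ∣ Nat.factorial 399 := by decide +kernel
    have h2 : Nat.gcd p smallPrimes = 1 := by
      refine (hp.coprime_iff_not_dvd).mpr fun hd => ?_
      have := hp.dvd_factorial.mp (hd.trans hq)
      omega
    rw [cand, Nat.ble_eq_true_of_le h, h2]; rfl

lemma tree_eq (f : ℕ → ℕ) (k lo : ℕ) : tree f k lo = ∏ i ∈ Finset.range (2 ^ k), f (lo + i) := by
  induction k generalizing lo with
  | zero => simp [tree]
  | succ k ih =>
    rw [tree, ih, ih, pow_succ, mul_two, Finset.prod_range_add]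
    simp only [add_assoc]

lemma expo_of_lt (u v p fuel k j : ℕ) (hj : k ≤ j) (hj' : j < expo u v p fuel k) :
    p ^ u * (j + 1) ^ v ≤ (j + 2) ^ v := by
  induction fuel generalizing k with
  | zero => simp only [expo] at hj'; omega
  | succ fuel ih =>
    rw [expo] at hj'
    by_cases h : p ^ u * (k + 1) ^ v ≤ (k + 2) ^ v
    · rw [Nat.ble_eq_true_of_le h, cond_true] at hj'
      rcases hj.eq_or_lt with rfl | h1
      · exact h
      · exact ih (k + 1) h1 hj'
    · rw [Bool.eq_false_iff.mpr (fun hh => h (Nat.le_of_ble_eq_true hh)), cond_false] at hj'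
      omega

lemma expo_spec (u v p fuel k : ℕ) :
    (expo u v p fuel k + 2) ^ v ≤ p ^ u * (expo u v p fuel k + 1) ^ v ∨ expo u v p fuel k = k + fuel := by
  induction fuel generalizing k with
  | zero => right; simp [expo]
  | succ fuel ih =>
    rw [expo]
    by_cases h : p ^ u * (k + 1) ^ v ≤ (k + 2) ^ v
    · rw [Nat.ble_eq_true_of_le h, cond_true]
      rcases ih (k + 1) with h1 | h1
      · exact Or.inl h1
      · right; omega
    · rw [Bool.eq_false_iff.mpr (fun hh => h (Nat.le_of_ble_eq_true hh)), cond_false]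
      left; omega

/-- The concave sequence `v log (a + 1) - a u log p` is maximal where its increments change sign. -/
lemma local_max {u v p e : ℕ} (hp : 0 < p) (h1 : ∀ j < e, p ^ u * (j + 1) ^ v ≤ (j + 2) ^ v)
    (h2 : (e + 2) ^ v ≤ p ^ u * (e + 1) ^ v) (a : ℕ) :
    (a + 1) ^ v * (p ^ e) ^ u ≤ (e + 1) ^ v * (p ^ a) ^ u := by
  have hpu : 0 < p ^ u := pow_pos hp u
  have key : ∀ b, (p ^ (b + 1)) ^ u = (p ^ b) ^ u * p ^ u := fun b => by rw [pow_succ, mul_pow]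
  rcases le_total e a with h | h
  · induction a, h using Nat.le_induction with
    | base => exact le_rfl
    | succ a ha ih =>
      have h3 : (a + 2) ^ v ≤ p ^ u * (a + 1) ^ v := by
        refine Nat.le_of_mul_le_mul_right ?_ (show 0 < (e + 1) ^ v from pow_pos (Nat.succ_pos e) v)
        calc (a + 2) ^ v * (e + 1) ^ v = ((a + 2) * (e + 1)) ^ v := by rw [mul_pow]
          _ ≤ ((e + 2) * (a + 1)) ^ v := Nat.pow_le_pow_left (by nlinarith) v
          _ = (e + 2) ^ v * (a + 1) ^ v := by rw [mul_pow]
          _ ≤ p ^ u * (e + 1) ^ v * (a + 1) ^ v := Nat.mul_le_mul_right _ h2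
          _ = _ := by ring
      rw [key]
      calc (a + 1 + 1) ^ v * (p ^ e) ^ u ≤ p ^ u * (a + 1) ^ v * (p ^ e) ^ u := Nat.mul_le_mul_right _ h3
        _ = p ^ u * ((a + 1) ^ v * (p ^ e) ^ u) := by ring
        _ ≤ p ^ u * ((e + 1) ^ v * (p ^ a) ^ u) := Nat.mul_le_mul_left _ ih
        _ = _ := by ring
  · induction h using Nat.decreasingInduction with
    | self => exact le_rfl
    | of_succ a ha ih =>
      rw [key] at ih
      refine Nat.le_of_mul_le_mul_right ?_ hpu
      calc (a + 1) ^ v * (p ^ e) ^ u * p ^ u = p ^ u * (a + 1) ^ v * (p ^ e) ^ u := by ring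
        _ ≤ (a + 2) ^ v * (p ^ e) ^ u := Nat.mul_le_mul_right _ (h1 a ha)
        _ ≤ _ := by rw [mul_assoc]; exact ih

/-- Thirty steps suffice to find the exponent: by `hF` the increments have changed sign at `e = 30` even for `p = 2`. -/
lemma expo_max {u v : ℕ} (hF : 32 ^ v ≤ 2 ^ u * 31 ^ v) {p : ℕ} (hp : 2 ≤ p) (a : ℕ) :
    (a + 1) ^ v * (p ^ expo u v p 30 0) ^ u ≤ (expo u v p 30 0 + 1) ^ v * (p ^ a) ^ u := by
  refine local_max (by omega) (fun j hj => expo_of_lt u v p 30 0 j (Nat.zero_le j) hj) ?_ a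
  rcases expo_spec u v p 30 0 with h | h
  · exact h
  · rw [h]
    exact hF.trans (Nat.mul_le_mul_right _ (Nat.pow_le_pow_left hp u))

/-- Among all integers, `d(n) / n ^ (u / v)` is maximal at the integer `N` computed by `tree`. -/
lemma divisors_pow_le {u v K : ℕ} (hF : 32 ^ v ≤ 2 ^ u * 31 ^ v) (hK : v ≤ K * u) {n : ℕ} (hn : n ≠ 0) :
    n.divisors.card ^ v * tree (weightN u v) K 0 ^ u ≤ tree (weightD u v) K 0 ^ v * n ^ u := by
  classical
  set S := (Finset.range (2 ^ K)).filter fun m => cand m = true with hS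
  have hN : tree (weightN u v) K 0 = ∏ m ∈ S, m ^ expo u v m 30 0 := by
    rw [tree_eq, hS, Finset.prod_filter]
    refine Finset.prod_congr rfl fun m _ => ?_
    rw [zero_add, weightN]
    cases cand m <;> simp
  have hD : tree (weightD u v) K 0 = ∏ m ∈ S, (expo u v m 30 0 + 1) := by
    rw [tree_eq, hS, Finset.prod_filter]
    refine Finset.prod_congr rfl fun m _ => ?_
    rw [zero_add, weightD]
    cases cand m <;> simp
  have hS2 : ∀ m ∈ S, 2 ≤ m := by
    intro m hm
    have hc := (Finset.mem_filter.mp hm).2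
    by_contra! h
    interval_cases m
    · exact absurd hc (by decide)
    · exact absurd hc (by decide)
  set U := n.primeFactors ∪ S
  have hU1 : n.divisors.card = ∏ p ∈ U, (n.factorization p + 1) := by
    rw [Nat.card_divisors hn]
    refine Finset.prod_subset Finset.subset_union_left fun p _ hp => ?_
    rw [← Nat.support_factorization, Finsupp.notMem_support_iff] at hp
    rw [hp, zero_add]
  have hU2 : n = ∏ p ∈ U, p ^ n.factorization p := by
    conv_lhs => rw [← Nat.prod_factorization_pow_eq_self hn]
    rw [Finsupp.prod]
    refine Finset.prod_subset Finset.subset_union_left fun p _ hp => ?_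
    rw [Finsupp.notMem_support_iff] at hp
    rw [hp, pow_zero]
  have hU3 : ∏ m ∈ S, m ^ expo u v m 30 0 = ∏ m ∈ U, if m ∈ S then m ^ expo u v m 30 0 else 1 := by
    rw [Finset.prod_ite_mem, Finset.inter_eq_right.mpr Finset.subset_union_right]
  have hU4 : ∏ m ∈ S, (expo u v m 30 0 + 1) = ∏ m ∈ U, if m ∈ S then (expo u v m 30 0 + 1) else 1 := by
    rw [Finset.prod_ite_mem, Finset.inter_eq_right.mpr Finset.subset_union_right]
  rw [hN, hD, hU3, hU4, hU1]
  conv_rhs => rw [hU2]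
  rw [← Finset.prod_pow, ← Finset.prod_pow, ← Finset.prod_pow, ← Finset.prod_pow,
    ← Finset.prod_mul_distrib, ← Finset.prod_mul_distrib]
  refine Finset.prod_le_prod' fun p hp => ?_
  split_ifs with h
  · exact expo_max hF (hS2 p h) _
  · have hpp : p.Prime := by
      rcases Finset.mem_union.mp hp with h1 | h1
      · exact Nat.prime_of_mem_primeFactors h1
      · exact absurd h1 h
    have hpK : 2 ^ K ≤ p := by
      by_contra! h2
      exact h (Finset.mem_filter.mpr ⟨Finset.mem_range.mpr h2, cand_of_prime hpp⟩)
    set a := n.factorization p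
    rw [one_pow, one_pow, mul_one, one_mul]
    calc (a + 1) ^ v ≤ (2 ^ a) ^ v := Nat.pow_le_pow_left (Nat.lt_two_pow_self) v
      _ = (2 ^ v) ^ a := by rw [← pow_mul, ← pow_mul, mul_comm]
      _ ≤ (2 ^ (K * u)) ^ a := Nat.pow_le_pow_left (Nat.pow_le_pow_right (by norm_num) hK) a
      _ = ((2 ^ K) ^ a) ^ u := by simp only [← pow_mul]; congr 1; ring
      _ ≤ (p ^ a) ^ u := Nat.pow_le_pow_left (Nat.pow_le_pow_left hpK a) u

/-- A valid certificate gives an affine function of `log n` that majorizes `log d(n)` for every `n`. -/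
lemma line_of_lineOK {u v K KN mN KD mD : ℕ} (h : lineOK u v K KN mN KD mD = true) (hv : 0 < v)
    (hmN : 0 < mN) (hmD : 0 < mD) {n : ℕ} (hn : n ≠ 0) :
    Real.log n.divisors.card ≤
      (KD / mD - u / v * (KN / mN)) * Real.log 2 + u / v * Real.log n := by
  simp only [lineOK, Bool.and_eq_true] at h
  obtain ⟨h1, h2, h3, h4⟩ := h
  have h1 := Nat.le_of_ble_eq_true h1
  have h2 := Nat.le_of_ble_eq_true h2
  have h3 := Nat.le_of_ble_eq_true h3
  have h4 := Nat.le_of_ble_eq_true h4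
  have h5 := divisors_pow_le h4 h3 hn
  generalize tree (weightN u v) K 0 = N at h1 h5
  generalize tree (weightD u v) K 0 = D at h2 h5
  have hd : 0 < n.divisors.card := Finset.card_pos.mpr (Nat.nonempty_divisors.mpr hn)
  have hn0 : 0 < n := Nat.pos_of_ne_zero hn
  have hN0 : 0 < N := by
    rcases Nat.eq_zero_or_pos N with h | h
    · rw [h, zero_pow hmN.ne'] at h1
      exact absurd h1 (by simp)
    · exact h
  have hD0 : 0 < D := by
    rcases Nat.eq_zero_or_pos D with h | h
    · rw [h, zero_pow hv.ne', zero_mul] at h5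
      exact absurd h5 (by rw [not_le]; exact Nat.mul_pos (pow_pos hd _) (pow_pos hN0 _))
    · exact h
  have l1 : KN * Real.log 2 ≤ mN * Real.log N := by
    rw [← Real.log_pow, ← Real.log_pow]
    exact Real.log_le_log (by positivity) (by exact_mod_cast h1)
  have l2 : mD * Real.log D ≤ KD * Real.log 2 := by
    rw [← Real.log_pow, ← Real.log_pow]
    exact Real.log_le_log (by positivity) (by exact_mod_cast h2)
  have l5 : v * Real.log n.divisors.card + u * Real.log N ≤ v * Real.log D + u * Real.log n := by
    rw [← Real.log_pow, ← Real.log_pow, ← Real.log_pow, ← Real.log_pow,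
      ← Real.log_mul (by positivity) (by positivity), ← Real.log_mul (by positivity) (by positivity)]
    exact Real.log_le_log (by positivity) (by exact_mod_cast h5)
  have hv' : (0:ℝ) < v := by exact_mod_cast hv
  have hN' : (0:ℝ) < mN := by exact_mod_cast hmN
  have hD' : (0:ℝ) < mD := by exact_mod_cast hmD
  have k1 : KN / mN * Real.log 2 ≤ Real.log N := by
    rw [div_mul_eq_mul_div, div_le_iff₀ hN']; linarith
  have k2 : Real.log D ≤ KD / mD * Real.log 2 := by
    rw [div_mul_eq_mul_div, le_div_iff₀ hD']; linarith
  have k5 : Real.log n.divisors.card ≤ Real.log D + u / v * (Real.log n - Real.log N) := by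
    have : Real.log D + u / v * (Real.log n - Real.log N) =
        (v * Real.log D + u * Real.log n - u * Real.log N) / v := by field_simp; ring
    rw [this, le_div_iff₀ hv']; linarith
  have k6 : (u:ℝ) / v * (KN / mN * Real.log 2) ≤ u / v * Real.log N := by gcongr
  linarith

/-! ### Concavity of the bound -/

/-- The bound to be proved, divided by `log 2`, as a function of `T = log n`. -/
noncomputable def target (T : ℝ) : ℝ :=
  T / Real.log T + T / Real.log T ^ 2 + 4.7626 * T / Real.log T ^ 3

lemma target_eq (T : ℝ) : (T / Real.log T) * (Real.log 2 + Real.log 2 / Real.log T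
    + 4.7626 * Real.log 2 / (Real.log T) ^ 2) = Real.log 2 * target T := by
  rw [target]
  rcases eq_or_ne (Real.log T) 0 with h | h
  · simp [h]
  · field_simp

lemma hasDerivAt_target {T : ℝ} (hT : 1 < T) : HasDerivAt target
    ((Real.log T)⁻¹ + 2.7626 * (Real.log T)⁻¹ ^ 3 - 14.2878 * (Real.log T)⁻¹ ^ 4) T := by
  have hL : 0 < Real.log T := Real.log_pos hT
  have hl := Real.hasDerivAt_log (show T ≠ 0 by positivity)
  have h1 := (hasDerivAt_id T).div hl hL.ne'
  have h2 := (hasDerivAt_id T).div (hl.pow 2) (pow_ne_zero 2 hL.ne')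
  have h3 := ((hasDerivAt_id T).const_mul 4.7626).div (hl.pow 3) (pow_ne_zero 3 hL.ne')
  refine ((h1.add h2).add h3).congr_deriv ?_
  simp only [id, Pi.pow_apply]
  generalize Real.log T = L at *
  have : T ≠ 0 := by positivity
  field_simp
  ring

lemma log_thirtysix : (3.5715:ℝ) ≤ Real.log 36 := by
  have h1 := Real.log_two_gt_d9
  have h2 : (2:ℝ) ^ 67 ≤ 36 ^ 13 := by norm_num
  have h3 := Real.log_le_log (by positivity) h2
  rw [Real.log_pow, Real.log_pow] at h3
  push_cast at h3
  linarith

/-- In terms of `x = 1 / log T` the derivative is `x + 2.7626 x ^ 3 - 14.2878 x ^ 4`, increasing in `x` for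
`0 < x ≤ 0.28`. -/
lemma concaveOn_target : ConcaveOn ℝ (Ici 36) target := by
  refine AntitoneOn.concaveOn_of_deriv (convex_Ici 36) ?_ ?_ ?_
  · exact fun T hT => (hasDerivAt_target
      (by have := mem_Ici.mp hT; linarith)).continuousAt.continuousWithinAt
  · rw [interior_Ici]
    exact fun T hT => (hasDerivAt_target
      (by have := mem_Ioi.mp hT; linarith)).differentiableAt.differentiableWithinAt
  · rw [interior_Ici]
    intro S hS T hT hST
    have hS := mem_Ioi.mp hS
    have hT := mem_Ioi.mp hT
    rw [(hasDerivAt_target (by linarith : 1 < S)).deriv, (hasDerivAt_target (by linarith : 1 < T)).deriv]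
    have a1 : 3.5715 ≤ Real.log S := log_thirtysix.trans (Real.log_le_log (by norm_num) hS.le)
    have a2 : Real.log S ≤ Real.log T := Real.log_le_log (by linarith) hST
    have a3 : (Real.log T)⁻¹ ≤ (Real.log S)⁻¹ := inv_anti₀ (by linarith) a2
    have a4 : (Real.log S)⁻¹ ≤ 0.28 := by
      rw [inv_le_comm₀ (by linarith) (by norm_num)]; norm_num; linarith
    have a5 : 0 < (Real.log T)⁻¹ := inv_pos.mpr (by linarith)
    generalize (Real.log T)⁻¹ = x at *
    generalize (Real.log S)⁻¹ = y at *
    have key : 0 ≤ 1 + 2.7626 * (y ^ 2 + y * x + x ^ 2) - 14.2878 * ((y + x) * (y ^ 2 + x ^ 2)) := by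
      have : (y + x) * (y ^ 2 + x ^ 2) ≤ 0.56 * (y ^ 2 + x ^ 2) := by gcongr; linarith
      nlinarith [mul_nonneg (sub_nonneg.mpr a4) (sub_nonneg.mpr (a3.trans a4))]
    nlinarith [mul_nonneg (sub_nonneg.mpr a3) key]

/-- A lower bound for `target T` from an upper bound `T ^ b ≤ 2 ^ a`, that is `log T ≤ (a / b) log 2`. -/
lemma target_ge {T a b : ℕ} (hT : 1 < T) (hb : 0 < b) (h : Nat.ble (T ^ b) (2 ^ a) = true) :
    Real.log T ≤ a / b * 0.6931471808 ∧ (T:ℝ) / (a / b * 0.6931471808) + T / (a / b * 0.6931471808) ^ 2 +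
      4.7626 * T / (a / b * 0.6931471808) ^ 3 ≤ target T := by
  have h1 := Nat.le_of_ble_eq_true h
  have hT' : (1:ℝ) < T := by exact_mod_cast hT
  have hb' : (0:ℝ) < b := by exact_mod_cast hb
  have hL : 0 < Real.log T := Real.log_pos hT'
  have h2 : Real.log T ≤ a / b * 0.6931471808 := by
    have h3 : (b:ℝ) * Real.log T ≤ a * Real.log 2 := by
      rw [← Real.log_pow, ← Real.log_pow]
      exact Real.log_le_log (by positivity) (by exact_mod_cast h1)
    have h4 : Real.log T ≤ a / b * Real.log 2 := by
      rw [div_mul_eq_mul_div, le_div_iff₀ hb']; linarith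
    exact h4.trans (by gcongr; exact Real.log_two_lt_d9.le)
  refine ⟨h2, ?_⟩
  rw [target]
  gcongr

/-- If a line majorizing `log d(n)` lies below the concave bound at both ends of an interval, the claim holds
throughout the interval. -/
lemma le_of_ends {n : ℕ} {A lam T₁ T₂ : ℝ} (hlam : 0 ≤ lam)
    (hline : Real.log n.divisors.card ≤ A * Real.log 2 + lam * Real.log n)
    (hT : 36 ≤ T₁) (h1 : A + lam * T₁ / 0.6931471803 ≤ target T₁)
    (h2 : A + lam * T₂ / 0.6931471803 ≤ target T₂) (hn1 : T₁ ≤ Real.log n) (hn2 : Real.log n ≤ T₂) :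
    Real.log n.divisors.card ≤ Real.log 2 * target (Real.log n) := by
  have hc : ConcaveOn ℝ (Ici 36) fun T => target T + (-(lam / 0.6931471803)) * T := by
    refine concaveOn_target.add ⟨convex_Ici 36, fun x _ y _ a b _ _ _ => le_of_eq ?_⟩
    simp only [smul_eq_mul]; ring
  have h3 := hc.min_le_of_mem_Icc (x := T₁) (y := T₂) (z := Real.log n) (mem_Ici.mpr hT)
    (mem_Ici.mpr (by linarith)) ⟨hn1, hn2⟩
  have h4 : A ≤ target (Real.log n) + (-(lam / 0.6931471803)) * Real.log n := by
    refine le_trans (le_min ?_ ?_) h3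
    · rw [mul_div_right_comm] at h1; linarith
    · rw [mul_div_right_comm] at h2; linarith
  have hl := Real.log_two_gt_d9
  have h5 : lam * Real.log n ≤ Real.log 2 * (lam / 0.6931471803 * Real.log n) := by
    have : lam * Real.log n = 0.6931471803 * (lam / 0.6931471803 * Real.log n) := by field_simp
    rw [this]
    have h0 : 0 ≤ Real.log n := by linarith
    gcongr
  have h6 := mul_le_mul_of_nonneg_left h4 (show 0 ≤ Real.log 2 by linarith)
  linarith

/-- The analogue of `le_of_ends` for small `T`, using only that `target T / T` is decreasing. -/
lemma le_of_ratio {n : ℕ} {A lam T₁ l : ℝ} (hlam : 0 ≤ lam) (hA : 0 ≤ A)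
    (hline : Real.log n.divisors.card ≤ A * Real.log 2 + lam * Real.log n)
    (hT : 1 ≤ T₁) (hlog : 1 < Real.log n) (hl : Real.log (Real.log n) ≤ l)
    (h : A / T₁ + lam / 0.6931471803 ≤ 1 / l + 1 / l ^ 2 + 4.7626 / l ^ 3) (hn1 : T₁ ≤ Real.log n) :
    Real.log n.divisors.card ≤ Real.log 2 * target (Real.log n) := by
  have hL : 0 < Real.log (Real.log n) := Real.log_pos hlog
  have h1 : 1 / l + 1 / l ^ 2 + 4.7626 / l ^ 3 ≤ 1 / Real.log (Real.log n) + 1 / Real.log (Real.log n) ^ 2 +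
      4.7626 / Real.log (Real.log n) ^ 3 := by gcongr
  have h2 : target (Real.log n) = Real.log n * (1 / Real.log (Real.log n) + 1 / Real.log (Real.log n) ^ 2 +
      4.7626 / Real.log (Real.log n) ^ 3) := by rw [target]; ring
  have h3 : Real.log n * (A / T₁ + lam / 0.6931471803) ≤ target (Real.log n) := by
    rw [h2]; exact mul_le_mul_of_nonneg_left (h.trans h1) (by linarith)
  have h4 : A ≤ Real.log n * (A / T₁) := by
    rw [mul_div_assoc', le_div_iff₀ (by linarith)]; nlinarith
  have hl := Real.log_two_gt_d9
  have h5 : lam * Real.log n ≤ Real.log 2 * (Real.log n * (lam / 0.6931471803)) := by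
    have : lam * Real.log n = 0.6931471803 * (Real.log n * (lam / 0.6931471803)) := by field_simp
    rw [this]
    gcongr
  have h6 := mul_le_mul_of_nonneg_left h3 (show 0 ≤ Real.log 2 by linarith)
  have h7 := mul_le_mul_of_nonneg_left h4 (show 0 ≤ Real.log 2 by linarith)
  linarith

/-! ### The certificates -/

lemma line_1_2 : lineOK 1 2 2 1792 500 5170 2000 = true := by decide +kernel

lemma line_10_37 : lineOK 10 37 4 7879 500 13814 2000 = true := by decide +kernel

lemma line_4_17 : lineOK 4 17 5 16350 500 22340 2000 = true := by decide +kernel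

lemma line_7_34 : lineOK 7 34 5 20516 500 25955 2000 = true := by decide +kernel

lemma line_1_6 : lineOK 1 6 6 49649 500 47324 2000 = true := by decide +kernel

lemma line_1_7 : lineOK 1 7 7 98651 500 77324 2000 = true := by decide +kernel

lemma line_2_15 : lineOK 2 15 8 143305 500 101858 2000 = true := by decide +kernel

lemma line_5_39 : lineOK 5 39 8 164642 500 113028 2000 = true := by decide +kernel

lemma line_1_8 : lineOK 1 8 8 192700 500 127279 2000 = true := by decide +kernel

lemma line_10_81 : lineOK 10 81 9 208799 500 135279 2000 = true := by decide +kernel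

lemma line_7_57 : lineOK 7 57 9 2169236 5000 1392782 20000 = true := by decide +kernel

lemma line_11_90 : lineOK 11 90 9 2209959 5000 1412782 20000 = true := by decide +kernel

lemma line_5_41 : lineOK 5 41 9 2250933 5000 1432782 20000 = true := by decide +kernel

lemma line_9_74 : lineOK 9 74 9 2250933 5000 1432782 20000 = true := by decide +kernel

lemma line_4_33 : lineOK 4 33 9 2258858 5000 1436635 20000 = true := by decide +kernel

lemma line_10_83 : lineOK 10 83 9 2383022 5000 1496635 20000 = true := by decide +kernel

lemma line_18_151 : lineOK 18 151 9 2508005 5000 1556635 20000 = true := by decide +kernel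

lemma line_17_145 : lineOK 17 145 9 278654 500 168834 2000 = true := by decide +kernel

lemma line_11_96 : lineOK 11 96 9 319397 500 187709 2000 = true := by decide +kernel

lemma line_1_9 : lineOK 1 9 9 391511 500 220235 2000 = true := by decide +kernel

lemma line_7_64 : lineOK 7 64 10 418756 500 232235 2000 = true := by decide +kernel

lemma line_2_19 : lineOK 2 19 10 544633 500 286298 2000 = true := by decide +kernel

lemma line_1_10 : lineOK 1 10 10 30573 20 15052 80 = true := by decide +kernel

lemma line_2_21 : lineOK 2 21 11 42806 20 19824 80 = true := by decide +kernel

lemma line_1_11 : lineOK 1 11 11 60749 20 26499 80 = true := by decide +kernel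

lemma line_1_12 : lineOK 1 12 12 6053 1 2370 4 = true := by decide +kernel

lemma line_1_13 : lineOK 1 13 13 11995 1 4263 4 = true := by decide +kernel

lemma line_1_14 : lineOK 1 14 14 23976 1 7800 4 = true := by decide +kernel

lemma line_1_15 : lineOK 1 15 15 47675 1 14314 4 = true := by decide +kernel

lemma line_1_16 : lineOK 1 16 16 95158 1 26529 4 = true := by decide +kernel

lemma line_2_33 : lineOK 2 33 17 134586 1 36226 4 = true := by decide +kernel

/-! ### The case `log n ≤ 163000` -/

lemma target_36 : (16.574:ℝ) ≤ target 36 := by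
  have h := (target_ge (T := 36) (a := 1551) (b := 300) (by norm_num) (by norm_num) (by decide +kernel)).2
  push_cast at h
  exact le_trans (by norm_num) h

lemma target_90 : (29.140:ℝ) ≤ target 90 := by
  have h := (target_ge (T := 90) (a := 1948) (b := 300) (by norm_num) (by norm_num) (by decide +kernel)).2
  push_cast at h
  exact le_trans (by norm_num) h

lemma target_160 : (43.5664520:ℝ) ≤ target 160 := by
  have h := (target_ge (T := 160) (a := 21966) (b := 3000) (by norm_num) (by norm_num) (by decide +kernel)).2
  push_cast at h
  exact le_trans (by norm_num) h

lemma target_215 : (54.0951383:ℝ) ≤ target 215 := by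
  have h := (target_ge (T := 215) (a := 23245) (b := 3000) (by norm_num) (by norm_num) (by decide +kernel)).2
  push_cast at h
  exact le_trans (by norm_num) h

lemma target_250 : (60.5492702:ℝ) ≤ target 250 := by
  have h := (target_ge (T := 250) (a := 23898) (b := 3000) (by norm_num) (by norm_num) (by decide +kernel)).2
  push_cast at h
  exact le_trans (by norm_num) h

lemma target_275 : (65.0680882:ℝ) ≤ target 275 := by
  have h := (target_ge (T := 275) (a := 24310) (b := 3000) (by norm_num) (by norm_num) (by decide +kernel)).2
  push_cast at h
  exact le_trans (by norm_num) h

lemma target_295 : (68.6329736:ℝ) ≤ target 295 := by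
  have h := (target_ge (T := 295) (a := 328183) (b := 40000) (by norm_num) (by norm_num) (by decide +kernel)).2
  push_cast at h
  exact le_trans (by norm_num) h

lemma target_305 : (70.4000304:ℝ) ≤ target 305 := by
  have h := (target_ge (T := 305) (a := 330107) (b := 40000) (by norm_num) (by norm_num) (by decide +kernel)).2
  push_cast at h
  exact le_trans (by norm_num) h

lemma target_308 : (70.9282512:ℝ) ≤ target 308 := by
  have h := (target_ge (T := 308) (a := 330672) (b := 40000) (by norm_num) (by norm_num) (by decide +kernel)).2
  push_cast at h
  exact le_trans (by norm_num) h

lemma target_312 : (71.6311849:ℝ) ≤ target 312 := by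
  have h := (target_ge (T := 312) (a := 331417) (b := 40000) (by norm_num) (by norm_num) (by decide +kernel)).2
  push_cast at h
  exact le_trans (by norm_num) h

lemma target_313 : (71.8069083:ℝ) ≤ target 313 := by
  have h := (target_ge (T := 313) (a := 331601) (b := 40000) (by norm_num) (by norm_num) (by decide +kernel)).2
  push_cast at h
  exact le_trans (by norm_num) h

lemma target_325 : (73.9062195:ℝ) ≤ target 325 := by
  have h := (target_ge (T := 325) (a := 333772) (b := 40000) (by norm_num) (by norm_num) (by decide +kernel)).2
  push_cast at h
  exact le_trans (by norm_num) h

lemma target_340 : (76.5125911:ℝ) ≤ target 340 := by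
  have h := (target_ge (T := 340) (a := 336376) (b := 40000) (by norm_num) (by norm_num) (by decide +kernel)).2
  push_cast at h
  exact le_trans (by norm_num) h

lemma target_368 : (81.3276723:ℝ) ≤ target 368 := by
  have h := (target_ge (T := 368) (a := 25571) (b := 3000) (by norm_num) (by norm_num) (by decide +kernel)).2
  push_cast at h
  exact le_trans (by norm_num) h

lemma target_410 : (88.4425643:ℝ) ≤ target 410 := by
  have h := (target_ge (T := 410) (a := 26039) (b := 3000) (by norm_num) (by norm_num) (by decide +kernel)).2
  push_cast at h
  exact le_trans (by norm_num) h

lemma target_500 : (103.3199254:ℝ) ≤ target 500 := by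
  have h := (target_ge (T := 500) (a := 26898) (b := 3000) (by norm_num) (by norm_num) (by decide +kernel)).2
  push_cast at h
  exact le_trans (by norm_num) h

lemma target_600 : (119.3708676:ℝ) ≤ target 600 := by
  have h := (target_ge (T := 600) (a := 27687) (b := 3000) (by norm_num) (by norm_num) (by decide +kernel)).2
  push_cast at h
  exact le_trans (by norm_num) h

lemma target_700 : (135.0188055:ℝ) ≤ target 700 := by
  have h := (target_ge (T := 700) (a := 28354) (b := 3000) (by norm_num) (by norm_num) (by decide +kernel)).2
  push_cast at h
  exact le_trans (by norm_num) h

lemma target_900 : (165.3692018:ℝ) ≤ target 900 := by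
  have h := (target_ge (T := 900) (a := 29442) (b := 3000) (by norm_num) (by norm_num) (by decide +kernel)).2
  push_cast at h
  exact le_trans (by norm_num) h

lemma target_1400 : (237.412:ℝ) ≤ target 1400 := by
  have h := (target_ge (T := 1400) (a := 3136) (b := 300) (by norm_num) (by norm_num) (by decide +kernel)).2
  push_cast at h
  exact le_trans (by norm_num) h

lemma target_1700 : (278.876:ℝ) ≤ target 1700 := by
  have h := (target_ge (T := 1700) (a := 3220) (b := 300) (by norm_num) (by norm_num) (by decide +kernel)).2
  push_cast at h
  exact le_trans (by norm_num) h

lemma target_3000 : (449.218:ℝ) ≤ target 3000 := by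
  have h := (target_ge (T := 3000) (a := 3466) (b := 300) (by norm_num) (by norm_num) (by decide +kernel)).2
  push_cast at h
  exact le_trans (by norm_num) h

lemma target_6000 : (812.173:ℝ) ≤ target 6000 := by
  have h := (target_ge (T := 6000) (a := 3766) (b := 300) (by norm_num) (by norm_num) (by decide +kernel)).2
  push_cast at h
  exact le_trans (by norm_num) h

lemma target_12000 : (1482.248:ℝ) ≤ target 12000 := by
  have h := (target_ge (T := 12000) (a := 4066) (b := 300) (by norm_num) (by norm_num) (by decide +kernel)).2
  push_cast at h
  exact le_trans (by norm_num) h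

lemma target_24000 : (2726.358:ℝ) ≤ target 24000 := by
  have h := (target_ge (T := 24000) (a := 4366) (b := 300) (by norm_num) (by norm_num) (by decide +kernel)).2
  push_cast at h
  exact le_trans (by norm_num) h

lemma target_50000 : (5236.131:ℝ) ≤ target 50000 := by
  have h := (target_ge (T := 50000) (a := 4683) (b := 300) (by norm_num) (by norm_num) (by decide +kernel)).2
  push_cast at h
  exact le_trans (by norm_num) h

lemma target_100000 : (9752.190:ℝ) ≤ target 100000 := by
  have h := (target_ge (T := 100000) (a := 4983) (b := 300) (by norm_num) (by norm_num) (by decide +kernel)).2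
  push_cast at h
  exact le_trans (by norm_num) h

lemma target_163000 : (15160.232:ℝ) ≤ target 163000 := by
  have h := (target_ge (T := 163000) (a := 5195) (b := 300) (by norm_num) (by norm_num) (by decide +kernel)).2
  push_cast at h
  exact le_trans (by norm_num) h

lemma log_3_le : Real.log 3 ≤ 1.09980 := by
  have h := (target_ge (T := 3) (a := 476) (b := 300) (by norm_num) (by norm_num) (by decide +kernel)).1
  push_cast at h
  exact h.trans (by norm_num)

lemma log_7_le : Real.log 7 ≤ 1.94775 := by
  have h := (target_ge (T := 7) (a := 843) (b := 300) (by norm_num) (by norm_num) (by decide +kernel)).1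
  push_cast at h
  exact h.trans (by norm_num)

lemma log_12_le : Real.log 12 ≤ 2.48609 := by
  have h := (target_ge (T := 12) (a := 1076) (b := 300) (by norm_num) (by norm_num) (by decide +kernel)).1
  push_cast at h
  exact h.trans (by norm_num)

lemma log_20_le : Real.log 20 ≤ 2.99671 := by
  have h := (target_ge (T := 20) (a := 1297) (b := 300) (by norm_num) (by norm_num) (by decide +kernel)).1
  push_cast at h
  exact h.trans (by norm_num)

lemma log_28_le : Real.log 28 ≤ 3.33404 := by
  have h := (target_ge (T := 28) (a := 1443) (b := 300) (by norm_num) (by norm_num) (by decide +kernel)).1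
  push_cast at h
  exact h.trans (by norm_num)

lemma log_36_le : Real.log 36 ≤ 3.58358 := by
  have h := (target_ge (T := 36) (a := 1551) (b := 300) (by norm_num) (by norm_num) (by decide +kernel)).1
  push_cast at h
  exact h.trans (by norm_num)

/-- The claim for `log n ≤ 163000`. -/
theorem bound_of_small {n : ℕ} (hn : n ≠ 0) (hlog : 1 < Real.log n) (hle : Real.log n ≤ 163000) :
    Real.log n.divisors.card ≤ Real.log 2 * target (Real.log n) := by
  rcases le_total (Real.log n) 3 with h3 | h3
  · have hl := line_of_lineOK line_1_2 (by norm_num) (by norm_num) (by norm_num) hn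
    refine le_of_ratio (T₁ := 1) ?_ ?_ hl ?_ hlog ((Real.log_le_log (by linarith) h3).trans log_3_le) ?_ hlog.le <;>
      norm_num
  rcases le_total (Real.log n) 7 with h7 | h7
  · have hl := line_of_lineOK line_1_2 (by norm_num) (by norm_num) (by norm_num) hn
    refine le_of_ratio (T₁ := 3) ?_ ?_ hl ?_ hlog ((Real.log_le_log (by linarith) h7).trans log_7_le) ?_ h3 <;>
      norm_num
  rcases le_total (Real.log n) 12 with h12 | h12
  · have hl := line_of_lineOK line_1_2 (by norm_num) (by norm_num) (by norm_num) hn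
    refine le_of_ratio (T₁ := 7) ?_ ?_ hl ?_ hlog ((Real.log_le_log (by linarith) h12).trans log_12_le) ?_ h7 <;>
      norm_num
  rcases le_total (Real.log n) 20 with h20 | h20
  · have hl := line_of_lineOK line_10_37 (by norm_num) (by norm_num) (by norm_num) hn
    refine le_of_ratio (T₁ := 12) ?_ ?_ hl ?_ hlog ((Real.log_le_log (by linarith) h20).trans log_20_le) ?_ h12 <;>
      norm_num
  rcases le_total (Real.log n) 28 with h28 | h28
  · have hl := line_of_lineOK line_4_17 (by norm_num) (by norm_num) (by norm_num) hn
    refine le_of_ratio (T₁ := 20) ?_ ?_ hl ?_ hlog ((Real.log_le_log (by linarith) h28).trans log_28_le) ?_ h20 <;>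
      norm_num
  rcases le_total (Real.log n) 36 with h36 | h36
  · have hl := line_of_lineOK line_7_34 (by norm_num) (by norm_num) (by norm_num) hn
    refine le_of_ratio (T₁ := 28) ?_ ?_ hl ?_ hlog ((Real.log_le_log (by linarith) h36).trans log_36_le) ?_ h28 <;>
      norm_num
  rcases le_total (Real.log n) 90 with h90 | h90
  · have hl := line_of_lineOK line_1_6 (by norm_num) (by norm_num) (by norm_num) hn
    refine le_of_ends ?_ hl ?_ (le_trans ?_ target_36) (le_trans ?_ target_90) h36 h90 <;> norm_num
  rcases le_total (Real.log n) 160 with h160 | h160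
  · have hl := line_of_lineOK line_1_7 (by norm_num) (by norm_num) (by norm_num) hn
    refine le_of_ends ?_ hl ?_ (le_trans ?_ target_90) (le_trans ?_ target_160) h90 h160 <;> norm_num
  rcases le_total (Real.log n) 215 with h215 | h215
  · have hl := line_of_lineOK line_2_15 (by norm_num) (by norm_num) (by norm_num) hn
    refine le_of_ends ?_ hl ?_ (le_trans ?_ target_160) (le_trans ?_ target_215) h160 h215 <;> norm_num
  rcases le_total (Real.log n) 250 with h250 | h250
  · have hl := line_of_lineOK line_5_39 (by norm_num) (by norm_num) (by norm_num) hn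
    refine le_of_ends ?_ hl ?_ (le_trans ?_ target_215) (le_trans ?_ target_250) h215 h250 <;> norm_num
  rcases le_total (Real.log n) 275 with h275 | h275
  · have hl := line_of_lineOK line_1_8 (by norm_num) (by norm_num) (by norm_num) hn
    refine le_of_ends ?_ hl ?_ (le_trans ?_ target_250) (le_trans ?_ target_275) h250 h275 <;> norm_num
  rcases le_total (Real.log n) 295 with h295 | h295
  · have hl := line_of_lineOK line_10_81 (by norm_num) (by norm_num) (by norm_num) hn
    refine le_of_ends ?_ hl ?_ (le_trans ?_ target_275) (le_trans ?_ target_295) h275 h295 <;> norm_num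
  rcases le_total (Real.log n) 305 with h305 | h305
  · have hl := line_of_lineOK line_7_57 (by norm_num) (by norm_num) (by norm_num) hn
    refine le_of_ends ?_ hl ?_ (le_trans ?_ target_295) (le_trans ?_ target_305) h295 h305 <;> norm_num
  rcases le_total (Real.log n) 308 with h308 | h308
  · have hl := line_of_lineOK line_11_90 (by norm_num) (by norm_num) (by norm_num) hn
    refine le_of_ends ?_ hl ?_ (le_trans ?_ target_305) (le_trans ?_ target_308) h305 h308 <;> norm_num
  rcases le_total (Real.log n) 312 with h312 | h312
  · have hl := line_of_lineOK line_5_41 (by norm_num) (by norm_num) (by norm_num) hn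
    refine le_of_ends ?_ hl ?_ (le_trans ?_ target_308) (le_trans ?_ target_312) h308 h312 <;> norm_num
  rcases le_total (Real.log n) 313 with h313 | h313
  · have hl := line_of_lineOK line_9_74 (by norm_num) (by norm_num) (by norm_num) hn
    refine le_of_ends ?_ hl ?_ (le_trans ?_ target_312) (le_trans ?_ target_313) h312 h313 <;> norm_num
  rcases le_total (Real.log n) 325 with h325 | h325
  · have hl := line_of_lineOK line_4_33 (by norm_num) (by norm_num) (by norm_num) hn
    refine le_of_ends ?_ hl ?_ (le_trans ?_ target_313) (le_trans ?_ target_325) h313 h325 <;> norm_num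
  rcases le_total (Real.log n) 340 with h340 | h340
  · have hl := line_of_lineOK line_10_83 (by norm_num) (by norm_num) (by norm_num) hn
    refine le_of_ends ?_ hl ?_ (le_trans ?_ target_325) (le_trans ?_ target_340) h325 h340 <;> norm_num
  rcases le_total (Real.log n) 368 with h368 | h368
  · have hl := line_of_lineOK line_18_151 (by norm_num) (by norm_num) (by norm_num) hn
    refine le_of_ends ?_ hl ?_ (le_trans ?_ target_340) (le_trans ?_ target_368) h340 h368 <;> norm_num
  rcases le_total (Real.log n) 410 with h410 | h410
  · have hl := line_of_lineOK line_17_145 (by norm_num) (by norm_num) (by norm_num) hn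
    refine le_of_ends ?_ hl ?_ (le_trans ?_ target_368) (le_trans ?_ target_410) h368 h410 <;> norm_num
  rcases le_total (Real.log n) 500 with h500 | h500
  · have hl := line_of_lineOK line_11_96 (by norm_num) (by norm_num) (by norm_num) hn
    refine le_of_ends ?_ hl ?_ (le_trans ?_ target_410) (le_trans ?_ target_500) h410 h500 <;> norm_num
  rcases le_total (Real.log n) 600 with h600 | h600
  · have hl := line_of_lineOK line_1_9 (by norm_num) (by norm_num) (by norm_num) hn
    refine le_of_ends ?_ hl ?_ (le_trans ?_ target_500) (le_trans ?_ target_600) h500 h600 <;> norm_num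
  rcases le_total (Real.log n) 700 with h700 | h700
  · have hl := line_of_lineOK line_7_64 (by norm_num) (by norm_num) (by norm_num) hn
    refine le_of_ends ?_ hl ?_ (le_trans ?_ target_600) (le_trans ?_ target_700) h600 h700 <;> norm_num
  rcases le_total (Real.log n) 900 with h900 | h900
  · have hl := line_of_lineOK line_2_19 (by norm_num) (by norm_num) (by norm_num) hn
    refine le_of_ends ?_ hl ?_ (le_trans ?_ target_700) (le_trans ?_ target_900) h700 h900 <;> norm_num
  rcases le_total (Real.log n) 1400 with h1400 | h1400
  · have hl := line_of_lineOK line_1_10 (by norm_num) (by norm_num) (by norm_num) hn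
    refine le_of_ends ?_ hl ?_ (le_trans ?_ target_900) (le_trans ?_ target_1400) h900 h1400 <;> norm_num
  rcases le_total (Real.log n) 1700 with h1700 | h1700
  · have hl := line_of_lineOK line_2_21 (by norm_num) (by norm_num) (by norm_num) hn
    refine le_of_ends ?_ hl ?_ (le_trans ?_ target_1400) (le_trans ?_ target_1700) h1400 h1700 <;> norm_num
  rcases le_total (Real.log n) 3000 with h3000 | h3000
  · have hl := line_of_lineOK line_1_11 (by norm_num) (by norm_num) (by norm_num) hn
    refine le_of_ends ?_ hl ?_ (le_trans ?_ target_1700) (le_trans ?_ target_3000) h1700 h3000 <;> norm_num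
  rcases le_total (Real.log n) 6000 with h6000 | h6000
  · have hl := line_of_lineOK line_1_12 (by norm_num) (by norm_num) (by norm_num) hn
    refine le_of_ends ?_ hl ?_ (le_trans ?_ target_3000) (le_trans ?_ target_6000) h3000 h6000 <;> norm_num
  rcases le_total (Real.log n) 12000 with h12000 | h12000
  · have hl := line_of_lineOK line_1_13 (by norm_num) (by norm_num) (by norm_num) hn
    refine le_of_ends ?_ hl ?_ (le_trans ?_ target_6000) (le_trans ?_ target_12000) h6000 h12000 <;> norm_num
  rcases le_total (Real.log n) 24000 with h24000 | h24000
  · have hl := line_of_lineOK line_1_14 (by norm_num) (by norm_num) (by norm_num) hn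
    refine le_of_ends ?_ hl ?_ (le_trans ?_ target_12000) (le_trans ?_ target_24000) h12000 h24000 <;> norm_num
  rcases le_total (Real.log n) 50000 with h50000 | h50000
  · have hl := line_of_lineOK line_1_15 (by norm_num) (by norm_num) (by norm_num) hn
    refine le_of_ends ?_ hl ?_ (le_trans ?_ target_24000) (le_trans ?_ target_50000) h24000 h50000 <;> norm_num
  rcases le_total (Real.log n) 100000 with h100000 | h100000
  · have hl := line_of_lineOK line_1_16 (by norm_num) (by norm_num) (by norm_num) hn
    refine le_of_ends ?_ hl ?_ (le_trans ?_ target_50000) (le_trans ?_ target_100000) h50000 h100000 <;> norm_num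
  have hl := line_of_lineOK line_2_33 (by norm_num) (by norm_num) (by norm_num) hn
  refine le_of_ends ?_ hl ?_ (le_trans ?_ target_100000) (le_trans ?_ target_163000) h100000 hle <;> norm_num

end DivBound

theorem log_divisor_count_le (n : ℕ) (hn : 3 ≤ n) :
    Real.log (n.divisors.card)
      ≤ (Real.log n / Real.log (Real.log n)) *
        (Real.log 2 + Real.log 2 / Real.log (Real.log n)
          + 4.7626 * Real.log 2 / (Real.log (Real.log n)) ^ 2) := by
  rcases le_total 12 (Real.log (Real.log n)) with h | h
  · exact DivBound.bound_of_large hn h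
  · have hlog : 1 < Real.log n := by
      rw [Real.lt_log_iff_exp_lt (by positivity)]
      have h3 : (3:ℝ) ≤ n := by exact_mod_cast hn
      linarith [Real.exp_one_lt_d9]
    have hle : Real.log n ≤ 163000 := by
      rw [Real.log_le_iff_le_exp (by linarith)] at h
      have := (DivBound.exp_nat_bounds 12).2
      norm_num at this
      linarith
    rw [DivBound.target_eq]
    exact DivBound.bound_of_small (by omega) hlog hle
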